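/- The supremum T₀ = sup{ ∫_B e^{4π u²} dx : u ∈ C_c^∞(B), H(u) ≤ 1 } is finite and is attained in the completion of C_c^∞(B) under the Hardy norm in the following sense: there exist a measurable function u₀ : B → ℝ and a sequence (u_k) in C_c^∞(B) with H(u_k) ≤ 1 for all k, lim_{k→∞} H(u_k) = 1, H(u_j − u_k) → 0 as j, k → ∞, and u_k → u₀ almost everywhere in B, such that ∫_B e^{4π u₀(x)²} dx = T₀. -/

import Mathlib

/-!
The proof symmetrizes, solves the resulting one-dimensional variational problem in the manner of
Carleson and Chang, and returns to the disc through radial test functions. Write `s = -log |x|²`.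
For a radial function with profile `w / √(4π)` in this variable, `H` becomes
`h w = ∫ w'² - ∫ V w²` on `(0, ∞)` with `V s = e^{-s} / (4 (1 - e^{-s})²)`, and the exponential
integral becomes `π J w` with `J w = ∫ e^{w² - s} ds`. Let `SS` be the supremum of `J` over smooth
profiles with `h w ≤ 1`; the theorem holds with `T₀ = π SS`.

*Symmetrization.* The Hardy potential is a multiple of the density of the hyperbolic area, so the
hyperbolic rearrangement preserves the potential term exactly (`equi_sq`), does not decrease the
exponential integral (`equi_exp`, a bathtub argument), and does not increase the Dirichlet
integral. The last point rests on the hyperbolic isoperimetric inequality, proved in functional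
form (`iso`) from the Cauchy–Pompeiu formula. Applied to layers of the function it bounds the
increments of the rearrangement (`layer`, `us_step`) and hence the energy of its Steklov averages
(`steklov_energy`), which are admissible in the one-dimensional problem up to approximation
(`approx`). The outcome is `symm_E2`: `∫_B e^{4πu²} ≤ π SS` for every test function with `H u ≤ 1`.

*The ground state.* `m s = √(1 - e^{-s}) F(1/2, 1/2; 1; e^{-s})` is a positive increasing solution of
`m'' = -V m` with limit `1` at infinity. Completing the square gives `h w = ∫ m² ((w/m)')²`. In the
time `sig s = ∫₀ˢ m⁻²`, for which `sig s - s` increases to a finite constant `aa`, this is the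
Dirichlet energy of `w / m`.

*The one-dimensional problem.* `SS` is finite (`SS_lt_top`), and profiles converging to zero have
`J`-limit at most `1 + e^{1 + aa}` (`concentration`); both follow from the tail estimate `tail_le`,
based on the exponential inequality `carleson_chang`. An explicit bubble shows
`1 + e^{1 + aa} < SS` (`level_lt`). A maximizing sequence therefore has a pointwise limit `f ≠ 0`,
along it `J` passes to the limit (`nonconcentration`), and `J f = SS` (`exists_max`).

*Strong convergence.* If profiles converging to `f` had energy bounded away from `1` from above,
rescaling them would beat the supremum (`no_gap`). Hence `h (w k) → 1`, and the same applied to the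
midpoints `(w j + w k) / 2` together with the parallelogram law gives `h (w j - w k) → 0`.
-/

open MeasureTheory Real Filter

noncomputable section

/-- `ℝ²` as a Euclidean space. -/
abbrev E2 : Type := EuclideanSpace ℝ (Fin 2)

/-- The open unit disc in `ℝ²`. -/
def B2 : Set E2 := Metric.ball 0 1

/-- `u ∈ C_c^∞(B)`: a smooth function with compact support contained in the open unit disc. -/
def IsTest (u : E2 → ℝ) : Prop :=
  ContDiff ℝ (⊤ : ℕ∞) u ∧ HasCompactSupport u ∧ tsupport u ⊆ B2

/-- The Hardy functional `H(u) = ∫_B |∇u|² − ∫_B u²/(1−|x|²)²`. -/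
def H (u : E2 → ℝ) : ℝ :=
  (∫ x in B2, ‖gradient u x‖ ^ 2) - ∫ x in B2, (u x) ^ 2 / (1 - ‖x‖ ^ 2) ^ 2

namespace HMT
open Set Topology

/-! ### The hypergeometric series `F(1/2, 1/2; 1; x)` -/

lemma summable_series {c : ℕ → ℝ} (hc : ∀ k, |c k| ≤ ((k : ℝ) + 1) ^ 3) {x : ℝ} (hx : |x| < 1) :
    Summable fun k => c k * x ^ k := by
  have hx' : ‖|x|‖ < 1 := by simpa using hx
  have h : Summable fun k : ℕ => (8 * ((k : ℝ) ^ 3 * |x| ^ k) + 8 * |x| ^ k) :=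
    ((summable_pow_mul_geometric_of_norm_lt_one 3 hx').mul_left 8).add
      ((summable_geometric_of_norm_lt_one hx').mul_left 8)
  refine Summable.of_norm_bounded h fun k => ?_
  rw [norm_mul, norm_pow, Real.norm_eq_abs, Real.norm_eq_abs]
  have h1 : ((k : ℝ) + 1) ^ 3 ≤ 8 * (k : ℝ) ^ 3 + 8 := by
    have : (0 : ℝ) ≤ k := k.cast_nonneg
    nlinarith [sq_nonneg ((k : ℝ) - 1), mul_nonneg this (sq_nonneg ((k : ℝ) - 1))]
  have h2 : 0 ≤ |x| ^ k := by positivity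
  nlinarith [mul_le_mul_of_nonneg_right ((hc k).trans h1) h2]

lemma hasDerivAt_series {c : ℕ → ℝ} (hc : ∀ k, |c k| ≤ ((k : ℝ) + 1) ^ 2) {x : ℝ} (hx : |x| < 1) :
    HasDerivAt (fun x => ∑' k, c k * x ^ k) (∑' k : ℕ, ((k : ℝ) + 1) * c (k + 1) * x ^ k) x := by
  obtain ⟨r, hr1, hr2⟩ := exists_between hx
  have hr0 : 0 < r := (abs_nonneg x).trans_lt hr1
  have hr' : |r| < 1 := by rwa [abs_of_pos hr0]
  have hu : Summable fun k : ℕ => (k : ℝ) * |c k| * r ^ (k - 1) := by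
    rw [← summable_nat_add_iff 1]
    have := @summable_series (fun k => ((k : ℝ) + 1) * |c (k + 1)| / 8) (fun k => ?_) r hr'
    · refine (this.mul_left 8).congr fun k => ?_
      push_cast
      ring
    · have h1 := hc (k + 1)
      push_cast at h1
      have : (0 : ℝ) ≤ k := k.cast_nonneg
      rw [abs_of_nonneg (by positivity), div_le_iff₀ (by norm_num)]
      calc ((k : ℝ) + 1) * |c (k + 1)| ≤ ((k : ℝ) + 1) * ((k : ℝ) + 1 + 1) ^ 2 := by gcongr
        _ ≤ _ := by nlinarith [mul_nonneg this this, mul_nonneg this (mul_nonneg this this)]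
  have key := hasDerivAt_tsum_of_isPreconnected (𝕜 := ℝ) (F := ℝ) hu
    (t := Metric.ball (0 : ℝ) r) Metric.isOpen_ball (convex_ball _ _).isPreconnected
    (g := fun k x => c k * x ^ k) (g' := fun k x => c k * ((k : ℝ) * x ^ (k - 1)))
    (fun k y _ => (hasDerivAt_pow k y).const_mul (c k)) (fun k y hy => ?_)
    (Metric.mem_ball_self hr0) (y := x)
    (summable_series (fun k => (hc k).trans ?_) (by simp)) (by simpa using hr1)
  · have hs : Summable fun k : ℕ => c k * ((k : ℝ) * x ^ (k - 1)) := by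
      refine Summable.of_norm_bounded hu fun k => ?_
      rw [norm_mul, norm_mul, norm_pow, Real.norm_eq_abs, Real.norm_eq_abs, Real.norm_eq_abs,
        abs_of_nonneg (Nat.cast_nonneg (α := ℝ) k), ← mul_assoc, mul_comm (|c k|)]
      gcongr
    have key' : HasDerivAt (fun x => ∑' k, c k * x ^ k) (∑' n : ℕ, c n * (↑n * x ^ (n - 1))) x := key
    rw [hs.tsum_eq_zero_add] at key'
    convert key' using 1
    simp only [CharP.cast_eq_zero, zero_mul, mul_zero, zero_add, Nat.add_sub_cancel]
    refine tsum_congr fun k => ?_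
    push_cast
    ring
  · rw [norm_mul, norm_mul, norm_pow, Real.norm_eq_abs, Real.norm_eq_abs, Real.norm_eq_abs,
        abs_of_nonneg (Nat.cast_nonneg (α := ℝ) k), ← mul_assoc, mul_comm (|c k|)]
    have : |y| ≤ r := by simpa using (Metric.mem_ball.1 hy).le
    gcongr
  · have : (0 : ℝ) ≤ k := k.cast_nonneg
    nlinarith [pow_nonneg this 2, pow_nonneg this 3]

/-- Taylor coefficients of the hypergeometric function `F(1/2, 1/2; 1; x)`. -/
def aC : ℕ → ℝ
  | 0 => 1
  | k + 1 => (((k : ℝ) + 1 / 2) / ((k : ℝ) + 1)) ^ 2 * aC k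

lemma aC_pos (k : ℕ) : 0 < aC k := by
  induction k with
  | zero => simp [aC]
  | succ k ih => rw [aC]; positivity

lemma aC_rec (k : ℕ) : ((k : ℝ) + 1) ^ 2 * aC (k + 1) = ((k : ℝ) + 1 / 2) ^ 2 * aC k := by
  rw [aC]; field_simp

lemma aC_le_one (k : ℕ) : aC k ≤ 1 := by
  induction k with
  | zero => simp [aC]
  | succ k ih =>
    have h := aC_rec k
    have h0 := aC_pos k
    have : (0 : ℝ) ≤ k := k.cast_nonneg
    have h2 : ((k : ℝ) + 1) ^ 2 * aC (k + 1) ≤ ((k : ℝ) + 1) ^ 2 * 1 := by rw [h]; nlinarith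
    exact le_of_mul_le_mul_left h2 (by positivity)

lemma aC_lower (k : ℕ) : 1 / 4 ≤ ((k : ℝ) + 1) * aC (k + 1) := by
  induction k with
  | zero => norm_num [aC]
  | succ k ih =>
    have h := aC_rec (k + 1)
    have h0 := aC_pos (k + 1)
    have : (0 : ℝ) ≤ k := k.cast_nonneg
    push_cast at h ⊢
    have h2 : ((k : ℝ) + 2) * (((k : ℝ) + 1) * aC (k + 1)) ≤
      ((k : ℝ) + 2) * ((k + 1 + 1) * aC (k + 1 + 1)) := by nlinarith
    exact ih.trans (le_of_mul_le_mul_left h2 (by positivity))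

/-- `F(1/2, 1/2; 1; x)`. -/
def F0 (x : ℝ) : ℝ := ∑' k, aC k * x ^ k
/-- The first derivative of `F0`. -/
def F1 (x : ℝ) : ℝ := ∑' k : ℕ, (((k : ℝ) + 1) * aC (k + 1)) * x ^ k
/-- The second derivative of `F0`. -/
def F2 (x : ℝ) : ℝ :=
  ∑' k : ℕ, ((k : ℝ) + 1) * (((↑(k + 1) : ℝ) + 1) * aC (k + 1 + 1)) * x ^ k

lemma aC_bd0 (k : ℕ) : |aC k| ≤ ((k : ℝ) + 1) ^ 2 := by
  have : (0 : ℝ) ≤ k := k.cast_nonneg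
  rw [abs_of_pos (aC_pos k)]; nlinarith [aC_le_one k]

lemma aC_bd1 (k : ℕ) : |((k : ℝ) + 1) * aC (k + 1)| ≤ ((k : ℝ) + 1) ^ 2 := by
  have : (0 : ℝ) ≤ k := k.cast_nonneg
  have := aC_pos (k + 1)
  rw [abs_of_pos (by positivity)]; nlinarith [aC_le_one (k + 1)]

lemma aC_bd2 (k : ℕ) : |((k : ℝ) + 1) * (((↑(k + 1) : ℝ) + 1) * aC (k + 1 + 1))| ≤ 8 * ((k : ℝ) + 1) ^ 3 := by
  have : (0 : ℝ) ≤ k := k.cast_nonneg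
  have := aC_pos (k + 1 + 1)
  rw [abs_of_pos (by positivity)]; push_cast
  have h := aC_le_one (k + 1 + 1)
  calc ((k : ℝ) + 1) * (((k : ℝ) + 1 + 1) * aC (k + 1 + 1)) ≤ ((k : ℝ) + 1) * (((k : ℝ) + 1 + 1) * 1) := by gcongr
    _ ≤ _ := by nlinarith [pow_nonneg ‹(0:ℝ) ≤ k› 2, pow_nonneg ‹(0:ℝ) ≤ k› 3]

lemma hasDerivAt_F0 {x : ℝ} (hx : |x| < 1) : HasDerivAt F0 (F1 x) x :=
  hasDerivAt_series aC_bd0 hx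

lemma hasDerivAt_F1 {x : ℝ} (hx : |x| < 1) : HasDerivAt F1 (F2 x) x :=
  hasDerivAt_series aC_bd1 hx

lemma bd3 {t : ℝ} {k : ℕ} (h : |t| ≤ ((k : ℝ) + 1) ^ 2) : |t| ≤ ((k : ℝ) + 1) ^ 3 := by
  have : (0 : ℝ) ≤ k := k.cast_nonneg
  refine h.trans ?_
  nlinarith [pow_nonneg this 2, pow_nonneg this 3]

lemma hasSum_F0 {x : ℝ} (hx : |x| < 1) : HasSum (fun k => aC k * x ^ k) (F0 x) :=
  (summable_series (fun k => bd3 (aC_bd0 k)) hx).hasSum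

lemma hasSum_F1 {x : ℝ} (hx : |x| < 1) :
    HasSum (fun k : ℕ => (((k : ℝ) + 1) * aC (k + 1)) * x ^ k) (F1 x) :=
  (summable_series (fun k => bd3 (aC_bd1 k)) hx).hasSum

lemma hasSum_F2 {x : ℝ} (hx : |x| < 1) :
    HasSum (fun k : ℕ => ((k : ℝ) + 1) * (((↑(k + 1) : ℝ) + 1) * aC (k + 1 + 1)) * x ^ k) (F2 x) := by
  have := summable_series (c := fun k : ℕ => ((k : ℝ) + 1) * (((↑(k + 1) : ℝ) + 1) * aC (k + 1 + 1)) / 8)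
    (fun k => by
      rw [abs_div, abs_of_pos (by norm_num : (0 : ℝ) < 8), div_le_iff₀ (by norm_num)]
      linarith [aC_bd2 k]) hx
  refine Summable.hasSum ((this.mul_left 8).congr fun k => by ring)

/-- `∑ k c_k x^k = x ∑ (k+1) c_{k+1} x^k`. -/
lemma hasSum_xF1 {x : ℝ} (hx : |x| < 1) : HasSum (fun k : ℕ => (k : ℝ) * aC k * x ^ k) (x * F1 x) := by
  rw [← hasSum_nat_add_iff' 1]
  simp only [Finset.range_one, Finset.sum_singleton, CharP.cast_eq_zero, zero_mul, sub_zero]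
  refine ((hasSum_F1 hx).mul_left x).congr_fun fun k => ?_
  push_cast; ring

lemma hasSum_xF2 {x : ℝ} (hx : |x| < 1) :
    HasSum (fun k : ℕ => (k : ℝ) * (((k : ℝ) + 1) * aC (k + 1)) * x ^ k) (x * F2 x) := by
  rw [← hasSum_nat_add_iff' 1]
  simp only [Finset.range_one, Finset.sum_singleton, CharP.cast_eq_zero, zero_mul, sub_zero]
  refine ((hasSum_F2 hx).mul_left x).congr_fun fun k => ?_
  push_cast; ring

lemma hasSum_xxF2 {x : ℝ} (hx : |x| < 1) :
    HasSum (fun k : ℕ => (k : ℝ) * ((k : ℝ) - 1) * aC k * x ^ k) (x * (x * F2 x)) := by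
  rw [← hasSum_nat_add_iff' 1]
  simp only [Finset.range_one, Finset.sum_singleton, CharP.cast_eq_zero, zero_mul, sub_zero]
  refine ((hasSum_xF2 hx).mul_left x).congr_fun fun k => ?_
  push_cast; ring

/-- The hypergeometric equation. -/
lemma F_ode {x : ℝ} (hx : |x| < 1) :
    x * (1 - x) * F2 x + (1 - 2 * x) * F1 x - F0 x / 4 = 0 := by
  have h := ((((hasSum_xF2 hx).sub (hasSum_xxF2 hx)).add (hasSum_F1 hx)).sub
    ((hasSum_xF1 hx).mul_left 2)).sub ((hasSum_F0 hx).mul_left (1 / 4))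
  have h0 : HasSum (fun _ : ℕ => (0 : ℝ)) _ := h.congr_fun fun k => by
    have := aC_rec k
    linear_combination (-x ^ k) * this
  have := hasSum_zero.unique h0
  linarith

lemma F0_lower {x : ℝ} (h0 : 0 ≤ x) (hx : x < 1) : 1 - log (1 - x) / 4 ≤ F0 x := by
  have hx' : |x| < 1 := by rwa [abs_of_nonneg h0]
  have h1 := (hasSum_pow_div_log_of_abs_lt_one hx').mul_left (1 / 4)
  have h2 := (hasSum_nat_add_iff' 1).2 (hasSum_F0 hx')
  have := hasSum_le (fun k => ?_) h1 h2
  · simp [aC] at this; linarith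
  · have := aC_lower k
    have hk : 0 < (k : ℝ) + 1 := by positivity
    have h3 : 0 ≤ x ^ (k + 1) := by positivity
    rw [mul_div_assoc', div_le_iff₀ hk]
    nlinarith [mul_le_mul_of_nonneg_right this h3]

lemma F0_ge_one {x : ℝ} (h0 : 0 ≤ x) (hx : x < 1) : 1 ≤ F0 x := by
  have := F0_lower h0 hx
  have := Real.log_nonpos (by linarith) (by linarith : 1 - x ≤ 1)
  linarith

lemma F1_le {x : ℝ} (h0 : 0 ≤ x) (hx : x < 1) : 2 * (1 - x) * F1 x ≤ F0 x := by
  have hx' : |x| < 1 := by rwa [abs_of_nonneg h0]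
  have := hasSum_le (fun k => ?_) (((hasSum_F1 hx').mul_left 2).sub ((hasSum_xF1 hx').mul_left 2))
    (hasSum_F0 hx')
  · linarith
  · have h3 : 0 ≤ x ^ k := by positivity
    have h4 := aC_rec k
    have h5 := aC_pos k
    have hk : (0 : ℝ) ≤ k := k.cast_nonneg
    have : 2 * (((k : ℝ) + 1) * aC (k + 1)) ≤ (2 * k + 1) * aC k := by
      have h6 : ((k : ℝ) + 1) * (2 * (((k : ℝ) + 1) * aC (k + 1))) ≤
        ((k : ℝ) + 1) * ((2 * k + 1) * aC k) := by nlinarith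
      exact le_of_mul_le_mul_left h6 (by positivity)
    nlinarith [mul_le_mul_of_nonneg_right this h3]

/-! ### The ground state of the radial Hardy functional -/

/-- The Hardy potential `|x|²/(4(1-|x|²)²)` in the variable `s = -log |x|²`. -/
def V (s : ℝ) : ℝ := exp (-s) / (4 * (1 - exp (-s)) ^ 2)

/-- The ground state of the radial Hardy functional: a positive solution of `m'' = -V m` with
`m(0) = 0` and `m(∞) = 1`. -/
def m (s : ℝ) : ℝ := √(1 - exp (-s)) * F0 (exp (-s))

/-- The derivative of the ground state. -/
def m1 (s : ℝ) : ℝ :=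
  exp (-s) * (F0 (exp (-s)) / (2 * √(1 - exp (-s))) - √(1 - exp (-s)) * F1 (exp (-s)))

lemma exp_neg_lt_one {s : ℝ} (hs : 0 < s) : exp (-s) < 1 := by
  rw [Real.exp_lt_one_iff]; linarith

lemma V_pos {s : ℝ} (hs : 0 < s) : 0 < V s := by
  have := exp_neg_lt_one hs
  unfold V
  have : 0 < 1 - exp (-s) := by linarith
  positivity

lemma abs_exp_neg {s : ℝ} (hs : 0 < s) : |exp (-s)| < 1 := by
  rw [abs_of_pos (exp_pos _)]; exact exp_neg_lt_one hs

lemma hasDerivAt_exp_neg (s : ℝ) : HasDerivAt (fun s => exp (-s)) (-exp (-s)) s := by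
  simpa using (hasDerivAt_neg s).exp

lemma hasDerivAt_sqrt_y {s : ℝ} (hs : 0 < s) :
    HasDerivAt (fun s => √(1 - exp (-s))) (exp (-s) / (2 * √(1 - exp (-s)))) s := by
  have := exp_neg_lt_one hs
  have h := ((hasDerivAt_exp_neg s).const_sub 1).sqrt (by linarith)
  simpa using h

lemma hasDerivAt_m {s : ℝ} (hs : 0 < s) : HasDerivAt m (m1 s) s := by
  have h := (hasDerivAt_sqrt_y hs).mul
    ((hasDerivAt_F0 (abs_exp_neg hs)).comp s (hasDerivAt_exp_neg s))
  refine h.congr_deriv ?_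
  simp only [m1, Function.comp]
  ring

/-- The ground state equation `m'' = -V m`. -/
lemma hasDerivAt_m1 {s : ℝ} (hs : 0 < s) : HasDerivAt m1 (-V s * m s) s := by
  have hy : 0 < 1 - exp (-s) := by have := exp_neg_lt_one hs; linarith
  have hr : 0 < √(1 - exp (-s)) := Real.sqrt_pos.2 hy
  have e0 := (hasDerivAt_F0 (abs_exp_neg hs)).comp s (hasDerivAt_exp_neg s)
  have e1 := (hasDerivAt_F1 (abs_exp_neg hs)).comp s (hasDerivAt_exp_neg s)
  have er := hasDerivAt_sqrt_y hs
  have h := (hasDerivAt_exp_neg s).mul ((e0.div (er.const_mul 2) (by positivity)).sub (er.mul e1))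
  refine h.congr_deriv ?_
  simp only [Function.comp, V, m, Pi.mul_apply, Pi.sub_apply, Pi.div_apply]
  have hode := F_ode (abs_exp_neg hs)
  have hrr : √(1 - exp (-s)) ^ 2 = 1 - exp (-s) := Real.sq_sqrt hy.le
  generalize √(1 - exp (-s)) = r at *
  have hx : exp (-s) = 1 - r ^ 2 := by linarith
  generalize exp (-s) = x at *
  subst hx
  generalize F0 (1 - r ^ 2) = f0 at *
  generalize F1 (1 - r ^ 2) = f1 at *
  generalize F2 (1 - r ^ 2) = f2 at *
  have : (1 : ℝ) - (1 - r ^ 2) = r ^ 2 := by ring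
  simp only [this] at *
  field_simp
  linear_combination (16*(1-r^2)*r^2) * hode

lemma m_lower {s : ℝ} (hs : 0 < s) : √(1 - exp (-s)) ≤ m s := by
  have := F0_ge_one (exp_pos _).le (exp_neg_lt_one hs)
  unfold m
  nlinarith [Real.sqrt_nonneg (1 - exp (-s))]

lemma m_pos {s : ℝ} (hs : 0 < s) : 0 < m s :=
  (Real.sqrt_pos.2 (by have := exp_neg_lt_one hs; linarith)).trans_le (m_lower hs)

lemma m_sq_lower {s : ℝ} (hs : 0 < s) : 1 - exp (-s) ≤ m s ^ 2 := by
  have h := m_lower hs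
  have h2 := Real.sq_sqrt (by have := exp_neg_lt_one hs; linarith : 0 ≤ 1 - exp (-s))
  have := Real.sqrt_nonneg (1 - exp (-s))
  nlinarith

lemma m1_nonneg {s : ℝ} (hs : 0 < s) : 0 ≤ m1 s := by
  have hx := exp_neg_lt_one hs
  have hy : 0 < 1 - exp (-s) := by linarith
  have hr : 0 < √(1 - exp (-s)) := Real.sqrt_pos.2 hy
  have h2 := Real.sq_sqrt hy.le
  have h3 := F1_le (exp_pos (-s)).le hx
  unfold m1
  apply mul_nonneg (exp_pos _).le
  rw [sub_nonneg, le_div_iff₀ (by positivity)]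
  calc √(1 - exp (-s)) * F1 (exp (-s)) * (2 * √(1 - exp (-s)))
      = 2 * √(1 - exp (-s)) ^ 2 * F1 (exp (-s)) := by ring
    _ ≤ _ := by rw [h2]; exact h3

lemma m1_le {s : ℝ} (hs : 0 < s) : m1 s ≤ exp (-s) / (2 * (1 - exp (-s))) * m s := by
  have hx := exp_neg_lt_one hs
  have hy : 0 < 1 - exp (-s) := by linarith
  have hr : 0 < √(1 - exp (-s)) := Real.sqrt_pos.2 hy
  have h2 := Real.sq_sqrt hy.le
  have h1 : 0 ≤ F1 (exp (-s)) := by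
    refine tsum_nonneg fun k => ?_
    have := aC_pos (k + 1)
    positivity
  have e : exp (-s) / (2 * (1 - exp (-s))) * m s = exp (-s) * (F0 (exp (-s)) / (2 * √(1 - exp (-s)))) := by
    unfold m
    rw [← h2]
    have h3 : √(√(1 - exp (-s)) ^ 2) = √(1 - exp (-s)) := Real.sqrt_sq hr.le
    field_simp
    try rw [h3]
  rw [e]
  unfold m1
  have := exp_pos (-s)
  gcongr
  have := mul_nonneg hr.le h1
  linarith

lemma m_mono : MonotoneOn m (Ioi 0) := by
  refine monotoneOn_of_deriv_nonneg (convex_Ioi 0)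
    (fun s hs => (hasDerivAt_m hs).continuousAt.continuousWithinAt) ?_ ?_
  · rw [interior_Ioi]
    exact fun s hs => (hasDerivAt_m hs).differentiableAt.differentiableWithinAt
  · rw [interior_Ioi]
    intro s hs
    rw [(hasDerivAt_m hs).deriv]; exact m1_nonneg hs

lemma m_tendsto : Tendsto m atTop (𝓝 1) := by
  have h0 : Tendsto (fun s : ℝ => exp (-s)) atTop (𝓝 0) :=
    Real.tendsto_exp_neg_atTop_nhds_zero
  have h1 : Tendsto F0 (𝓝 0) (𝓝 1) := by
    have := (hasDerivAt_F0 (x := 0) (by simp)).continuousAt.tendsto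
    have e : F0 0 = 1 := by
      unfold F0
      rw [tsum_eq_single 0]
      · simp [aC]
      · intro k hk; simp [hk]
    rwa [e] at this
  have h2 := ((h0.const_sub 1).sqrt).mul (h1.comp h0)
  simp only [sub_zero, Real.sqrt_one, mul_one] at h2
  exact h2

lemma m_le_one {s : ℝ} (hs : 0 < s) : m s ≤ 1 := by
  refine ge_of_tendsto m_tendsto ?_
  filter_upwards [eventually_ge_atTop s] with t ht
  exact m_mono hs (hs.trans_le ht : 0 < t) ht

lemma m_continuousOn : ContinuousOn m (Ioi 0) :=
  fun _ hs => (hasDerivAt_m hs).continuousAt.continuousWithinAt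

lemma m_inv_continuousOn : ContinuousOn (fun s => 1 / m s ^ 2) (Ioi 0) :=
  continuousOn_const.div (m_continuousOn.pow 2) fun s hs => by
    have := m_pos (show 0 < s from hs); positivity

/-- By `F0_lower`, `m² ≥ (1 - e^{-s}) (1 - log (1 - e^{-s}) / 4)²`; the logarithm makes `m⁻²` integrable
at zero, where it is dominated by a multiple of the derivative of `1 / (1 - log (1 - e^{-s}) / 4)`. -/
lemma m_inv_integrableOn (b : ℝ) : IntegrableOn (fun s => 1 / m s ^ 2) (Ioc 0 b) := by
  rcases le_or_gt b 0 with hb | hb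
  · rw [Ioc_eq_empty (by linarith)]; exact integrableOn_empty
  let G : ℝ → ℝ := fun s => if s ≤ 0 then 0 else 1 / (1 - log (1 - exp (-s)) / 4)
  let G' : ℝ → ℝ := fun s => (exp (-s) / (1 - exp (-s)) / 4) / (1 - log (1 - exp (-s)) / 4) ^ 2
  have hlog : ∀ s : ℝ, 0 < s → log (1 - exp (-s)) ≤ 0 := fun s hs => by
    have := exp_neg_lt_one hs
    exact Real.log_nonpos (by linarith) (by linarith [exp_pos (-s)])
  have hd : ∀ s : ℝ, 0 < s → HasDerivAt G (G' s) s := by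
    intro s hs
    have hx := exp_neg_lt_one hs
    have hl := hlog s hs
    have h1 := ((((hasDerivAt_exp_neg s).const_sub 1).log (by linarith)).div_const 4).const_sub 1
    have h2 := h1.inv (by linarith)
    have h3 : HasDerivAt G _ s := h2.congr_of_eventuallyEq (by
      filter_upwards [Ioi_mem_nhds hs] with t ht
      simp only [G, if_neg (not_le.2 (show 0 < t from ht)), one_div, Pi.inv_apply])
    refine h3.congr_deriv ?_
    simp only [G']
    congr 1
    ring
  have hc : ContinuousOn G (Icc 0 b) := by
    intro s hs
    rcases hs.1.eq_or_lt with h | h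
    · subst h
      have : Tendsto (fun s => 1 / (1 - log (1 - exp (-s)) / 4)) (𝓝[>] 0) (𝓝 0) := by
        have h1 : Tendsto (fun s : ℝ => 1 - exp (-s)) (𝓝[>] 0) (𝓝[>] 0) := by
          refine tendsto_nhdsWithin_iff.2 ⟨?_, ?_⟩
          · have : Continuous fun s : ℝ => 1 - exp (-s) := by fun_prop
            have h := this.tendsto 0
            simp at h
            exact h.mono_left nhdsWithin_le_nhds
          · filter_upwards [self_mem_nhdsWithin] with s hs
            have := exp_neg_lt_one (show 0 < s from hs)
            exact show 0 < 1 - exp (-s) by linarith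
        have h2 : Tendsto (fun s : ℝ => log (1 - exp (-s))) (𝓝[>] 0) atBot :=
          Real.tendsto_log_nhdsGT_zero.comp h1
        have h3 : Tendsto (fun s : ℝ => 1 - log (1 - exp (-s)) / 4) (𝓝[>] 0) atTop := by
          have : Tendsto (fun u : ℝ => 1 - u / 4) atBot atTop := by
            have h4 : Tendsto (fun u : ℝ => -u / 4) atBot atTop :=
              Tendsto.atTop_div_const (show (0:ℝ) < 4 by norm_num) tendsto_neg_atBot_atTop
            have h5 := tendsto_atTop_add_const_left atBot (1:ℝ) h4
            refine h5.congr fun u => by ring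
          exact this.comp h2
        simp only [one_div]
        exact h3.inv_tendsto_atTop
      have h0 : G 0 = 0 := by simp [G]
      have h4 : ContinuousWithinAt G (Ioi 0) 0 := by
        unfold ContinuousWithinAt
        rw [h0]
        refine this.congr' ?_
        filter_upwards [self_mem_nhdsWithin] with s hs
        simp only [G, if_neg (not_le.2 (show 0 < s from hs))]
      have h5 : ContinuousWithinAt G (Ici 0) 0 := continuousWithinAt_Ioi_iff_Ici.1 h4
      exact h5.mono Icc_subset_Ici_self
    · exact (hd s h).continuousAt.continuousWithinAt
  have hi := intervalIntegral.integrableOn_deriv_of_nonneg hc (fun s hs => hd s hs.1) (fun s hs => by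
    have hx := exp_neg_lt_one hs.1
    have hl := hlog s hs.1
    have : 0 < 1 - exp (-s) := by linarith
    simp only [G']
    positivity)
  refine (hi.const_mul (4 * exp b)).mono' ?_ ?_
  · exact (m_inv_continuousOn.mono fun s hs => hs.1).aestronglyMeasurable measurableSet_Ioc
  · filter_upwards [ae_restrict_mem measurableSet_Ioc] with s hs
    have hs0 := hs.1
    have hx := exp_neg_lt_one hs.1
    have hl := hlog s hs.1
    have hy : 0 < 1 - exp (-s) := by linarith
    have hm := m_pos hs.1
    have hF := F0_lower (exp_pos (-s)).le hx
    have hL : 0 < 1 - log (1 - exp (-s)) / 4 := by linarith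
    rw [Real.norm_of_nonneg (by positivity)]
    have h1 : (1 - exp (-s)) * (1 - log (1 - exp (-s)) / 4) ^ 2 ≤ m s ^ 2 := by
      unfold m
      rw [mul_pow, Real.sq_sqrt hy.le]
      gcongr
    have h2 : 1 / m s ^ 2 ≤ 1 / ((1 - exp (-s)) * (1 - log (1 - exp (-s)) / 4) ^ 2) :=
      one_div_le_one_div_of_le (by positivity) h1
    refine h2.trans ?_
    have h3 : 1 ≤ exp b * exp (-s) := by
      rw [← Real.exp_add]; exact Real.one_le_exp (by linarith [hs.2])
    have e : 4 * exp b * G' s = (exp b * exp (-s)) * (1 / ((1 - exp (-s)) * (1 - log (1 - exp (-s)) / 4) ^ 2)) := by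
      simp only [G']
      field_simp
    rw [e]
    exact le_mul_of_one_le_left (by positivity) h3

/-- The travel time `∫₀ˢ m⁻²` of the ground state. -/
def sig (s : ℝ) : ℝ := ∫ t in (0)..s, 1 / m t ^ 2

lemma m_inv_intervalIntegrable (a b : ℝ) (ha : 0 ≤ a) (hb : 0 ≤ b) :
    IntervalIntegrable (fun s => 1 / m s ^ 2) volume a b := by
  rw [intervalIntegrable_iff]
  refine (m_inv_integrableOn (max a b)).mono_set ?_
  rw [uIoc]
  exact Ioc_subset_Ioc_left (le_min ha hb)

lemma hasDerivAt_sig {s : ℝ} (hs : 0 < s) : HasDerivAt sig (1 / m s ^ 2) s :=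
  intervalIntegral.integral_hasDerivAt_right (m_inv_intervalIntegrable 0 s le_rfl hs.le)
    (m_inv_continuousOn.stronglyMeasurableAtFilter isOpen_Ioi s hs)
    (m_inv_continuousOn.continuousAt (Ioi_mem_nhds hs))

lemma sig_zero : sig 0 = 0 := by simp [sig]

lemma sig_continuousOn : ContinuousOn sig (Ici 0) := by
  intro s hs
  have h := intervalIntegral.continuousOn_primitive_interval (μ := volume) (a := 0) (b := s + 1)
    (f := fun t => 1 / m t ^ 2) (by
      rw [uIcc_of_le (by linarith [show (0:ℝ) ≤ s from hs])]
      rw [integrableOn_Icc_iff_integrableOn_Ioc]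
      exact m_inv_integrableOn _)
  rw [uIcc_of_le (by linarith [show (0:ℝ) ≤ s from hs])] at h
  have h2 := h s ⟨hs, by linarith⟩
  refine h2.mono_of_mem_nhdsWithin ?_
  rw [mem_nhdsWithin]
  exact ⟨Iio (s + 1), isOpen_Iio, by simp, fun t ht => ⟨ht.2, ht.1.le⟩⟩

lemma m_inv_ge {s : ℝ} (hs : 0 < s) : 1 ≤ 1 / m s ^ 2 := by
  have := m_pos hs
  have := m_le_one hs
  rw [le_div_iff₀ (by positivity)]
  nlinarith

lemma m_inv_sub_le {s : ℝ} (hs : 1 ≤ s) : 1 / m s ^ 2 - 1 ≤ 2 * exp (-s) := by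
  have hs0 : 0 < s := by linarith
  have h1 := m_sq_lower hs0
  have h2 : exp (-s) ≤ 1 / 2 := by
    have h4 : exp (-s) ≤ exp (-1) := Real.exp_le_exp.2 (by linarith)
    have := Real.exp_neg_one_lt_half
    linarith
  have h3 := exp_pos (-s)
  have hm := m_pos hs0
  rw [sub_le_iff_le_add, div_le_iff₀ (by positivity)]
  nlinarith

lemma sig_sub_mono {s t : ℝ} (hs : 0 ≤ s) (h : s ≤ t) : sig s - s ≤ sig t - t := by
  have : MonotoneOn (fun s => sig s - s) (Ici 0) := by
    refine monotoneOn_of_deriv_nonneg (convex_Ici 0) (sig_continuousOn.sub continuousOn_id) ?_ ?_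
    · rw [interior_Ici]
      exact fun s hs => ((hasDerivAt_sig hs).sub (hasDerivAt_id s)).differentiableAt.differentiableWithinAt
    · rw [interior_Ici]
      intro s hs
      have h : HasDerivAt (fun s => sig s - s) (1 / m s ^ 2 - 1) s :=
        (hasDerivAt_sig hs).sub (hasDerivAt_id s)
      rw [h.deriv]
      linarith [m_inv_ge hs]
  exact this hs (hs.trans h) h

lemma sig_ge {s : ℝ} (hs : 0 ≤ s) : s ≤ sig s := by
  have := sig_sub_mono le_rfl hs
  rw [sig_zero] at this; linarith

lemma sig_sub_le {s t : ℝ} (hs : 1 ≤ s) (h : s ≤ t) : sig t - t ≤ sig s - s + 2 * exp (-s) := by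
  have : AntitoneOn (fun s => sig s - s + 2 * exp (-s)) (Ici 1) := by
    have hd : ∀ s : ℝ, 1 ≤ s → HasDerivAt (fun s => sig s - s + 2 * exp (-s))
        (1 / m s ^ 2 - 1 + 2 * (-exp (-s))) s := fun s hs =>
      ((hasDerivAt_sig (by linarith)).sub (hasDerivAt_id s)).add ((hasDerivAt_exp_neg s).const_mul 2)
    refine antitoneOn_of_deriv_nonpos (convex_Ici 1)
      (fun s hs => (hd s hs).continuousAt.continuousWithinAt) ?_ ?_
    · rw [interior_Ici]
      exact fun s hs => (hd s (le_of_lt hs)).differentiableAt.differentiableWithinAt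
    · rw [interior_Ici]
      intro s hs
      rw [(hd s (le_of_lt hs)).deriv]
      linarith [m_inv_sub_le (le_of_lt (show 1 < s from hs))]
  have := this hs (hs.trans h) h
  simp only at this
  linarith [exp_pos (-t)]

/-- The total delay `∫₀^∞ (m⁻² - 1)`. -/
def aa : ℝ := ⨆ n : ℕ, (sig n - n)

lemma aa_bdd : BddAbove (range fun n : ℕ => sig n - (n : ℝ)) := by
  refine ⟨sig 1 - 1 + 2 * exp (-1), ?_⟩
  rintro _ ⟨n, rfl⟩
  simp only
  rcases le_or_gt (1:ℝ) n with h | h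
  · exact sig_sub_le le_rfl h
  · have := sig_sub_mono n.cast_nonneg h.le
    linarith [exp_pos (-1)]

lemma sig_le {s : ℝ} (hs : 0 ≤ s) : sig s ≤ s + aa := by
  obtain ⟨n, hn⟩ := exists_nat_ge s
  have h1 := sig_sub_mono hs hn
  have h2 : sig n - (n : ℝ) ≤ aa := le_ciSup aa_bdd n
  linarith

lemma aa_le {s : ℝ} (hs : 1 ≤ s) : aa ≤ sig s - s + 2 * exp (-s) := by
  refine ciSup_le fun n => ?_
  rcases le_or_gt s n with h | h
  · exact sig_sub_le hs h
  · have := sig_sub_mono n.cast_nonneg h.le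
    linarith [exp_pos (-s)]

lemma sig_strictMono : StrictMonoOn sig (Ici 0) := by
  intro s hs t ht h
  have := sig_sub_mono hs h.le
  linarith

lemma sig_mono {s t : ℝ} (hs : 0 ≤ s) (h : s ≤ t) : sig s ≤ sig t := by
  have := sig_sub_mono hs h
  linarith

lemma sig_pos {s : ℝ} (hs : 0 < s) : 0 < sig s := hs.trans_le (sig_ge hs.le)

lemma aa_nonneg : 0 ≤ aa := by
  have := sig_le le_rfl
  rw [sig_zero] at this; linarith

lemma m_sig_sq {s : ℝ} (hs : 0 < s) : m s ^ 2 * (1 / m s ^ 2) = 1 := by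
  have := m_pos hs
  field_simp

/-! ### Exponential inequalities of Carleson–Chang type -/

/-- Optimizing the arithmetic–geometric mean inequality over its weight `c`. -/
lemma sq_le_of_forall {A B d : ℝ} (hA : 0 ≤ A) (h : ∀ c : ℝ, 0 < c → 2 * c * |d| ≤ c ^ 2 * A + B) :
    d ^ 2 ≤ A * B := by
  rw [← sq_abs]
  have hd := abs_nonneg d
  generalize |d| = d at *
  rcases hd.eq_or_lt with h0 | h0
  · have hB : 0 ≤ B := by
      by_contra hB
      push Not at hB
      subst h0
      rcases hA.eq_or_lt with h1 | h1
      · have := h 1 one_pos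
        subst h1; linarith
      · have := h (√(-B / (2 * A))) (Real.sqrt_pos.2 (by apply div_pos <;> linarith))
        rw [Real.sq_sqrt (by apply div_nonneg <;> linarith)] at this
        have e : -B / (2 * A) * A = -B / 2 := by field_simp
        rw [e] at this
        linarith
    subst h0
    simp
    positivity
  · rcases hA.eq_or_lt with h1 | h1
    · have := h ((|B| + 1) / d) (by positivity)
      subst h1
      have e : 2 * ((|B| + 1) / d) * d = 2 * (|B| + 1) := by field_simp
      rw [e] at this
      have := le_abs_self B
      have := abs_nonneg B
      linarith
    · have := h (d / A) (by positivity)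
      have e1 : 2 * (d / A) * d = 2 * (d ^ 2 / A) := by ring
      have e2 : (d / A) ^ 2 * A = d ^ 2 / A := by field_simp
      rw [e1, e2] at this
      have : d ^ 2 / A ≤ B := by linarith
      rw [div_le_iff₀ h1] at this
      linarith

lemma le_of_hasDerivAt_le {f g f1 g1 : ℝ → ℝ} {s t : ℝ} (hst : s ≤ t)
    (hf : ∀ u ∈ Icc s t, HasDerivAt f (f1 u) u) (hg : ∀ u ∈ Icc s t, HasDerivAt g (g1 u) u)
    (h : ∀ u ∈ Icc s t, f1 u ≤ g1 u) : f t - f s ≤ g t - g s := by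
  have : MonotoneOn (g - f) (Icc s t) := by
    refine monotoneOn_of_deriv_nonneg (convex_Icc s t)
      (fun u hu => ((hg u hu).sub (hf u hu)).continuousAt.continuousWithinAt) ?_ ?_
    · rw [interior_Icc]
      exact fun u hu => ((hg u ⟨hu.1.le, hu.2.le⟩).sub
        (hf u ⟨hu.1.le, hu.2.le⟩)).differentiableAt.differentiableWithinAt
    · rw [interior_Icc]
      intro u hu
      have hu' : u ∈ Icc s t := ⟨hu.1.le, hu.2.le⟩
      rw [((hg u hu').sub (hf u hu')).deriv]
      linarith [h u hu']
  have := this (left_mem_Icc.2 hst) (right_mem_Icc.2 hst) hst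
  simp only [Pi.sub_apply] at this
  linarith

/-- Cauchy–Schwarz for increments. -/
lemma incr_sq_le {z z1 σ σ1 e e1 : ℝ → ℝ} {s t : ℝ} (hst : s ≤ t)
    (hz : ∀ u ∈ Icc s t, HasDerivAt z (z1 u) u) (hσ : ∀ u ∈ Icc s t, HasDerivAt σ (σ1 u) u)
    (he : ∀ u ∈ Icc s t, HasDerivAt e (e1 u) u) (hσ0 : ∀ u ∈ Icc s t, 0 ≤ σ1 u)
    (he0 : ∀ u ∈ Icc s t, 0 ≤ e1 u)
    (h : ∀ u ∈ Icc s t, z1 u ^ 2 ≤ σ1 u * e1 u) :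
    (z t - z s) ^ 2 ≤ (σ t - σ s) * (e t - e s) := by
  have hA : 0 ≤ σ t - σ s := by
    have := le_of_hasDerivAt_le (f := fun _ => (0:ℝ)) (f1 := fun _ => 0) hst
      (fun u _ => hasDerivAt_const u 0) hσ hσ0
    linarith
  refine sq_le_of_forall hA fun c hc => ?_
  have key : ∀ u ∈ Icc s t, 2 * c * |z1 u| ≤ c ^ 2 * σ1 u + e1 u := fun u hu => by
    have h1 := h u hu
    rw [← sq_abs] at h1
    have := hσ0 u hu
    have := he0 u hu
    have h2 : (2 * c * |z1 u|) ^ 2 ≤ (c ^ 2 * σ1 u + e1 u) ^ 2 := by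
      nlinarith [sq_nonneg (c ^ 2 * σ1 u - e1 u), mul_le_mul_of_nonneg_left h1 (sq_nonneg c)]
    exact abs_le_of_sq_le_sq' h2 (by positivity) |>.2
  have hr : ∀ u ∈ Icc s t, HasDerivAt (fun u => c ^ 2 * σ u + e u) (c ^ 2 * σ1 u + e1 u) u :=
    fun u hu => ((hσ u hu).const_mul _).add (he u hu)
  have h1 := le_of_hasDerivAt_le hst (fun u hu => (hz u hu).const_mul (2 * c)) hr (fun u hu => by
    have := key u hu
    have := mul_le_mul_of_nonneg_left (le_abs_self (z1 u)) (by positivity : 0 ≤ 2 * c)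
    linarith)
  have h2 := le_of_hasDerivAt_le hst (fun u hu => (hz u hu).const_mul (-(2 * c))) hr (fun u hu => by
    have := key u hu
    have := mul_le_mul_of_nonneg_left (neg_abs_le (z1 u)) (by positivity : 0 ≤ 2 * c)
    linarith)
  have e1' : 2 * c * |z t - z s| = |2 * c * z t - 2 * c * z s| := by
    rw [← mul_sub, abs_mul, abs_of_pos (by positivity : 0 < 2 * c)]
  rw [e1']
  refine abs_le.2 ⟨?_, ?_⟩ <;> linarith

/-- A Bellman-type exponential inequality: with `Q = exp (Y - τ)` and `P = ∫ Q τ'`, the quantity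
`log P + Q / P - e` is nonincreasing. If `P T > Q T`, it is compared at `T` and at a point where
`P = Q`; otherwise the bound `Y - τ ≤ e - e a` suffices. -/
lemma bellman {Y Y1 τ τ1 e e1 : ℝ → ℝ} {a D : ℝ}
    (hY : ∀ u, a ≤ u → HasDerivAt Y (Y1 u) u) (hτ : ∀ u, a ≤ u → HasDerivAt τ (τ1 u) u)
    (he : ∀ u, a ≤ u → HasDerivAt e (e1 u) u) (hτ0 : ∀ u, a ≤ u → 0 < τ1 u)
    (hτc : ContinuousOn τ1 (Ici a))
    (h : ∀ u, a ≤ u → Y1 u ^ 2 ≤ 4 * τ1 u * e1 u) (hYa : Y a = 0) (hτa : τ a = 0)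
    (hD : ∀ u, a ≤ u → e u - e a ≤ D) {T : ℝ} (hT : a ≤ T) :
    ∫ u in a..T, exp (Y u - τ u) * τ1 u ≤ exp (1 + D) := by
  have he0 : ∀ u, a ≤ u → 0 ≤ e1 u := fun u hu => by
    have h1 := h u hu
    have h2 := hτ0 u hu
    by_contra h3
    push Not at h3
    nlinarith [sq_nonneg (Y1 u)]
  have hemono : ∀ s t, a ≤ s → s ≤ t → e s ≤ e t := fun s t hs hst => by
    have := le_of_hasDerivAt_le (f := fun _ => (0:ℝ)) (f1 := fun _ => 0) hst
      (fun u _ => hasDerivAt_const u 0) (fun u hu => he u (hs.trans hu.1))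
      (fun u hu => he0 u (hs.trans hu.1))
    linarith
  have hD0 : 0 ≤ D := by simpa using hD a le_rfl
  set Q : ℝ → ℝ := fun u => exp (Y u - τ u) with hQ
  set P : ℝ → ℝ := fun t => ∫ u in a..t, Q u * τ1 u with hP
  have hQd : ∀ u, a ≤ u → HasDerivAt Q (Q u * (Y1 u - τ1 u)) u := fun u hu =>
    ((hY u hu).sub (hτ u hu)).exp
  have hQc : ContinuousOn Q (Ici a) := fun u hu => (hQd u hu).continuousAt.continuousWithinAt
  have hc : ContinuousOn (fun u => Q u * τ1 u) (Ici a) := hQc.mul hτc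
  have hPc : ContinuousOn P (Icc a T) := by
    have := intervalIntegral.continuousOn_primitive_interval (μ := volume) (a := a) (b := T)
      (f := fun u => Q u * τ1 u) (by
        rw [uIcc_of_le hT]
        exact (hc.mono Icc_subset_Ici_self).integrableOn_Icc)
    rwa [uIcc_of_le hT] at this
  have hPd : ∀ u, a < u → HasDerivAt P (Q u * τ1 u) u := fun u hu =>
    intervalIntegral.integral_hasDerivAt_right
      ((hc.mono (by rw [uIcc_of_le hu.le]; exact Icc_subset_Ici_self)).intervalIntegrable)
      ((hc.mono Ioi_subset_Ici_self).stronglyMeasurableAtFilter isOpen_Ioi u hu)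
      ((hc u hu.le).continuousAt (Ici_mem_nhds hu))
  have hPpos : ∀ u, a < u → 0 < P u := fun u hu =>
    intervalIntegral.intervalIntegral_pos_of_pos_on
      ((hc.mono (by rw [uIcc_of_le hu.le]; exact Icc_subset_Ici_self)).intervalIntegrable)
      (fun v hv => mul_pos (exp_pos _) (hτ0 v hv.1.le)) hu
  have hYle : ∀ u, a ≤ u → Y u - τ u ≤ e u - e a := fun u hu => by
    have hd := le_of_hasDerivAt_le hu
      (fun v hv => hY v hv.1) (fun v hv => (hτ v hv.1).add (he v hv.1)) (fun v hv => by
        have h1 := h v hv.1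
        have h2 := hτ0 v hv.1
        have h3 := he0 v hv.1
        have h4 : Y1 v ^ 2 ≤ (τ1 v + e1 v) ^ 2 := by nlinarith [sq_nonneg (τ1 v - e1 v)]
        exact (abs_le_of_sq_le_sq' h4 (by positivity)).2)
    simp only [Pi.add_apply] at hd
    linarith
  change P T ≤ _
  rcases le_or_gt (P T) (Q T) with hPQ | hPQ
  · refine hPQ.trans (Real.exp_le_exp.2 ?_)
    linarith [hYle T hT, hD T hT]
  · have hPa : P a = 0 := by simp [hP]
    have hQa : Q a = 1 := by simp [hQ, hYa, hτa]
    obtain ⟨s, hs, hs0⟩ := intermediate_value_Icc hT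
      (hPc.sub (hQc.mono Icc_subset_Ici_self)) (show (0:ℝ) ∈ Icc _ _ by
        simp only [Pi.sub_apply, hPa, hQa]
        constructor <;> linarith)
    simp only [Pi.sub_apply] at hs0
    have hsa : a < s := by
      rcases hs.1.eq_or_lt with h1 | h1
      · rw [← h1, hPa, hQa] at hs0; linarith
      · exact h1
    have hPs := hPpos s hsa
    have hPT := hPpos T (hsa.trans_le hs.2)
    have hΦ := le_of_hasDerivAt_le hs.2 (f := fun u => Real.log (P u) + Q u / P u)
      (fun u hu => ((hPd u (hsa.trans_le hu.1)).log (hPpos u (hsa.trans_le hu.1)).ne').add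
        ((hQd u (hs.1.trans hu.1)).div (hPd u (hsa.trans_le hu.1)) (hPpos u (hsa.trans_le hu.1)).ne'))
      (fun u hu => he u (hs.1.trans hu.1)) (fun u hu => by
        have hau := hs.1.trans hu.1
        have hp := hPpos u (hsa.trans_le hu.1)
        have h2 := hτ0 u hau
        have e0 : Q u * τ1 u / P u + (Q u * (Y1 u - τ1 u) * P u - Q u * (Q u * τ1 u)) / P u ^ 2
          = (Q u / P u) * Y1 u - (Q u / P u) ^ 2 * τ1 u := by
          field_simp; ring
        rw [e0]
        have h1 := h u hau
        generalize Q u / P u = q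
        have h3 : 0 ≤ 4 * τ1 u * (e1 u - (q * Y1 u - q ^ 2 * τ1 u)) := by
          nlinarith [sq_nonneg (Y1 u - 2 * q * τ1 u)]
        have h4 := nonneg_of_mul_nonneg_right h3 (by positivity)
        linarith)
    have hPQs : P s = Q s := by linarith
    rw [hPQs, div_self (by rw [← hPQs]; exact hPs.ne')] at hΦ
    have hlogQ : Real.log (Q s) = Y s - τ s := by simp [hQ]
    rw [hlogQ] at hΦ
    have h5 : 0 ≤ Q T / P T := div_nonneg (exp_pos _).le hPT.le
    have h6 := hYle s hs.1
    have h7 := hD T hT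
    rw [← Real.log_le_iff_le_exp hPT]
    linarith

lemma lintegral_Ioi_le {f : ℝ → ENNReal} {a : ℝ} {C : ENNReal}
    (h : ∀ T, a ≤ T → ∫⁻ s in Ioc a T, f s ≤ C) : ∫⁻ s in Ioi a, f s ≤ C := by
  have e : Ioi a = ⋃ n : ℕ, Ioc a (a + n) := by
    ext s
    simp only [mem_Ioi, mem_iUnion, mem_Ioc]
    constructor
    · intro hs
      obtain ⟨n, hn⟩ := exists_nat_ge (s - a)
      exact ⟨n, hs, by linarith⟩
    · rintro ⟨n, hn⟩; exact hn.1
  have hm : Monotone fun n : ℕ => Ioc a (a + n) := fun i j hij =>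
    Ioc_subset_Ioc_right (by have : (i : ℝ) ≤ j := by exact_mod_cast hij
                             linarith)
  rw [e, setLIntegral_iUnion_of_directed _ (directed_of_isDirected_le hm)]
  exact iSup_le fun n => h _ (by linarith [n.cast_nonneg (α := ℝ)])

/-- The Carleson–Chang tail estimate. As `(z - z a)² ≤ δ (σ - σ a)`, expanding `z²` around `z a`
reduces the exponent to an expression linear in `z`, to which `bellman` applies. -/
lemma carleson_chang {z z1 σ σ1 e e1 : ℝ → ℝ} {a δ : ℝ}
    (hz : ∀ u, a ≤ u → HasDerivAt z (z1 u) u) (hσ : ∀ u, a ≤ u → HasDerivAt σ (σ1 u) u)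
    (he : ∀ u, a ≤ u → HasDerivAt e (e1 u) u) (hσ0 : ∀ u, a ≤ u → 0 < σ1 u)
    (hσc : ContinuousOn σ1 (Ici a)) (hσa : 0 < σ a)
    (h : ∀ u, a ≤ u → z1 u ^ 2 ≤ σ1 u * e1 u) (hK : z a ≠ 0)
    (hδ : ∀ u, a ≤ u → e u - e a ≤ δ) (hKδ : z a ^ 2 / σ a + δ ≤ 1) :
    ∫⁻ s in Ioi a, ENNReal.ofReal (exp (z s ^ 2 - σ s) * σ1 s) ≤
      ENNReal.ofReal (exp 1 * (σ a / z a ^ 2)) := by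
  have he0 : ∀ u, a ≤ u → 0 ≤ e1 u := fun u hu => by
    have h1 := h u hu
    have h2 := hσ0 u hu
    by_contra h3
    push Not at h3
    nlinarith [sq_nonneg (z1 u)]
  have hK2 : 0 < z a ^ 2 := by positivity
  have hKs : 0 < z a ^ 2 / σ a := by positivity
  have hδ1 : 0 < 1 - δ := by linarith
  refine lintegral_Ioi_le fun T hT => ?_
  have hB := bellman (Y := fun u => 2 * z a * (z u - z a)) (Y1 := fun u => 2 * z a * z1 u)
    (τ := fun u => (1 - δ) * (σ u - σ a)) (τ1 := fun u => (1 - δ) * σ1 u)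
    (e := fun u => z a ^ 2 / (1 - δ) * e u) (e1 := fun u => z a ^ 2 / (1 - δ) * e1 u)
    (D := z a ^ 2 / (1 - δ) * δ)
    (fun u hu => ((hz u hu).sub_const _).const_mul _)
    (fun u hu => ((hσ u hu).sub_const _).const_mul _)
    (fun u hu => (he u hu).const_mul _) (fun u hu => mul_pos hδ1 (hσ0 u hu))
    (hσc.const_mul _) (fun u hu => by
      have e0 : 4 * ((1 - δ) * σ1 u) * (z a ^ 2 / (1 - δ) * e1 u) = 4 * z a ^ 2 * (σ1 u * e1 u) := by
        field_simp
      rw [e0, mul_pow, mul_pow]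
      have := h u hu
      nlinarith) (by simp) (by simp)
    (fun u hu => by rw [← mul_sub]; have := hδ u hu; gcongr) hT
  have hcz : ContinuousOn z (Ici a) := fun u hu => (hz u hu).continuousAt.continuousWithinAt
  have hcσ : ContinuousOn σ (Ici a) := fun u hu => (hσ u hu).continuousAt.continuousWithinAt
  have h_int : IntegrableOn (fun s => exp (z s ^ 2 - σ s) * σ1 s) (Ioc a T) := by
    refine (ContinuousOn.integrableOn_Icc ?_).mono_set Ioc_subset_Icc_self
    exact ((((hcz.pow 2).sub hcσ).rexp).mul hσc).mono Icc_subset_Ici_self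
  rw [← ofReal_integral_eq_lintegral_ofReal h_int (by
    filter_upwards [ae_restrict_mem measurableSet_Ioc] with s hs
    exact mul_nonneg (exp_pos _).le (hσ0 s hs.1.le).le)]
  refine ENNReal.ofReal_le_ofReal ?_
  rw [intervalIntegral.integral_of_le hT] at hB
  set C := exp (z a ^ 2 - σ a) / (1 - δ) with hC
  have hCpos : 0 < C := by positivity
  have h1 : ∫ s in Ioc a T, exp (z s ^ 2 - σ s) * σ1 s ≤
      ∫ s in Ioc a T, C * (exp (2 * z a * (z s - z a) - (1 - δ) * (σ s - σ a)) * ((1 - δ) * σ1 s)) := by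
    refine setIntegral_mono_on h_int ?_ measurableSet_Ioc fun s hs => ?_
    · refine Integrable.const_mul ?_ _
      refine IntegrableOn.mono_set (ContinuousOn.integrableOn_Icc ?_) Ioc_subset_Icc_self
      refine ContinuousOn.mono ?_ (show Icc a T ⊆ Ici a from Icc_subset_Ici_self)
      refine ContinuousOn.mul (ContinuousOn.rexp ?_) (hσc.const_mul _)
      exact ((hcz.sub continuousOn_const).const_mul _).sub ((hcσ.sub continuousOn_const).const_mul _)
    · have hy := incr_sq_le hs.1.le (fun u hu => hz u hu.1) (fun u hu => hσ u hu.1)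
        (fun u hu => he u hu.1) (fun u hu => (hσ0 u hu.1).le) (fun u hu => he0 u hu.1)
        (fun u hu => h u hu.1)
      have hσmono : 0 ≤ σ s - σ a := by
        have := le_of_hasDerivAt_le (f := fun _ => (0:ℝ)) (f1 := fun _ => 0) hs.1.le
          (fun u _ => hasDerivAt_const u 0) (fun u hu => hσ u hu.1) (fun u hu => (hσ0 u hu.1).le)
        linarith
      have hy2 := mul_le_mul_of_nonneg_left (hδ s hs.1.le) hσmono
      have e0 : C * (exp (2 * z a * (z s - z a) - (1 - δ) * (σ s - σ a)) * ((1 - δ) * σ1 s)) =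
        exp (z a ^ 2 - σ a + (2 * z a * (z s - z a) - (1 - δ) * (σ s - σ a))) * σ1 s := by
        rw [hC, Real.exp_add]; field_simp
      rw [e0]
      refine mul_le_mul_of_nonneg_right (Real.exp_le_exp.2 ?_) (hσ0 s hs.1.le).le
      nlinarith
  refine h1.trans ?_
  rw [integral_const_mul]
  refine (mul_le_mul_of_nonneg_left hB hCpos.le).trans ?_
  have hle : z a ^ 2 / (1 - δ) ≤ σ a := by
    rw [div_le_iff₀ hδ1]
    have : z a ^ 2 / σ a ≤ 1 - δ := by linarith
    rw [div_le_iff₀ hσa] at this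
    linarith
  have e1' : C * exp (1 + z a ^ 2 / (1 - δ) * δ) = exp (1 + (z a ^ 2 / (1 - δ) - σ a)) * (1 / (1 - δ)) := by
    rw [hC, div_mul_eq_mul_div, ← Real.exp_add, mul_one_div]
    congr 2
    field_simp
    ring
  rw [e1']
  refine mul_le_mul (Real.exp_le_exp.2 (by linarith)) ?_ (by positivity) (exp_pos _).le
  rw [div_le_div_iff₀ hδ1 hK2]
  rw [div_le_iff₀ hδ1] at hle
  linarith

/-! ### Radial profiles and the ground state transform -/

/-- Radial profiles, in the variable `s = -log |x|²`, of radial test functions: smooth, vanishing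
near `s = 0` (the unit circle) and constant near `s = ∞` (the origin). -/
def IsW (w : ℝ → ℝ) : Prop :=
  ContDiff ℝ (⊤ : ℕ∞) w ∧ (∃ s0 > 0, ∀ s ≤ s0, w s = 0) ∧ ∃ s1, ∀ s, s1 ≤ s → w s = w s1

/-- The Hardy functional of a radial profile. -/
def h (w : ℝ → ℝ) : ℝ := (∫ s in Ioi 0, deriv w s ^ 2) - ∫ s in Ioi 0, V s * w s ^ 2

/-- The Moser–Trudinger functional of a radial profile, up to the factor `π`. -/
def J (w : ℝ → ℝ) : ENNReal := ∫⁻ s in Ioi 0, ENNReal.ofReal (exp (w s ^ 2 - s))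

/-- The density `m² ((w/m)')²` of the Hardy energy. -/
def en1 (w w1 : ℝ → ℝ) (s : ℝ) : ℝ := (w1 s - w s * (m1 s / m s)) ^ 2

lemma V_continuousOn : ContinuousOn V (Ioi 0) := by
  unfold V
  refine ContinuousOn.div (by fun_prop) (by fun_prop) fun s hs => ?_
  have := exp_neg_lt_one (show 0 < s from hs)
  have : 0 < 1 - exp (-s) := by linarith
  positivity

lemma m1_continuousOn : ContinuousOn m1 (Ioi 0) :=
  fun _ hs => (hasDerivAt_m1 hs).continuousAt.continuousWithinAt

lemma m1_div_m_continuousOn : ContinuousOn (fun s => m1 s / m s) (Ioi 0) :=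
  m1_continuousOn.div m_continuousOn fun _ hs => (m_pos hs).ne'

/-- The ground state transform: completing the square in the Hardy functional. -/
lemma energy_identity {f f1 : ℝ → ℝ} {a b : ℝ} (ha : 0 < a) (hab : a ≤ b)
    (hf : ContinuousOn f (Icc a b)) (hd : ∀ s ∈ Ioo a b, HasDerivAt f (f1 s) s)
    (hf1 : ContinuousOn f1 (Icc a b)) :
    ∫ s in a..b, en1 f f1 s = (∫ s in a..b, (f1 s ^ 2 - V s * f s ^ 2))
      - (f b ^ 2 * (m1 b / m b) - f a ^ 2 * (m1 a / m a)) := by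
  have hsub : Icc a b ⊆ Ioi 0 := fun s hs => ha.trans_le hs.1
  have hq := m1_div_m_continuousOn.mono hsub
  have hV := V_continuousOn.mono hsub
  have hqd : ∀ s ∈ Ioo a b, HasDerivAt (fun s => m1 s / m s) (-V s - (m1 s / m s) ^ 2) s := by
    intro s hs
    have h0 : 0 < s := ha.trans hs.1
    have := (hasDerivAt_m1 h0).div (hasDerivAt_m h0) (m_pos h0).ne'
    refine this.congr_deriv ?_
    have := m_pos h0
    field_simp
  have hc1 : ContinuousOn (fun s => f1 s ^ 2 - V s * f s ^ 2) (Icc a b) :=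
    (hf1.pow 2).sub (hV.mul (hf.pow 2))
  have hc2 : ContinuousOn (en1 f f1) (Icc a b) := (hf1.sub (hf.mul hq)).pow 2
  have key := intervalIntegral.integral_eq_sub_of_hasDerivAt_of_le hab
    (f := fun s => f s ^ 2 * (m1 s / m s)) (f' := fun s => (f1 s ^ 2 - V s * f s ^ 2) - en1 f f1 s)
    ((hf.pow 2).mul hq) (fun s hs => by
      have := ((hd s hs).pow 2).mul (hqd s hs)
      refine this.congr_deriv ?_
      simp only [en1, Pi.pow_apply]
      ring) ((hc1.sub hc2).intervalIntegrable_of_Icc hab)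
  rw [intervalIntegral.integral_sub (hc1.intervalIntegrable_of_Icc hab)
    (hc2.intervalIntegrable_of_Icc hab)] at key
  linarith

lemma en1_nonneg (w w1 : ℝ → ℝ) (s : ℝ) : 0 ≤ en1 w w1 s := sq_nonneg _

section profile
variable {w : ℝ → ℝ}

lemma IsW.diff (hw : IsW w) (s : ℝ) : HasDerivAt w (deriv w s) s :=
  (hw.1.differentiable (by simp) s).hasDerivAt

lemma IsW.deriv_cont (hw : IsW w) : Continuous (deriv w) :=
  hw.1.continuous_deriv (by simp)

lemma IsW.zero (hw : IsW w) {s : ℝ} (hs : s ≤ 0) : w s = 0 := by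
  obtain ⟨s0, h0, h1⟩ := hw.2.1
  exact h1 s (by linarith)

lemma IsW.en1_cont (hw : IsW w) : Continuous (en1 w (deriv w)) := by
  obtain ⟨s0, h0, h1⟩ := hw.2.1
  rw [continuous_iff_continuousAt]
  intro s
  rcases lt_or_ge s s0 with hs | hs
  · have : en1 w (deriv w) =ᶠ[𝓝 s] fun _ => 0 := by
      filter_upwards [Iio_mem_nhds hs] with t ht
      have hwt : w =ᶠ[𝓝 t] fun _ => 0 := by
        filter_upwards [Iio_mem_nhds (show t < s0 from ht)] with r hr
        exact h1 r (le_of_lt hr)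
      have e1 : deriv w t = 0 := by rw [hwt.deriv_eq]; simp
      simp [en1, e1, h1 t (le_of_lt ht)]
    exact continuousAt_const.congr this.symm
  · have hs0 : 0 < s := h0.trans_le hs
    unfold en1
    exact (hw.deriv_cont.continuousAt.sub (hw.1.continuous.continuousAt.mul
      (m1_div_m_continuousOn.continuousAt (Ioi_mem_nhds hs0)))).pow 2

/-- The Hardy energy of a profile on `(0, s)`. -/
def en (w : ℝ → ℝ) (s : ℝ) : ℝ := ∫ t in (0)..s, en1 w (deriv w) t

lemma IsW.hasDerivAt_en (hw : IsW w) (s : ℝ) : HasDerivAt (en w) (en1 w (deriv w) s) s :=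
  intervalIntegral.integral_hasDerivAt_right (hw.en1_cont.intervalIntegrable _ _)
    (hw.en1_cont.stronglyMeasurableAtFilter _ _) hw.en1_cont.continuousAt

lemma IsW.en_mono (hw : IsW w) {s t : ℝ} (hst : s ≤ t) : en w s ≤ en w t := by
  have := le_of_hasDerivAt_le (f := fun _ => (0:ℝ)) (f1 := fun _ => 0) hst
      (fun u _ => hasDerivAt_const u 0) (fun u _ => hw.hasDerivAt_en u)
      (fun u _ => en1_nonneg _ _ u)
  linarith

lemma en_zero : en w 0 = 0 := by simp [en]

lemma IsW.en_nonneg (hw : IsW w) {s : ℝ} (hs : 0 ≤ s) : 0 ≤ en w s := by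
  rw [← en_zero (w := w)]; exact hw.en_mono hs

lemma IsW.deriv_zero (hw : IsW w) : ∃ s0 > 0, (∀ s ≤ s0, w s = 0) ∧ (∀ s ≤ s0, deriv w s = 0) := by
  obtain ⟨s0, h0, h1⟩ := hw.2.1
  refine ⟨s0 / 2, by linarith, fun s hs => h1 s (by linarith), fun s hs => ?_⟩
  have hwt : w =ᶠ[𝓝 s] fun _ => 0 := by
    filter_upwards [Iio_mem_nhds (show s < s0 by linarith)] with r hr
    exact h1 r (le_of_lt hr)
  rw [hwt.deriv_eq]; simp

lemma IsW.deriv_zero' (hw : IsW w) : ∃ s1 > 0, (∀ s, s1 ≤ s → w s = w s1) ∧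
    (∀ s, s1 ≤ s → deriv w s = 0) := by
  obtain ⟨s0, h1⟩ := hw.2.2
  refine ⟨|s0| + 1, by positivity, fun s hs => ?_, fun s hs => ?_⟩
  · have := le_abs_self s0
    rw [h1 s (by linarith), h1 (|s0| + 1) (by linarith)]
  · have := le_abs_self s0
    have hwt : w =ᶠ[𝓝 s] fun _ => w s0 := by
      filter_upwards [Ioi_mem_nhds (show s0 < s by linarith)] with r hr
      exact h1 r (le_of_lt hr)
    rw [hwt.deriv_eq]; simp

lemma IsW.deriv_integrable (hw : IsW w) : Integrable (fun s => deriv w s ^ 2) := by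
  obtain ⟨s0, h0, _, h1⟩ := hw.deriv_zero
  obtain ⟨s1, h0', _, h1'⟩ := hw.deriv_zero'
  refine (hw.deriv_cont.pow 2).integrable_of_hasCompactSupport
    (HasCompactSupport.intro (isCompact_Icc (a := s0) (b := s1)) fun s hs => ?_)
  simp only [mem_Icc, not_and_or, not_le] at hs
  rcases hs with hs | hs
  · simp [h1 s hs.le]
  · simp [h1' s hs.le]

lemma IsW.bounded (hw : IsW w) : ∃ C, ∀ s, |w s| ≤ C := by
  obtain ⟨s0, h0, h1, _⟩ := hw.deriv_zero
  obtain ⟨s1, h0', h1', _⟩ := hw.deriv_zero'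
  obtain ⟨C, hC⟩ := (isCompact_Icc (a := 0) (b := s1)).exists_bound_of_continuousOn
    hw.1.continuous.continuousOn
  refine ⟨C, fun s => ?_⟩
  rcases le_or_gt s 0 with hs | hs
  · rw [hw.zero hs, ← hw.zero le_rfl]; exact hC 0 ⟨le_rfl, h0'.le⟩
  rcases le_or_gt s s1 with hs' | hs'
  · exact hC s ⟨hs.le, hs'⟩
  · rw [h1' s hs'.le]; exact hC s1 ⟨h0'.le, le_rfl⟩

lemma V_le {a s : ℝ} (ha : 0 < a) (hs : a ≤ s) : V s ≤ exp (-s) / (4 * (1 - exp (-a)) ^ 2) := by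
  have h1 := exp_neg_lt_one ha
  have h2 : exp (-s) ≤ exp (-a) := Real.exp_le_exp.2 (by linarith)
  unfold V
  have : 0 < 1 - exp (-a) := by linarith
  gcongr

lemma V_integrableOn {a : ℝ} (ha : 0 < a) : IntegrableOn V (Ioi a) := by
  refine Integrable.mono' (g := fun s => exp (-s) / (4 * (1 - exp (-a)) ^ 2))
    ((integrableOn_exp_neg_Ioi a).div_const _)
    ((V_continuousOn.mono (Ioi_subset_Ioi ha.le)).aestronglyMeasurable measurableSet_Ioi) ?_
  filter_upwards [ae_restrict_mem measurableSet_Ioi] with s hs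
  rw [Real.norm_of_nonneg (V_pos (ha.trans hs)).le]
  exact V_le ha (le_of_lt hs)

lemma IsW.V_integrable (hw : IsW w) : IntegrableOn (fun s => V s * w s ^ 2) (Ioi 0) := by
  obtain ⟨s0, h0, h1, _⟩ := hw.deriv_zero
  obtain ⟨C, hC⟩ := hw.bounded
  have hC0 : 0 ≤ C := (abs_nonneg _).trans (hC 0)
  have h2 : IntegrableOn (fun s => V s * w s ^ 2) (Ioi s0) := by
    refine Integrable.mono' (g := fun s => C ^ 2 * V s) ((V_integrableOn h0).const_mul _)
      (((V_continuousOn.mono (Ioi_subset_Ioi h0.le)).mul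
        (hw.1.continuous.pow 2).continuousOn).aestronglyMeasurable measurableSet_Ioi) ?_
    filter_upwards [ae_restrict_mem measurableSet_Ioi] with s hs
    have hV := V_pos (h0.trans hs)
    rw [Real.norm_of_nonneg (by positivity), mul_comm]
    have := sq_le_sq' (by linarith [abs_le.1 (hC s)]) (abs_le.1 (hC s)).2
    gcongr
  have e : Ioi (0:ℝ) = Ioc 0 s0 ∪ Ioi s0 := (Ioc_union_Ioi_eq_Ioi h0.le).symm
  rw [e]
  refine IntegrableOn.union ?_ h2
  refine integrableOn_zero.congr_fun (fun s hs => ?_) measurableSet_Ioc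
  simp [h1 s hs.2]

lemma m1_div_m_tendsto : Tendsto (fun s => m1 s / m s) atTop (𝓝 0) := by
  have h0 : Tendsto (fun s : ℝ => exp (-s)) atTop (𝓝 0) := Real.tendsto_exp_neg_atTop_nhds_zero
  have h1 : Tendsto (fun s : ℝ => exp (-s) / (2 * (1 - exp (-s)))) atTop (𝓝 0) := by
    have := h0.div ((h0.const_sub 1).const_mul 2) (by norm_num)
    rw [zero_div] at this
    exact this
  refine squeeze_zero' ?_ ?_ h1
  · filter_upwards [eventually_gt_atTop 0] with s hs
    exact div_nonneg (m1_nonneg hs) (m_pos hs).le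
  · filter_upwards [eventually_gt_atTop 0] with s hs
    rw [div_le_iff₀ (m_pos hs)]
    exact m1_le hs

lemma IsW.en_eq (hw : IsW w) {T : ℝ} (hT : 0 ≤ T) :
    en w T = (∫ s in (0)..T, (deriv w s ^ 2 - V s * w s ^ 2)) - w T ^ 2 * (m1 T / m T) := by
  obtain ⟨s0, h0, h1, h2⟩ := hw.deriv_zero
  rcases le_or_gt T s0 with h | h
  · have e1 : ∫ t in (0)..T, en1 w (deriv w) t = ∫ t in (0)..T, (0:ℝ) := by
      refine intervalIntegral.integral_congr fun t ht => ?_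
      rw [uIcc_of_le hT] at ht
      simp [en1, h1 t (ht.2.trans h), h2 t (ht.2.trans h)]
    have e2 : ∫ t in (0)..T, (deriv w t ^ 2 - V t * w t ^ 2) = ∫ t in (0)..T, (0:ℝ) := by
      refine intervalIntegral.integral_congr fun t ht => ?_
      rw [uIcc_of_le hT] at ht
      simp [h1 t (ht.2.trans h), h2 t (ht.2.trans h)]
    rw [en, e1, e2, h1 T h]; simp
  · have key := energy_identity h0 h.le hw.1.continuous.continuousOn (fun s _ => hw.diff s)
      hw.deriv_cont.continuousOn
    have i1 : ∀ a b, IntervalIntegrable (en1 w (deriv w)) volume a b :=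
      fun a b => hw.en1_cont.intervalIntegrable a b
    have i2 : ∀ a b, 0 ≤ a → a ≤ b → IntervalIntegrable (fun s => deriv w s ^ 2 - V s * w s ^ 2) volume a b := by
      intro a b ha hb
      rw [intervalIntegrable_iff_integrableOn_Ioc_of_le hb]
      exact (hw.deriv_integrable.integrableOn.sub
        (hw.V_integrable)).mono_set (fun s hs => ha.trans_lt hs.1)
    have e1 : ∫ t in (0)..s0, en1 w (deriv w) t = ∫ t in (0)..s0, (0:ℝ) := by
      refine intervalIntegral.integral_congr fun t ht => ?_
      rw [uIcc_of_le h0.le] at ht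
      simp [en1, h1 t ht.2, h2 t ht.2]
    have e2 : ∫ t in (0)..s0, (deriv w t ^ 2 - V t * w t ^ 2) = ∫ t in (0)..s0, (0:ℝ) := by
      refine intervalIntegral.integral_congr fun t ht => ?_
      rw [uIcc_of_le h0.le] at ht
      simp [h1 t ht.2, h2 t ht.2]
    rw [en, ← intervalIntegral.integral_add_adjacent_intervals (i1 0 s0) (i1 s0 T),
      ← intervalIntegral.integral_add_adjacent_intervals (i2 0 s0 le_rfl h0.le) (i2 s0 T h0.le h.le),
      e1, e2, key, h1 s0 le_rfl]
    simp

/-- The Hardy functional is the total energy in the ground state form; the boundary term of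
`IsW.en_eq` vanishes at infinity. -/
lemma IsW.en_tendsto (hw : IsW w) : Tendsto (en w) atTop (𝓝 (h w)) := by
  obtain ⟨C, hC⟩ := hw.bounded
  have hi := (hw.deriv_integrable.integrableOn (s := Ioi 0)).sub hw.V_integrable
  have h1 := intervalIntegral_tendsto_integral_Ioi 0 hi tendsto_id
  have e1 : ∫ s in Ioi 0, ((fun s => deriv w s ^ 2) - fun s => V s * w s ^ 2) s = h w :=
    integral_sub hw.deriv_integrable.integrableOn hw.V_integrable
  rw [e1] at h1
  have h2 : Tendsto (fun T => w T ^ 2 * (m1 T / m T)) atTop (𝓝 0) := by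
    refine squeeze_zero' (g := fun T => C ^ 2 * (m1 T / m T)) ?_ ?_ ?_
    · filter_upwards [eventually_gt_atTop 0] with s hs
      exact mul_nonneg (sq_nonneg _) (div_nonneg (m1_nonneg hs) (m_pos hs).le)
    · filter_upwards [eventually_gt_atTop 0] with s hs
      have := sq_le_sq' (by linarith [abs_le.1 (hC s)]) (abs_le.1 (hC s)).2
      exact mul_le_mul_of_nonneg_right this (div_nonneg (m1_nonneg hs) (m_pos hs).le)
    · simpa using m1_div_m_tendsto.const_mul (C ^ 2)
  have h3 := h1.sub h2
  rw [sub_zero] at h3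
  refine h3.congr' ?_
  filter_upwards [eventually_ge_atTop 0] with T hT
  rw [hw.en_eq hT]
  rfl

lemma IsW.en_le (hw : IsW w) (s : ℝ) : en w s ≤ h w :=
  ge_of_tendsto hw.en_tendsto ((eventually_ge_atTop s).mono fun _ ht => hw.en_mono ht)

lemma IsW.h_nonneg (hw : IsW w) : 0 ≤ h w :=
  (hw.en_nonneg le_rfl).trans (hw.en_le 0)

/-- The quotient `w / m` by the ground state. -/
def zz (w : ℝ → ℝ) (s : ℝ) : ℝ := w s / m s

lemma IsW.hasDerivAt_zz (hw : IsW w) {s : ℝ} (hs : 0 < s) :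
    HasDerivAt (zz w) ((deriv w s - w s * (m1 s / m s)) / m s) s := by
  have h0 := m_pos hs
  refine ((hw.diff s).div (hasDerivAt_m hs) h0.ne').congr_deriv ?_
  field_simp

lemma IsW.zz_incr (hw : IsW w) {s t : ℝ} (hs : 0 < s) (hst : s ≤ t) :
    (zz w t - zz w s) ^ 2 ≤ (sig t - sig s) * (en w t - en w s) :=
  incr_sq_le hst (fun _ hu => hw.hasDerivAt_zz (hs.trans_le hu.1))
    (fun _ hu => hasDerivAt_sig (hs.trans_le hu.1)) (fun u _ => hw.hasDerivAt_en u)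
    (fun u hu => by have := m_pos (hs.trans_le hu.1); positivity) (fun u _ => en1_nonneg _ _ u)
    (fun u hu => by rw [div_pow, en1]; apply le_of_eq; ring)

lemma IsW.zz_sq_le (hw : IsW w) {s : ℝ} (hs : 0 < s) : zz w s ^ 2 ≤ sig s * en w s := by
  obtain ⟨s0, h0, h1, h2⟩ := hw.deriv_zero
  have hm : 0 < min s s0 := lt_min hs h0
  have := hw.zz_incr hm (min_le_left s s0)
  have e : zz w (min s s0) = 0 := by simp [zz, h1 _ (min_le_right s s0)]
  rw [e, sub_zero] at this
  refine this.trans ?_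
  have := sig_pos hm
  have := hw.en_nonneg hm.le
  have := hw.en_mono (min_le_left s s0)
  have := sig_mono hm.le (min_le_left s s0)
  apply mul_le_mul <;> linarith

lemma w_sq_le_zz {s : ℝ} (hs : 0 < s) : w s ^ 2 ≤ zz w s ^ 2 := by
  have h0 := m_pos hs
  have h1 := m_le_one hs
  unfold zz
  rw [div_pow, le_div_iff₀ (by positivity)]
  have : m s ^ 2 ≤ 1 := by nlinarith
  nlinarith [sq_nonneg (w s)]

lemma IsW.sq_le (hw : IsW w) (hh : h w ≤ 1) {s : ℝ} (hs : 0 < s) : zz w s ^ 2 ≤ sig s := by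
  have h1 := hw.zz_sq_le hs
  have h2 := hw.en_le s
  have := sig_pos hs
  nlinarith

lemma exp_le_zz {s : ℝ} (hs : 0 < s) :
    exp (w s ^ 2 - s) ≤ exp aa * (exp (zz w s ^ 2 - sig s) * (1 / m s ^ 2)) := by
  have h1 : exp (w s ^ 2 - s) ≤ exp aa * exp (zz w s ^ 2 - sig s) := by
    rw [← Real.exp_add]
    refine Real.exp_le_exp.2 ?_
    have := w_sq_le_zz (w := w) hs
    have := sig_le hs.le
    linarith
  rw [← mul_assoc]
  refine h1.trans (le_mul_of_one_le_right (by positivity) (m_inv_ge hs))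

end profile

/-! ### The one-dimensional supremum and concentration -/

/-- The constant in the Carleson–Chang estimate of the part of `J` beyond `A`. -/
def ccC (A : ℝ) : ℝ := exp aa * (1 / A + exp 1 * (1 / (1 - 2 * (Real.log A / A))))

lemma log_div_lt {σ : ℝ} (h : 16 ≤ σ) : Real.log σ / σ ≤ 1 / 4 := by
  have h0 : 0 < σ := by linarith
  rw [div_le_iff₀ h0]
  have h1 : Real.log σ = 2 * Real.log (√σ) := by
    rw [Real.log_sqrt h0.le]; ring
  have h2 : Real.log (√σ) ≤ √σ / 2 := by
    have hs := Real.sqrt_pos.2 h0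
    have h4 : √σ / 2 = √σ * (1 / 2) := by ring
    have h3 := Real.log_le_sub_one_of_pos (show 0 < √σ / 2 by positivity)
    have h5 : Real.log (√σ / 2) = Real.log (√σ) - Real.log 2 := Real.log_div hs.ne' (by norm_num)
    have := Real.log_two_lt_d9
    linarith
  have h3 : 4 ≤ √σ := by
    rw [show (4:ℝ) = √16 by rw [show (16:ℝ) = 4 ^ 2 by norm_num]; simp]
    exact Real.sqrt_le_sqrt h
  have h4 := Real.sq_sqrt h0.le
  nlinarith

lemma lintegral_sig_le {A : ℝ} (hA : 0 < A) :
    ∫⁻ s in Ioi A, ENNReal.ofReal ((sig s ^ 2)⁻¹ * (1 / m s ^ 2)) ≤ ENNReal.ofReal (1 / A) := by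
  refine lintegral_Ioi_le fun T hT => ?_
  have hsub : Icc A T ⊆ Ioi 0 := fun s hs => hA.trans_le hs.1
  have hcs : ContinuousOn sig (Icc A T) := sig_continuousOn.mono fun s hs => hA.le.trans hs.1
  have hc : ContinuousOn (fun s => (sig s ^ 2)⁻¹ * (1 / m s ^ 2)) (Icc A T) :=
    ((hcs.pow 2).inv₀ fun s hs => by
      exact pow_ne_zero 2 (sig_pos (hA.trans_le hs.1)).ne').mul (m_inv_continuousOn.mono hsub)
  rw [← ofReal_integral_eq_lintegral_ofReal (hc.integrableOn_Icc.mono_set Ioc_subset_Icc_self) (by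
    filter_upwards [ae_restrict_mem measurableSet_Ioc] with s hs
    have := sig_pos (hA.trans hs.1)
    positivity)]
  refine ENNReal.ofReal_le_ofReal ?_
  rw [← intervalIntegral.integral_of_le hT]
  rw [intervalIntegral.integral_eq_sub_of_hasDerivAt_of_le hT (f := fun s => -(sig s)⁻¹)
    ((hcs.inv₀ fun s hs => (sig_pos (hA.trans_le hs.1)).ne').neg) (fun s hs => by
      have h0 := hA.trans hs.1
      refine ((hasDerivAt_sig h0).inv (sig_pos h0).ne').neg.congr_deriv ?_
      have := sig_pos h0
      have := m_pos h0
      field_simp) (hc.intervalIntegrable_of_Icc hT)]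
  have h1 := sig_pos (hA.trans_le hT)
  have h2 := sig_ge hA.le
  have h3 : (sig A)⁻¹ ≤ 1 / A := by
    rw [one_div]; exact inv_anti₀ hA h2
  have : 0 < (sig T)⁻¹ := by positivity
  linarith

/-- The part of `J` beyond `A`. Where `zz² < sig - 2 log sig` the integrand is at most a multiple of
`sig⁻²`. At the first point beyond `A` where this fails, nearly all of the energy is already used up,
and `carleson_chang` bounds everything from there on. -/
lemma tail_le {w : ℝ → ℝ} (hw : IsW w) (hh : h w ≤ 1) {A : ℝ} (hA : 16 ≤ A) :
    ∫⁻ s in Ioi A, ENNReal.ofReal (exp (w s ^ 2 - s)) ≤ ENNReal.ofReal (ccC A) := by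
  have hA0 : 0 < A := by linarith
  have hκ : 0 < 1 - 2 * (Real.log A / A) := by linarith [log_div_lt hA]
  have hκ' : ∀ s, A ≤ s → 1 - 2 * (Real.log A / A) ≤ 1 - 2 * (Real.log (sig s) / sig s) := by
    intro s hs
    have h1 : A ≤ sig s := hs.trans (sig_ge (hA0.le.trans hs))
    have he : exp 1 ≤ A := by
      have := Real.exp_one_lt_d9; linarith
    have := Real.log_div_self_antitoneOn (show A ∈ {x | exp 1 ≤ x} from he)
      (show sig s ∈ {x | exp 1 ≤ x} from he.trans h1) h1
    simp only at this
    linarith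
  -- the regular part, where `zz² ≤ sig - 2 log sig`
  have hreg : ∀ B : Set ℝ, MeasurableSet B → B ⊆ Ioi A →
      (∀ s ∈ B, zz w s ^ 2 ≤ sig s - 2 * Real.log (sig s)) →
      ∫⁻ s in B, ENNReal.ofReal (exp (w s ^ 2 - s)) ≤ ENNReal.ofReal (exp aa * (1 / A)) := by
    intro B hBm hB hle
    calc ∫⁻ s in B, ENNReal.ofReal (exp (w s ^ 2 - s))
        ≤ ∫⁻ s in B, ENNReal.ofReal (exp aa) * ENNReal.ofReal ((sig s ^ 2)⁻¹ * (1 / m s ^ 2)) := by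
          refine setLIntegral_mono' hBm fun s hs => ?_
          rw [← ENNReal.ofReal_mul (exp_pos _).le]
          refine ENNReal.ofReal_le_ofReal ?_
          have h0 : 0 < s := hA0.trans (hB hs)
          refine (exp_le_zz h0).trans ?_
          have hsg := sig_pos h0
          have : exp (zz w s ^ 2 - sig s) ≤ (sig s ^ 2)⁻¹ := by
            have e : (sig s ^ 2)⁻¹ = exp (-(2 * Real.log (sig s))) := by
              rw [Real.exp_neg, two_mul, Real.exp_add, Real.exp_log hsg, sq]
            rw [e]
            exact Real.exp_le_exp.2 (by linarith [hle s hs])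
          have := m_pos h0
          gcongr
      _ ≤ ∫⁻ s in Ioi A, ENNReal.ofReal (exp aa) * ENNReal.ofReal ((sig s ^ 2)⁻¹ * (1 / m s ^ 2)) :=
          lintegral_mono_set hB
      _ = ENNReal.ofReal (exp aa) * ∫⁻ s in Ioi A, ENNReal.ofReal ((sig s ^ 2)⁻¹ * (1 / m s ^ 2)) :=
          lintegral_const_mul' _ _ ENNReal.ofReal_ne_top
      _ ≤ ENNReal.ofReal (exp aa) * ENNReal.ofReal (1 / A) := by gcongr; exact lintegral_sig_le hA0
      _ = _ := by rw [ENNReal.ofReal_mul (exp_pos _).le]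
  have hcc : ccC A = exp aa * (1 / A) + exp aa * (exp 1 * (1 / (1 - 2 * (Real.log A / A)))) := by
    unfold ccC; ring
  have hnn : 0 ≤ exp aa * (exp 1 * (1 / (1 - 2 * (Real.log A / A)))) := by positivity
  by_cases hne : ∃ s, A ≤ s ∧ sig s - 2 * Real.log (sig s) ≤ zz w s ^ 2
  swap
  · push Not at hne
    refine (hreg (Ioi A) measurableSet_Ioi le_rfl fun s hs => (hne s (le_of_lt hs)).le).trans ?_
    exact ENNReal.ofReal_le_ofReal (by linarith)
  set C := {s | s ∈ Ici A ∧ zz w s ^ 2 - (sig s - 2 * Real.log (sig s)) ∈ Ici 0} with hC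
  have hCc : IsClosed C := by
    refine ContinuousOn.preimage_isClosed_of_isClosed
      (f := fun s => zz w s ^ 2 - (sig s - 2 * Real.log (sig s))) ?_ isClosed_Ici isClosed_Ici
    intro s hs
    have h0 : 0 < s := hA0.trans_le hs
    have c1 := (hw.hasDerivAt_zz h0).continuousAt
    have c2 := (hasDerivAt_sig h0).continuousAt
    exact ((c1.pow 2).sub (c2.sub (continuousAt_const.mul
      (c2.log (sig_pos h0).ne')))).continuousWithinAt
  have hCn : C.Nonempty := by
    obtain ⟨s, h1, h2⟩ := hne
    exact ⟨s, h1, by simpa using h2⟩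
  have hCb : BddBelow C := ⟨A, fun s hs => hs.1⟩
  set a := sInf C with ha
  have haC : a ∈ C := hCc.csInf_mem hCn hCb
  have haA : A ≤ a := haC.1
  have ha0 : 0 < a := hA0.trans_le haA
  have hza : sig a - 2 * Real.log (sig a) ≤ zz w a ^ 2 := by simpa using haC.2
  have hsa := sig_pos ha0
  have hzs : (1 - 2 * (Real.log A / A)) * sig a ≤ zz w a ^ 2 := by
    refine le_trans ?_ hza
    have := mul_le_mul_of_nonneg_right (hκ' a haA) hsa.le
    refine this.trans (le_of_eq ?_)
    field_simp
  have hz0 : 0 < zz w a ^ 2 := lt_of_lt_of_le (by positivity) hzs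
  have hcc2 := carleson_chang (z := zz w) (σ := sig) (e := en w) (a := a) (δ := 1 - en w a)
    (fun u hu => hw.hasDerivAt_zz (ha0.trans_le hu)) (fun u hu => hasDerivAt_sig (ha0.trans_le hu))
    (fun u _ => hw.hasDerivAt_en u)
    (fun u hu => by have := m_pos (ha0.trans_le hu); positivity)
    (m_inv_continuousOn.mono fun s hs => ha0.trans_le hs) hsa
    (fun u _ => by rw [div_pow, en1]; apply le_of_eq; ring)
    (by rintro h0; rw [h0] at hz0; simp at hz0)
    (fun u hu => by linarith [hw.en_le u])
    (by have := hw.zz_sq_le ha0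
        rw [mul_comm] at this
        have : zz w a ^ 2 / sig a ≤ en w a := by rwa [div_le_iff₀ hsa]
        linarith)
  have htail : ∫⁻ s in Ioi a, ENNReal.ofReal (exp (w s ^ 2 - s)) ≤
      ENNReal.ofReal (exp aa * (exp 1 * (1 / (1 - 2 * (Real.log A / A))))) := by
    calc ∫⁻ s in Ioi a, ENNReal.ofReal (exp (w s ^ 2 - s))
        ≤ ∫⁻ s in Ioi a, ENNReal.ofReal (exp aa) *
            ENNReal.ofReal (exp (zz w s ^ 2 - sig s) * (1 / m s ^ 2)) := by
          refine setLIntegral_mono' measurableSet_Ioi fun s hs => ?_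
          rw [← ENNReal.ofReal_mul (exp_pos _).le]
          exact ENNReal.ofReal_le_ofReal (exp_le_zz (ha0.trans hs))
      _ = ENNReal.ofReal (exp aa) * ∫⁻ s in Ioi a,
            ENNReal.ofReal (exp (zz w s ^ 2 - sig s) * (1 / m s ^ 2)) :=
          lintegral_const_mul' _ _ ENNReal.ofReal_ne_top
      _ ≤ ENNReal.ofReal (exp aa) * ENNReal.ofReal (exp 1 * (sig a / zz w a ^ 2)) := by
          gcongr
      _ = ENNReal.ofReal (exp aa * (exp 1 * (sig a / zz w a ^ 2))) := by
          rw [ENNReal.ofReal_mul (exp_pos aa).le]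
      _ ≤ _ := by
          refine ENNReal.ofReal_le_ofReal ?_
          have : sig a / zz w a ^ 2 ≤ 1 / (1 - 2 * (Real.log A / A)) := by
            rw [div_le_div_iff₀ hz0 hκ]; linarith
          gcongr
  have hbefore := hreg (Ioo A a) measurableSet_Ioo (fun s hs => hs.1) (fun s hs => by
    have : s ∉ C := fun hs' => absurd (csInf_le hCb hs') (not_le.2 hs.2)
    by_contra hcon
    push Not at hcon
    exact this ⟨hs.1.le, by simpa using hcon.le⟩)
  have e1 : ∫⁻ s in Ioi A, ENNReal.ofReal (exp (w s ^ 2 - s)) ≤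
      ∫⁻ s in Ioo A a ∪ Ici a, ENNReal.ofReal (exp (w s ^ 2 - s)) := by
    refine lintegral_mono_set fun s hs => ?_
    rcases lt_or_ge s a with h1 | h1
    · exact Or.inl ⟨hs, h1⟩
    · exact Or.inr h1
  refine e1.trans ((lintegral_union_le _ _ _).trans ?_)
  rw [hcc, ENNReal.ofReal_add (by positivity) hnn, setLIntegral_congr Ioi_ae_eq_Ici.symm]
  exact add_le_add hbefore htail

lemma J_split (w : ℝ → ℝ) {A : ℝ} (hA : 0 ≤ A) :
    J w = (∫⁻ s in Ioc 0 A, ENNReal.ofReal (exp (w s ^ 2 - s))) +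
      ∫⁻ s in Ioi A, ENNReal.ofReal (exp (w s ^ 2 - s)) := by
  unfold J
  rw [← Ioc_union_Ioi_eq_Ioi hA, lintegral_union measurableSet_Ioi]
  rw [Set.disjoint_left]
  intro s h1 h2
  exact absurd h1.2 (not_le.2 h2)

lemma IsW.exp_le (w : ℝ → ℝ) (hw : IsW w) (hh : h w ≤ 1) {A s : ℝ} (hs : s ∈ Ioc 0 A) :
    exp (w s ^ 2 - s) ≤ exp (sig A) := by
  refine Real.exp_le_exp.2 ?_
  have := w_sq_le_zz (w := w) hs.1
  have := hw.sq_le hh hs.1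
  have := sig_mono hs.1.le hs.2
  linarith [hs.1]

/-- The supremum of `J` over profiles of Hardy energy at most one. -/
def SS : ENNReal := ⨆ (w : ℝ → ℝ) (_ : IsW w) (_ : h w ≤ 1), J w

lemma le_SS {w : ℝ → ℝ} (hw : IsW w) (hh : h w ≤ 1) : J w ≤ SS :=
  le_iSup₂_of_le w hw (le_iSup_of_le hh le_rfl)

lemma SS_lt_top : SS < ⊤ := by
  have : SS ≤ ENNReal.ofReal (exp (sig 16)) * ENNReal.ofReal 16 + ENNReal.ofReal (ccC 16) := by
    refine iSup_le fun w => iSup_le fun hw => iSup_le fun hh => ?_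
    rw [J_split w (show (0:ℝ) ≤ 16 by norm_num)]
    refine add_le_add ?_ (tail_le hw hh le_rfl)
    refine (setLIntegral_mono' measurableSet_Ioc fun s hs =>
      ENNReal.ofReal_le_ofReal (IsW.exp_le w hw hh hs)).trans ?_
    rw [lintegral_const]
    simp
  refine this.trans_lt ?_
  exact ENNReal.add_lt_top.2 ⟨ENNReal.mul_lt_top ENNReal.ofReal_lt_top ENNReal.ofReal_lt_top,
    ENNReal.ofReal_lt_top⟩

lemma ccC_tendsto : Tendsto ccC atTop (𝓝 (exp (1 + aa))) := by
  have h1 : Tendsto (fun A : ℝ => 1 / A) atTop (𝓝 0) := by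
    simpa using tendsto_inv_atTop_zero (𝕜 := ℝ)
  have h2 : Tendsto (fun A : ℝ => Real.log A / A) atTop (𝓝 0) :=
    Real.isLittleO_log_id_atTop.tendsto_div_nhds_zero
  have h3 := (h1.add (((tendsto_const_nhds (x := (1:ℝ))).div ((h2.const_mul 2).const_sub 1)
    (by norm_num)).const_mul (exp 1))).const_mul (exp aa)
  have e : exp aa * (0 + exp 1 * (1 / (1 - 2 * 0))) = exp (1 + aa) := by
    rw [add_comm, Real.exp_add]; simp [mul_comm]
  rw [e] at h3
  exact h3

/-- Concentrating sequences stay below the Carleson–Chang level `1 + e^{1 + aa}`. -/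
lemma concentration {w : ℕ → ℝ → ℝ} (hw : ∀ n, IsW (w n)) (hh : ∀ n, h (w n) ≤ 1)
    (h0 : ∀ s, 0 < s → Tendsto (fun n => w n s) atTop (𝓝 0)) {L : ENNReal}
    (hL : Tendsto (fun n => J (w n)) atTop (𝓝 L)) : L ≤ ENNReal.ofReal (1 + exp (1 + aa)) := by
  have key : ∀ A, 16 ≤ A → L ≤ ENNReal.ofReal (1 + ccC A) := by
    intro A hA
    have hA0 : 0 ≤ A := by linarith
    have hlim : Tendsto (fun n => ∫⁻ s in Ioc 0 A, ENNReal.ofReal (exp (w n s ^ 2 - s))) atTop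
        (𝓝 (∫⁻ s in Ioc 0 A, ENNReal.ofReal (exp (0 ^ 2 - s)))) := by
      refine tendsto_lintegral_of_dominated_convergence (fun _ => ENNReal.ofReal (exp (sig A)))
        (fun n => ?_) (fun n => ?_) ?_ ?_
      · have := (hw n).1.continuous
        exact (ENNReal.continuous_ofReal.comp (by fun_prop)).measurable
      · filter_upwards [ae_restrict_mem measurableSet_Ioc] with s hs
        exact ENNReal.ofReal_le_ofReal (IsW.exp_le _ (hw n) (hh n) hs)
      · rw [lintegral_const]
        simp [ENNReal.mul_eq_top]
      · filter_upwards [ae_restrict_mem measurableSet_Ioc] with s hs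
        exact (ENNReal.continuous_ofReal.tendsto _).comp
          ((Real.continuous_exp.tendsto _).comp (((h0 s hs.1).pow 2).sub_const s))
    have hI : ∫⁻ s in Ioc 0 A, ENNReal.ofReal (exp (0 ^ 2 - s)) ≤ ENNReal.ofReal 1 := by
      calc ∫⁻ s in Ioc 0 A, ENNReal.ofReal (exp (0 ^ 2 - s))
          ≤ ∫⁻ s in Ioi 0, ENNReal.ofReal (exp (0 ^ 2 - s)) := lintegral_mono_set Ioc_subset_Ioi_self
        _ = ENNReal.ofReal (∫ s in Ioi 0, exp (-s)) := by
          rw [ofReal_integral_eq_lintegral_ofReal (integrableOn_exp_neg_Ioi 0)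
            (Eventually.of_forall fun s => (exp_pos _).le)]
          simp
        _ ≤ _ := by rw [integral_exp_neg_Ioi]; simp
    have hκ : 0 < 1 - 2 * (Real.log A / A) := by linarith [log_div_lt hA]
    have hcc : 0 ≤ ccC A := by unfold ccC; positivity
    have hup := hlim.add_const (ENNReal.ofReal (ccC A))
    have := le_of_tendsto_of_tendsto' hL hup fun n => by
      rw [J_split (w n) hA0]
      exact add_le_add le_rfl (tail_le (hw n) (hh n) hA)
    refine this.trans ?_
    rw [ENNReal.ofReal_add zero_le_one hcc]
    exact add_le_add hI le_rfl
  refine ge_of_tendsto ((ENNReal.continuous_ofReal.tendsto _).comp (ccC_tendsto.const_add 1)) ?_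
  filter_upwards [eventually_ge_atTop 16] with A hA
  exact key A hA

/-- Along a sequence with nonzero limit there is no concentration, and `J` converges. -/
lemma nonconcentration {w : ℕ → ℝ → ℝ} {f : ℝ → ℝ} (hw : ∀ n, IsW (w n)) (hh : ∀ n, h (w n) ≤ 1)
    (h0 : ∀ s, 0 < s → Tendsto (fun n => w n s) atTop (𝓝 (f s))) {s1 : ℝ} (hs1 : 0 < s1)
    (hf : f s1 ≠ 0) : Tendsto (fun n => J (w n)) atTop (𝓝 (J f)) := by
  set c := f s1 ^ 2 / 2 with hc
  have hcpos : 0 < c := by positivity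
  have hsg := sig_pos hs1
  set δ := c / sig s1 with hδ
  have hδ0 : 0 < δ := by positivity
  have hev : ∀ᶠ n in atTop, δ ≤ en (w n) s1 := by
    have : ∀ᶠ n in atTop, c < (w n s1) ^ 2 :=
      ((h0 s1 hs1).pow 2).eventually (lt_mem_nhds (by rw [hc]; linarith [show 0 < f s1 ^ 2 by positivity]))
    filter_upwards [this] with n hn
    have h1 := (hw n).zz_sq_le hs1
    have h2 := w_sq_le_zz (w := w n) hs1
    rw [hδ, div_le_iff₀ hsg]
    linarith
  set C := sig s1 * (1 + 1 / δ) + aa + δ ^ 2 * s1 with hC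
  have hbd : ∀ᶠ n in atTop, ∀ᵐ s ∂(volume.restrict (Ioi 0)),
      ENNReal.ofReal (exp (w n s ^ 2 - s)) ≤ ENNReal.ofReal (exp C * exp (-δ ^ 2 * s)) := by
    filter_upwards [hev] with n hn
    filter_upwards [ae_restrict_mem measurableSet_Ioi] with s hs
    have hs0 : 0 < s := hs
    refine ENNReal.ofReal_le_ofReal ?_
    rw [← Real.exp_add]
    refine Real.exp_le_exp.2 ?_
    have hz := w_sq_le_zz (w := w n) hs0
    have haa := aa_nonneg
    have hq : 0 < sig s1 * (1 / δ) := by positivity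
    rcases le_or_gt s s1 with h1 | h1
    · have h2 := (hw n).sq_le (hh n) hs0
      have h3 := sig_mono hs0.le h1
      have h4 : δ ^ 2 * s ≤ δ ^ 2 * s1 := by gcongr
      rw [hC]
      nlinarith
    · have h2 := (hw n).sq_le (hh n) hs1
      have h3 := (hw n).zz_incr hs1 h1.le
      have h4 := (hw n).en_le s
      have h5 := sig_mono hs1.le h1.le
      have h6 := sig_le hs0.le
      have hδ1 : δ ≤ 1 := by linarith [(hw n).en_le s1, hh n]
      set p := zz (w n) s1
      set q := zz (w n) s - p with hq'
      have e : zz (w n) s = p + q := by rw [hq']; ring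
      have h7 : q ^ 2 ≤ (1 - δ) * sig s := by
        refine h3.trans ?_
        have : (sig s - sig s1) * (en (w n) s - en (w n) s1) ≤ sig s * (1 - δ) := by
          apply mul_le_mul
          · linarith
          · linarith [hh n]
          · have := (hw n).en_mono h1.le; linarith
          · linarith
        linarith
      have h8 : (p + q) ^ 2 ≤ (1 + 1 / δ) * p ^ 2 + (1 + δ) * q ^ 2 := by
        have : 0 ≤ (p - δ * q) ^ 2 / δ := by positivity
        have e2 : (p - δ * q) ^ 2 / δ = (1 / δ) * p ^ 2 - 2 * p * q + δ * q ^ 2 := by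
          field_simp; ring
        rw [e2] at this
        nlinarith
      have h9 : (1 + 1 / δ) * p ^ 2 ≤ (1 + 1 / δ) * sig s1 := by
        have : 0 ≤ 1 + 1 / δ := by positivity
        gcongr
      have h10 : (1 + δ) * q ^ 2 ≤ (1 - δ ^ 2) * (s + aa) := by
        have h11 : (1 + δ) * q ^ 2 ≤ (1 + δ) * ((1 - δ) * sig s) := by gcongr
        have h12 : (1 + δ) * ((1 - δ) * sig s) ≤ (1 + δ) * ((1 - δ) * (s + aa)) := by
          have : 0 ≤ 1 - δ := by linarith
          gcongr
        nlinarith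
      rw [e] at hz
      rw [hC]
      have h13 : 0 ≤ δ ^ 2 * s1 := by positivity
      have h14 : 0 ≤ δ ^ 2 * aa := by positivity
      nlinarith
  unfold J
  refine tendsto_lintegral_filter_of_dominated_convergence
    (fun s => ENNReal.ofReal (exp C * exp (-δ ^ 2 * s))) (Eventually.of_forall fun n => ?_) hbd ?_ ?_
  · have := (hw n).1.continuous
    exact (ENNReal.continuous_ofReal.comp (by fun_prop)).measurable
  · have hi : IntegrableOn (fun s => exp C * exp (-δ ^ 2 * s)) (Ioi 0) :=
      (exp_neg_integrableOn_Ioi 0 (by positivity : 0 < δ ^ 2)).const_mul _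
    rw [← ofReal_integral_eq_lintegral_ofReal hi (Eventually.of_forall fun s => by positivity)]
    exact ENNReal.ofReal_ne_top
  · filter_upwards [ae_restrict_mem measurableSet_Ioi] with s hs
    exact (ENNReal.continuous_ofReal.tendsto _).comp
      ((Real.continuous_exp.tendsto _).comp (((h0 s hs).pow 2).sub_const s))

/-! ### Approximation by smooth profiles -/

/-- Density of smooth compactly supported functions in `L²`, with control of the support near zero. -/
lemma exists_smooth_approx {g : ℝ → ℝ} (hg : MemLp g 2) {s0 : ℝ} (hs0 : 0 < s0)
    (hz : ∀ s ≤ s0, g s = 0) {ε : ℝ} (hε : 0 < ε) :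
    ∃ φ : ℝ → ℝ, ContDiff ℝ (⊤ : ℕ∞) φ ∧ HasCompactSupport φ ∧ (∀ s ≤ s0 / 2, φ s = 0) ∧
      ∫ s, (φ s - g s) ^ 2 ≤ ε := by
  obtain ⟨ψ, h1, h2, h3⟩ := hg.exist_eLpNorm_sub_le (by simp) (by norm_num) (Real.sqrt_pos.2 hε)
  set χ : ℝ → ℝ := fun s => Real.smoothTransition (2 / s0 * s - 1) with hχ
  have hψ : MemLp ψ 2 := h2.continuous.memLp_of_hasCompactSupport h1
  have hχc : ContDiff ℝ (⊤ : ℕ∞) χ := Real.smoothTransition.contDiff.comp (by fun_prop)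
  have hcc : HasCompactSupport (fun s => χ s * ψ s) := h1.mul_left
  have hφ : MemLp (fun s => χ s * ψ s) 2 :=
    (hχc.mul h2).continuous.memLp_of_hasCompactSupport hcc
  refine ⟨fun s => χ s * ψ s, hχc.mul h2, hcc, fun s hs => ?_, ?_⟩
  · have : χ s = 0 := Real.smoothTransition.zero_of_nonpos (by
      have : 2 / s0 * s ≤ 2 / s0 * (s0 / 2) := by gcongr
      have e : 2 / s0 * (s0 / 2) = 1 := by field_simp
      linarith)
    simp [this]
  · have hsq : ∫ s, (g s - ψ s) ^ 2 ≤ ε := by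
      have hm := (hg.sub hψ)
      have e := hm.eLpNorm_eq_integral_rpow_norm (by simp) (by simp)
      have e2 : ∫ s, ‖(g - ψ) s‖ ^ (ENNReal.toReal 2) = ∫ s, (g s - ψ s) ^ 2 := by
        congr 1; ext s; simp
      rw [e2] at e
      have hnn : 0 ≤ ∫ s, (g s - ψ s) ^ 2 := integral_nonneg fun s => sq_nonneg _
      rw [e, ENNReal.ofReal_le_ofReal_iff (Real.sqrt_nonneg _)] at h3
      have h4 : (∫ s, (g s - ψ s) ^ 2) ^ (ENNReal.toReal 2)⁻¹ = √(∫ s, (g s - ψ s) ^ 2) := by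
        rw [Real.sqrt_eq_rpow]; norm_num
      rw [h4] at h3
      exact (Real.sqrt_le_sqrt_iff hε.le).1 h3
    refine le_trans ?_ hsq
    refine integral_mono (hφ.sub hg).integrable_sq (hg.sub hψ).integrable_sq fun s => ?_
    simp only
    rcases le_or_gt s s0 with h | h
    · rw [hz s h]
      have a1 := Real.smoothTransition.nonneg (2 / s0 * s - 1)
      have a2 := Real.smoothTransition.le_one (2 / s0 * s - 1)
      have : χ s ^ 2 ≤ 1 := by simp only [hχ]; nlinarith
      nlinarith [sq_nonneg (ψ s)]
    · have : χ s = 1 := Real.smoothTransition.one_of_one_le (by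
        have : 2 / s0 * s0 ≤ 2 / s0 * s := by gcongr
        have e : 2 / s0 * s0 = 2 := by field_simp
        linarith)
      rw [this]; apply le_of_eq; ring

lemma isW_primitive {φ : ℝ → ℝ} (h1 : ContDiff ℝ (⊤ : ℕ∞) φ) (h2 : HasCompactSupport φ) {s0 : ℝ}
    (hs0 : 0 < s0) (hz : ∀ s ≤ s0, φ s = 0) :
    IsW (fun s => ∫ t in (0)..s, φ t) ∧ deriv (fun s => ∫ t in (0)..s, φ t) = φ := by
  have hd : ∀ s, HasDerivAt (fun s => ∫ t in (0)..s, φ t) (φ s) s := fun s =>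
    intervalIntegral.integral_hasDerivAt_right (h1.continuous.intervalIntegrable _ _)
      (h1.continuous.stronglyMeasurableAtFilter _ _) h1.continuous.continuousAt
  have hd' : deriv (fun s => ∫ t in (0)..s, φ t) = φ := funext fun s => (hd s).deriv
  refine ⟨⟨?_, ⟨s0, hs0, fun s hs => ?_⟩, ?_⟩, hd'⟩
  · rw [contDiff_infty_iff_deriv, hd']
    exact ⟨fun s => (hd s).differentiableAt, h1⟩
  · show (∫ t in (0)..s, φ t) = 0
    rw [intervalIntegral.integral_congr (g := fun _ => (0:ℝ))]
    · simp
    · intro t ht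
      exact hz t (ht.2.trans (max_le hs0.le hs))
  · obtain ⟨R, hR⟩ := h2.isCompact.isBounded.subset_closedBall 0
    refine ⟨R + 1, fun s hs => ?_⟩
    show (∫ t in (0)..s, φ t) = ∫ t in (0)..(R + 1), φ t
    rw [← intervalIntegral.integral_add_adjacent_intervals
      (h1.continuous.intervalIntegrable 0 (R + 1)) (h1.continuous.intervalIntegrable (R + 1) s)]
    rw [intervalIntegral.integral_congr (a := R + 1) (b := s) (g := fun _ => (0:ℝ))]
    · simp
    · intro t ht
      rw [uIcc_of_le hs] at ht
      by_contra hne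
      have := hR (subset_tsupport _ (Function.mem_support.2 hne))
      simp at this
      linarith [le_abs_self t, ht.1]

lemma h_smul (c : ℝ) (w : ℝ → ℝ) : h (fun s => c * w s) = c ^ 2 * h w := by
  unfold h
  have e1 : ∀ s, deriv (fun s => c * w s) s ^ 2 = c ^ 2 * deriv w s ^ 2 := fun s => by
    rw [deriv_const_mul_field]; ring
  have e2 : ∀ s, V s * (c * w s) ^ 2 = c ^ 2 * (V s * w s ^ 2) := fun s => by ring
  simp only [e1, e2, integral_const_mul]
  ring

lemma IsW.smul {w : ℝ → ℝ} (hw : IsW w) (c : ℝ) : IsW (fun s => c * w s) := by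
  obtain ⟨h1, ⟨s0, h0, h2⟩, ⟨s1, h3⟩⟩ := hw
  refine ⟨contDiff_const.mul h1, ⟨s0, h0, fun s hs => by simp only [h2 s hs, mul_zero]⟩,
    ⟨s1, fun s hs => ?_⟩⟩
  simp only [h3 s hs]

/-- Fatou's lemma for `J`. -/
lemma J_le_of_tendsto {w : ℕ → ℝ → ℝ} {f : ℝ → ℝ} (hw : ∀ n, Measurable (w n))
    (h0 : ∀ s, 0 < s → Tendsto (fun n => w n s) atTop (𝓝 (f s))) {L : ENNReal}
    (hL : ∀ᶠ n in atTop, J (w n) ≤ L) : J f ≤ L := by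
  have h1 : J f ≤ liminf (fun n => J (w n)) atTop := by
    unfold J
    refine le_trans (le_of_eq ?_) (lintegral_liminf_le fun n => ?_)
    · refine setLIntegral_congr_fun measurableSet_Ioi fun s hs => ?_
      symm
      exact Tendsto.liminf_eq ((ENNReal.continuous_ofReal.tendsto _).comp
        ((Real.continuous_exp.tendsto _).comp (((h0 s hs).pow 2).sub_const s)))
    · have := hw n
      fun_prop
  refine h1.trans ?_
  exact liminf_le_of_frequently_le' hL.frequently

/-- Primitives of functions close in `L²` are close at every point; the weight `c` of the
arithmetic–geometric mean inequality is left free. -/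
lemma abs_primitive_sub_le {φ g : ℝ → ℝ} (hφ : MemLp φ 2) (hg : MemLp g 2)
    {s c : ℝ} (hs : 0 ≤ s) (hc : 0 < c) :
    |(∫ t in (0)..s, φ t) - ∫ t in (0)..s, g t| ≤ c / 2 * (∫ t, (φ t - g t) ^ 2) + s / (2 * c) := by
  have i1 : ∀ {k : ℝ → ℝ}, MemLp k 2 → IntervalIntegrable k volume 0 s := fun {k} hk => by
    rw [intervalIntegrable_iff_integrableOn_Ioc_of_le hs]
    exact (hk.restrict (Ioc 0 s)).integrable (by norm_num)
  have hsq := (hφ.sub hg).integrable_sq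
  simp only [Pi.sub_apply] at hsq
  rw [← intervalIntegral.integral_sub (i1 hφ) (i1 hg), intervalIntegral.integral_of_le hs]
  calc |∫ t in Ioc 0 s, (φ t - g t)| ≤ ∫ t in Ioc 0 s, |φ t - g t| := abs_integral_le_integral_abs
    _ ≤ ∫ t in Ioc 0 s, (c / 2 * (φ t - g t) ^ 2 + 1 / (2 * c)) := by
        refine integral_mono ?_ ?_ fun t => ?_
        · have := (i1 (hφ.sub hg))
          rw [intervalIntegrable_iff_integrableOn_Ioc_of_le hs] at this
          exact this.abs
        · exact (hsq.integrableOn.const_mul _).add (integrable_const _)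
        · simp only
          have : 0 ≤ (c * |φ t - g t| - 1) ^ 2 / (2 * c) := by positivity
          have e : (c * |φ t - g t| - 1) ^ 2 / (2 * c) =
            c / 2 * |φ t - g t| ^ 2 + 1 / (2 * c) - |φ t - g t| := by field_simp; ring
          rw [e, sq_abs] at this
          linarith
    _ = c / 2 * (∫ t in Ioc 0 s, (φ t - g t) ^ 2) + s / (2 * c) := by
        rw [integral_add (hsq.integrableOn.const_mul _) (integrable_const _), integral_const_mul]
        simp [hs]
        field_simp
    _ ≤ _ := by
        have := setIntegral_le_integral (s := Ioc 0 s) hsq (Eventually.of_forall fun t => sq_nonneg _)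
        gcongr

/-- Profiles with square integrable derivative that vanish near `0` and have Hardy energy at most one
satisfy the same bound as smooth ones. -/
lemma approx {g f : ℝ → ℝ} (hg : MemLp g 2) {s0 : ℝ} (hs0 : 0 < s0) (hz : ∀ s ≤ s0, g s = 0)
    (hf : ∀ s, f s = ∫ t in (0)..s, g t)
    (hle : ENNReal.ofReal (∫ s, g s ^ 2) ≤ 1 + ∫⁻ s in Ioi 0, ENNReal.ofReal (V s * f s ^ 2)) :
    J f ≤ SS := by
  have hex : ∀ n : ℕ, ∃ φ : ℝ → ℝ, ContDiff ℝ (⊤ : ℕ∞) φ ∧ HasCompactSupport φ ∧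
      (∀ s ≤ s0 / 2, φ s = 0) ∧ ∫ s, (φ s - g s) ^ 2 ≤ 1 / ((n : ℝ) + 1) := fun n =>
    exists_smooth_approx hg hs0 hz (by positivity)
  choose φ h1 h2 h3 h4 using hex
  have hφ : ∀ n, MemLp (φ n) 2 := fun n => (h1 n).continuous.memLp_of_hasCompactSupport (h2 n)
  set w : ℕ → ℝ → ℝ := fun n s => ∫ t in (0)..s, φ n t with hw
  have hW : ∀ n, IsW (w n) := fun n => (isW_primitive (h1 n) (h2 n) (by positivity) (h3 n)).1
  have hWd : ∀ n, deriv (w n) = φ n :=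
    fun n => (isW_primitive (h1 n) (h2 n) (half_pos hs0) (h3 n)).2
  have hr : Tendsto (fun n => ∫ s, (φ n s - g s) ^ 2) atTop (𝓝 0) :=
    squeeze_zero (fun n => integral_nonneg fun s => sq_nonneg _) h4
      tendsto_one_div_add_atTop_nhds_zero_nat
  have hpt : ∀ s, 0 ≤ s → Tendsto (fun n => w n s) atTop (𝓝 (f s)) := by
    intro s hs
    rw [Metric.tendsto_atTop']
    intro ε hε
    set c := (s + 1) / ε with hc
    have hc0 : 0 < c := by positivity
    have hlim : ∀ᶠ n in atTop, c / 2 * (∫ t, (φ n t - g t) ^ 2) < ε / 2 := by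
      have := hr.const_mul (c / 2)
      rw [mul_zero] at this
      exact this.eventually (gt_mem_nhds (by positivity))
    obtain ⟨N, hN⟩ := eventually_atTop.1 hlim
    refine ⟨N, fun n hn => ?_⟩
    rw [Real.dist_eq, hf s]
    refine (abs_primitive_sub_le (hφ n) hg hs hc0).trans_lt ?_
    have e : s / (2 * c) ≤ ε / 2 := by
      rw [hc, div_le_div_iff₀ (by positivity) (by norm_num)]
      have : ε * (2 * ((s + 1) / ε)) = 2 * (s + 1) := by field_simp
      linarith
    linarith [hN n hn.le]
  set A := ∫ s, g s ^ 2 with hA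
  have hA0 : 0 ≤ A := integral_nonneg fun s => sq_nonneg _
  set AA : ℕ → ℝ := fun n => ∫ s in Ioi 0, deriv (w n) s ^ 2
  set BB : ℕ → ℝ := fun n => ∫ s in Ioi 0, V s * w n s ^ 2
  have hhn : ∀ n, h (w n) = AA n - BB n := fun n => rfl
  have hAle : ∀ c : ℝ, 0 < c → ∀ n, AA n ≤ (1 + c) * A + (1 + 1 / c) * ∫ s, (φ n s - g s) ^ 2 := by
    intro c hc n
    have i1 := (hφ n).integrable_sq
    have i2 := hg.integrable_sq
    have i3 := ((hφ n).sub hg).integrable_sq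
    simp only [Pi.sub_apply] at i3
    calc AA n ≤ ∫ s, φ n s ^ 2 := by
          simp only [AA, hWd]
          exact setIntegral_le_integral i1 (Eventually.of_forall fun s => sq_nonneg _)
      _ ≤ ∫ s, ((1 + c) * g s ^ 2 + (1 + 1 / c) * (φ n s - g s) ^ 2) := by
          refine integral_mono i1 ((i2.const_mul _).add (i3.const_mul _)) fun s => ?_
          simp only
          have : 0 ≤ (c * g s - (φ n s - g s)) ^ 2 / c := by positivity
          have e : (c * g s - (φ n s - g s)) ^ 2 / c =
            (1 + c) * g s ^ 2 + (1 + 1 / c) * (φ n s - g s) ^ 2 - φ n s ^ 2 := by field_simp; ring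
          rw [e] at this; linarith
      _ = _ := by
          rw [integral_add (i2.const_mul _) (i3.const_mul _), integral_const_mul, integral_const_mul]
  have hAev : ∀ ε > 0, ∀ᶠ n in atTop, AA n ≤ A + ε := by
    intro ε hε
    set c := ε / (2 * (A + 1)) with hc
    have hc0 : 0 < c := by positivity
    have := hr.const_mul (1 + 1 / c)
    rw [mul_zero] at this
    filter_upwards [this.eventually (gt_mem_nhds (half_pos hε))] with n hn
    have h5 := hAle c hc0 n
    have h6 : c * A ≤ ε / 2 := by
      rw [hc, div_mul_eq_mul_div, div_le_div_iff₀ (by positivity) (by norm_num)]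
      nlinarith
    linarith
  have hBof : ∀ n, ENNReal.ofReal (BB n) = ∫⁻ s in Ioi 0, ENNReal.ofReal (V s * w n s ^ 2) := fun n =>
    ofReal_integral_eq_lintegral_ofReal (hW n).V_integrable (by
      filter_upwards [ae_restrict_mem measurableSet_Ioi] with s hs
      have := V_pos (show 0 < s from hs)
      positivity)
  set B := ∫⁻ s in Ioi 0, ENNReal.ofReal (V s * f s ^ 2) with hB
  have hVm : Measurable V := by unfold V; fun_prop
  have hFat : B ≤ liminf (fun n => ENNReal.ofReal (BB n)) atTop := by
    simp only [hBof]
    refine le_trans (le_of_eq ?_) (lintegral_liminf_le fun n => ?_)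
    · refine setLIntegral_congr_fun measurableSet_Ioi fun s hs => ?_
      symm
      exact Tendsto.liminf_eq ((ENNReal.continuous_ofReal.tendsto _).comp
        (((hpt s (le_of_lt hs)).pow 2).const_mul (V s)))
    · have := (hW n).1.continuous.measurable
      fun_prop
  have hBA : ∀ n, BB n ≤ AA n := fun n => by have := (hW n).h_nonneg; rw [hhn] at this; linarith
  have hBtop : B ≠ ⊤ := by
    refine ne_top_of_le_ne_top (ENNReal.ofReal_ne_top (r := A + 1)) (hFat.trans ?_)
    refine liminf_le_of_frequently_le' (Eventually.frequently ?_)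
    filter_upwards [hAev 1 one_pos] with n hn
    exact ENNReal.ofReal_le_ofReal ((hBA n).trans hn)
  have hAB : A ≤ 1 + B.toReal := by
    have e : 1 + B = ENNReal.ofReal (1 + B.toReal) := by
      rw [ENNReal.ofReal_add zero_le_one ENNReal.toReal_nonneg, ENNReal.ofReal_toReal hBtop]; simp
    rw [e] at hle
    exact (ENNReal.ofReal_le_ofReal_iff (by positivity)).1 hle
  have hBev : ∀ ε > 0, ∀ᶠ n in atTop, B.toReal - ε ≤ BB n := by
    intro ε hε
    rcases le_or_gt (B.toReal - ε) 0 with hn | hn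
    · refine Eventually.of_forall fun n => hn.trans ?_
      exact setIntegral_nonneg measurableSet_Ioi fun s hs => by
        have := V_pos (show 0 < s from hs)
        positivity
    · have : ENNReal.ofReal (B.toReal - ε) < liminf (fun n => ENNReal.ofReal (BB n)) atTop := by
        refine lt_of_lt_of_le ?_ hFat
        rw [ENNReal.ofReal_lt_iff_lt_toReal hn.le hBtop]
        linarith
      filter_upwards [eventually_lt_of_lt_liminf this] with n hn2
      exact (ENNReal.ofReal_lt_ofReal_iff'.1 hn2).1.le
  have hhev : ∀ ε > 0, ∀ᶠ n in atTop, h (w n) ≤ 1 + ε := by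
    intro ε hε
    filter_upwards [hAev (ε / 2) (half_pos hε), hBev (ε / 2) (half_pos hε)] with n a1 a2
    rw [hhn]; linarith
  -- scale by `c < 1`, pass to the limit in `n`, and only then let `c → 1`
  have hcJ : ∀ c : ℝ, 0 < c → c < 1 → J (fun s => c * f s) ≤ SS := by
    intro c hc0 hc1
    refine J_le_of_tendsto (w := fun n s => c * w n s)
      (fun n => ((hW n).1.continuous.measurable).const_mul c)
      (fun s hs => (hpt s hs.le).const_mul c) ?_
    have hc2 : 0 < 1 / c ^ 2 - 1 := by
      rw [sub_pos, lt_div_iff₀ (by positivity)]; nlinarith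
    filter_upwards [hhev _ hc2] with n hn
    refine le_SS ((hW n).smul c) ?_
    rw [h_smul]
    calc c ^ 2 * h (w n) ≤ c ^ 2 * (1 + (1 / c ^ 2 - 1)) := by gcongr
      _ = 1 := by field_simp; ring
  have hfm : Measurable f := by
    have : f = fun s => ∫ t in (0)..s, g t := funext hf
    rw [this]
    have hi : ∀ a b, IntervalIntegrable g volume a b := fun a b => by
      rw [intervalIntegrable_iff, uIoc]
      exact (hg.restrict _).integrable (by norm_num)
    exact (intervalIntegral.continuous_primitive hi 0).measurable
  have hcn : Tendsto (fun n : ℕ => 1 - 1 / ((n : ℝ) + 2)) atTop (𝓝 1) := by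
    have : Tendsto (fun n : ℕ => 1 / ((n : ℝ) + 2)) atTop (𝓝 0) := by
      have := (tendsto_add_atTop_iff_nat 1).2 (tendsto_one_div_add_atTop_nhds_zero_nat (𝕜 := ℝ))
      refine this.congr fun n => ?_
      push_cast; ring_nf
    simpa using this.const_sub 1
  refine J_le_of_tendsto (w := fun n s => (1 - 1 / ((n : ℝ) + 2)) * f s)
    (fun n => hfm.const_mul _) (fun s _ => by simpa using hcn.mul_const (f s)) ?_
  refine Eventually.of_forall fun n => hcJ _ ?_ ?_
  · rw [sub_pos, div_lt_one (by positivity)]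
    have : (0:ℝ) ≤ n := n.cast_nonneg
    linarith
  · have : 0 < 1 / ((n : ℝ) + 2) := by positivity
    linarith

/-! ### Competitors in the time of the ground state -/

/-- Competitors of the form `m(s) ζ(σ(s) - σ(a))`: the Hardy energy becomes the Dirichlet energy
of `ζ`, here given through the primitive `E` of `ζ₁²`. -/
lemma profile_shift {ζ ζ1 E : ℝ → ℝ} {b K M : ℝ} (hζ : Continuous ζ) (hζ0 : ∀ t ≤ 0, ζ t = 0)
    (hM : ∀ t, |ζ t| ≤ M) (hm1 : Measurable ζ1) (hK : ∀ t, 0 < t → |ζ1 t| ≤ K * exp (-t))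
    (hE : Continuous E) (hE1 : ∀ t, 0 < t → E t - E 0 ≤ 1)
    (hd : ∀ t, 0 < t → t ≠ b → HasDerivAt ζ (ζ1 t) t)
    (hdE : ∀ t, 0 < t → t ≠ b → HasDerivAt E (ζ1 t ^ 2) t) {a : ℝ} (ha : 0 < a) :
    J (fun s => m s * ζ (sig s - sig a)) ≤ SS := by
  set τ : ℝ → ℝ := fun s => sig s - sig a with hτ
  have hτpos : ∀ s, a < s → 0 < τ s := fun s hs =>
    sub_pos.2 (sig_strictMono (mem_Ici.2 ha.le) (mem_Ici.2 (ha.le.trans hs.le)) hs)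
  set f : ℝ → ℝ := (Ioi a).indicator (fun s => m s * ζ (τ s)) with hfdef
  set g : ℝ → ℝ := (Ioi a).indicator (fun s => m1 s * ζ (τ s) + ζ1 (τ s) / m s) with hgdef
  have hf : ∀ s, a < s → f s = m s * ζ (τ s) := fun s hs => indicator_of_mem (mem_Ioi.2 hs) _
  have hg : ∀ s, a < s → g s = m1 s * ζ (τ s) + ζ1 (τ s) / m s :=
    fun s hs => indicator_of_mem (mem_Ioi.2 hs) _
  have hf0 : ∀ s, s ≤ a → f s = 0 := fun s hs => indicator_of_notMem (by simpa using hs) _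
  have hg0 : ∀ s, s ≤ a → g s = 0 := fun s hs => indicator_of_notMem (by simpa using hs) _
  have hf' : ∀ s, 0 < s → f s = m s * ζ (τ s) := fun s hs => by
    rcases le_or_gt s a with h | h
    · rw [hf0 s h, hζ0 _ (sub_nonpos.2 (sig_mono hs.le h)), mul_zero]
    · exact hf s h
  have hτc : ContinuousOn τ (Ioi 0) := ContinuousOn.sub (sig_continuousOn.mono Ioi_subset_Ici_self) continuousOn_const
  have hfc : ContinuousOn f (Ioi 0) :=
    (m_continuousOn.mul (hζ.comp_continuousOn hτc)).congr hf'
  have hfM : ∀ s, |f s| ≤ M := fun s => by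
    rcases le_or_gt s a with h | h
    · rw [hf0 s h, abs_zero]; exact (abs_nonneg _).trans (hM 0)
    · rw [hf s h, abs_mul, abs_of_pos (m_pos (ha.trans h))]
      have := m_le_one (ha.trans h)
      have := m_pos (ha.trans h)
      nlinarith [hM (τ s), abs_nonneg (ζ (τ s))]
  have hM0 : 0 ≤ M := (abs_nonneg _).trans (hM 0)
  have hK0 : 0 ≤ K := by
    have := (abs_nonneg _).trans (hK 1 one_pos)
    have h2 := exp_pos (-(1:ℝ))
    by_contra hc
    push Not at hc
    nlinarith
  have hya := exp_neg_lt_one ha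
  set D : ℝ := M / (2 * (1 - exp (-a))) + K * exp (sig a) / m a with hD
  have hgD : ∀ s, a < s → |g s| ≤ D * exp (-s) := fun s hs => by
    have hs0 := ha.trans hs
    rw [hg s hs]
    have hy := exp_neg_lt_one hs0
    have hle : exp (-s) ≤ exp (-a) := exp_le_exp.2 (by linarith)
    have b1 : m1 s ≤ exp (-s) / (2 * (1 - exp (-a))) := by
      calc m1 s ≤ exp (-s) / (2 * (1 - exp (-s))) * m s := m1_le hs0
        _ ≤ exp (-s) / (2 * (1 - exp (-s))) * 1 := by
            have := m_le_one hs0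
            have : 0 ≤ exp (-s) / (2 * (1 - exp (-s))) :=
              div_nonneg (exp_pos _).le (by linarith)
            gcongr
        _ ≤ exp (-s) / (2 * (1 - exp (-a))) := by
            rw [mul_one]
            have : 0 < 1 - exp (-a) := by linarith
            gcongr
    have b2 : |ζ1 (τ s)| ≤ K * (exp (sig a) * exp (-s)) := by
      refine (hK _ (hτpos s hs)).trans ?_
      rw [← exp_add]
      have := sig_ge hs0.le
      have : exp (-τ s) ≤ exp (sig a + -s) := exp_le_exp.2 (by simp only [hτ]; linarith)
      gcongr
    have hma := m_pos ha
    have hms : m a ≤ m s := m_mono ha hs0 hs.le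
    calc |m1 s * ζ (τ s) + ζ1 (τ s) / m s| ≤ |m1 s * ζ (τ s)| + |ζ1 (τ s) / m s| := abs_add_le _ _
      _ = m1 s * |ζ (τ s)| + |ζ1 (τ s)| / m s := by
          rw [abs_mul, abs_div, abs_of_nonneg (m1_nonneg hs0), abs_of_pos (m_pos hs0)]
      _ ≤ exp (-s) / (2 * (1 - exp (-a))) * M + K * (exp (sig a) * exp (-s)) / m a := by
          have := hM (τ s)
          have : 0 ≤ exp (-s) / (2 * (1 - exp (-a))) := div_nonneg (exp_pos _).le (by linarith)
          gcongr
      _ = D * exp (-s) := by rw [hD]; ring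
  have hgm : AEStronglyMeasurable g volume := by
    rw [hgdef, aestronglyMeasurable_indicator_iff measurableSet_Ioi]
    have hsub : Ioi a ⊆ Ioi 0 := Ioi_subset_Ioi ha.le
    have hτm : AEMeasurable τ (volume.restrict (Ioi a)) :=
      (hτc.mono hsub).aemeasurable measurableSet_Ioi
    have c1 : AEMeasurable (fun s => m1 s * ζ (τ s)) (volume.restrict (Ioi a)) :=
      ((m1_continuousOn.mono hsub).mul (hζ.comp_continuousOn (hτc.mono hsub))).aemeasurable
        measurableSet_Ioi
    exact (c1.add ((hm1.comp_aemeasurable hτm).div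
      ((m_continuousOn.mono hsub).aemeasurable measurableSet_Ioi))).aestronglyMeasurable
  have hg2 : Integrable (fun s => g s ^ 2) := by
    have i : Integrable ((Ioi a).indicator fun s => D ^ 2 * exp (-s)) :=
      IntegrableOn.integrable_indicator ((integrableOn_exp_neg_Ioi a).const_mul _)
        measurableSet_Ioi
    refine i.mono' (hgm.pow 2) (Eventually.of_forall fun s => ?_)
    rw [norm_pow, Real.norm_eq_abs]
    rcases le_or_gt s a with h | h
    · rw [hg0 s h, indicator_of_notMem (by simpa using h)]; simp
    · rw [indicator_of_mem (mem_Ioi.2 h)]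
      have e1 : exp (-s) ≤ 1 := (exp_neg_lt_one (ha.trans h)).le
      have := hgD s h
      calc |g s| ^ 2 ≤ (D * exp (-s)) ^ 2 := by gcongr
        _ = D ^ 2 * exp (-s) * exp (-s) := by ring
        _ ≤ D ^ 2 * exp (-s) * 1 := by gcongr
        _ = _ := mul_one _
  have hgL : MemLp g 2 := (memLp_two_iff_integrable_sq hgm).2 hg2
  have hgi : ∀ u v, IntervalIntegrable g volume u v := fun u v => by
    rw [intervalIntegrable_iff, uIoc]
    exact (hgL.restrict _).integrable (by norm_num)
  have hVi : IntegrableOn (fun s => V s * f s ^ 2) (Ioi 0) := by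
    have i : IntegrableOn (fun s => V s * f s ^ 2) (Ioi a) := by
      refine Integrable.mono' ((V_integrableOn ha).mul_const (M ^ 2)) ?_ ?_
      · exact ((V_continuousOn.mul (hfc.pow 2)).mono
          (Ioi_subset_Ioi ha.le)).aestronglyMeasurable measurableSet_Ioi
      · filter_upwards [ae_restrict_mem measurableSet_Ioi] with s hs
        have hs0 : 0 < s := ha.trans hs
        rw [norm_mul, norm_pow, Real.norm_eq_abs, Real.norm_eq_abs, abs_of_pos (V_pos hs0)]
        have := hfM s
        have := V_pos hs0
        gcongr
    have i0 : IntegrableOn (fun s => V s * f s ^ 2) (Ioc 0 a) := by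
      refine (integrableOn_zero).congr_fun (fun s hs => ?_) measurableSet_Ioc
      simp [hf0 s hs.2]
    rw [← Ioc_union_Ioi_eq_Ioi ha.le]
    exact i0.union i
  have hS : ({s | s ∈ Ioi 0 ∧ τ s = b} : Set ℝ).Countable := by
    refine Set.Subsingleton.countable fun x hx y hy => ?_
    refine sig_strictMono.injOn (mem_Ici.2 (le_of_lt hx.1)) (mem_Ici.2 (le_of_lt hy.1)) ?_
    have := hx.2.trans hy.2.symm
    simpa [hτ] using this
  have hτd : ∀ s, 0 < s → HasDerivAt τ (1 / m s ^ 2) s := fun s hs =>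
    (hasDerivAt_sig hs).sub_const _
  have hfd : ∀ s, a < s → τ s ≠ b → HasDerivAt f (g s) s := fun s hs hne => by
    have hs0 := ha.trans hs
    have h1 := (hasDerivAt_m hs0).mul ((hd _ (hτpos s hs) hne).comp s (hτd s hs0))
    refine (h1.congr_of_eventuallyEq ?_).congr_deriv ?_
    · filter_upwards [Ioi_mem_nhds hs0] with t ht
      exact hf' t ht
    · rw [hg s hs]
      have := m_pos hs0
      simp only [Function.comp]
      field_simp
  have hfint : ∀ s, f s = ∫ t in (0)..s, g t := fun s => by
    have z : ∀ t ≤ a, ∫ x in (0)..t, g x = 0 := fun t ht => by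
      rw [intervalIntegral.integral_congr (g := fun _ => (0:ℝ))]
      · simp
      · intro x hx
        exact hg0 x (hx.2.trans (max_le ha.le ht))
    rcases le_or_gt s a with h | h
    · rw [hf0 s h, z s h]
    · rw [← intervalIntegral.integral_add_adjacent_intervals (hgi 0 a) (hgi a s), z a le_rfl,
        integral_eq_of_hasDerivAt_off_countable_of_le f g h.le hS
          (hfc.mono fun t ht => ha.trans_le ht.1) ?_ (hgi a s), hf0 a le_rfl]
      · ring
      · rintro x ⟨hx, hx2⟩
        exact hfd x hx.1 fun hb => hx2 ⟨ha.trans hx.1, hb⟩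
  set Φ : ℝ → ℝ := fun s => E (τ s) + f s ^ 2 * (m1 s / m s) with hΦ
  have hΦc : ContinuousOn Φ (Ioi 0) :=
    (hE.comp_continuousOn hτc).add ((hfc.pow 2).mul m1_div_m_continuousOn)
  have hΦd : ∀ s, a < s → τ s ≠ b → HasDerivAt Φ (g s ^ 2 - V s * f s ^ 2) s := fun s hs hne => by
    have hs0 := ha.trans hs
    have hm := m_pos hs0
    have h1 := ((hdE _ (hτpos s hs) hne).comp s (hτd s hs0)).add
      (((hfd s hs hne).pow 2).mul ((hasDerivAt_m1 hs0).div (hasDerivAt_m hs0) hm.ne'))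
    refine h1.congr_deriv ?_
    simp only [Pi.pow_apply, Pi.div_apply]
    rw [hg s hs, hf s hs]
    field_simp
    ring
  have hgV : IntegrableOn (fun s => g s ^ 2 - V s * f s ^ 2) (Ioi a) :=
    hg2.integrableOn.sub (hVi.mono_set (Ioi_subset_Ioi ha.le))
  have hT : ∀ T, a < T → ∫ s in a..T, (g s ^ 2 - V s * f s ^ 2) ≤ 1 + M ^ 2 * (m1 T / m T) := by
    intro T hT
    rw [integral_eq_of_hasDerivAt_off_countable_of_le Φ _ hT.le hS
      (hΦc.mono fun t ht => ha.trans_le ht.1) ?_ ?_]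
    · simp only [hΦ]
      rw [hf0 a le_rfl]
      have := hE1 _ (hτpos T hT)
      have h0 : τ a = 0 := sub_self _
      rw [h0]
      have : f T ^ 2 ≤ M ^ 2 := by rw [← sq_abs]; have := hfM T; gcongr
      have : 0 ≤ m1 T / m T := div_nonneg (m1_nonneg (ha.trans hT)) (m_pos (ha.trans hT)).le
      nlinarith
    · rintro x ⟨hx, hx2⟩
      exact hΦd x hx.1 fun hb => hx2 ⟨ha.trans hx.1, hb⟩
    · rw [intervalIntegrable_iff_integrableOn_Ioc_of_le hT.le]
      exact hgV.mono_set Ioc_subset_Ioi_self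
  have hlim : ∫ s in Ioi a, (g s ^ 2 - V s * f s ^ 2) ≤ 1 := by
    have l1 := intervalIntegral_tendsto_integral_Ioi a hgV tendsto_id
    have l2 : Tendsto (fun T => 1 + M ^ 2 * (m1 T / m T)) atTop (𝓝 1) := by
      simpa using (m1_div_m_tendsto.const_mul (M ^ 2)).const_add 1
    refine le_of_tendsto_of_tendsto l1 l2 ?_
    filter_upwards [eventually_gt_atTop a] with T h using hT T h
  have hEq : (∫ s, g s ^ 2) ≤ 1 + ∫ s in Ioi 0, V s * f s ^ 2 := by
    rw [integral_sub hg2.integrableOn (hVi.mono_set (Ioi_subset_Ioi ha.le))] at hlim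
    have e1 : ∫ s in Ioi a, g s ^ 2 = ∫ s, g s ^ 2 :=
      setIntegral_eq_integral_of_forall_compl_eq_zero fun s hs => by
        rw [hg0 s (by simpa using hs)]; simp
    have e2 : ∫ s in Ioi a, V s * f s ^ 2 ≤ ∫ s in Ioi 0, V s * f s ^ 2 :=
      setIntegral_mono_set hVi (by
        filter_upwards [ae_restrict_mem measurableSet_Ioi] with s hs
        exact mul_nonneg (V_pos hs).le (sq_nonneg _)) (Ioi_subset_Ioi ha.le).eventuallyLE
    linarith
  have hfin := approx hgL ha hg0 hfint (by
    rw [← ofReal_integral_eq_lintegral_ofReal hVi ?_]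
    · have p : 0 ≤ ∫ s in Ioi 0, V s * f s ^ 2 :=
        setIntegral_nonneg measurableSet_Ioi fun s hs => mul_nonneg (V_pos hs).le (sq_nonneg _)
      rw [← ENNReal.ofReal_one, ← ENNReal.ofReal_add zero_le_one p]
      exact ENNReal.ofReal_le_ofReal hEq
    · filter_upwards [ae_restrict_mem measurableSet_Ioi] with s hs
      exact mul_nonneg (V_pos hs).le (sq_nonneg _))
  refine le_trans (le_of_eq ?_) hfin
  unfold J
  refine setLIntegral_congr_fun measurableSet_Ioi fun s hs => ?_
  simp only [hf' s hs]
  rfl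

/-- The limit `a → 0` of `profile_shift`. -/
lemma profile {ζ ζ1 E : ℝ → ℝ} {b K M : ℝ} (hζ : Continuous ζ) (hζ0 : ∀ t ≤ 0, ζ t = 0)
    (hM : ∀ t, |ζ t| ≤ M) (hm1 : Measurable ζ1) (hK : ∀ t, 0 < t → |ζ1 t| ≤ K * exp (-t))
    (hE : Continuous E) (hE1 : ∀ t, 0 < t → E t - E 0 ≤ 1)
    (hd : ∀ t, 0 < t → t ≠ b → HasDerivAt ζ (ζ1 t) t)
    (hdE : ∀ t, 0 < t → t ≠ b → HasDerivAt E (ζ1 t ^ 2) t) :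
    J (fun s => m s * ζ (sig s)) ≤ SS := by
  have hu : Tendsto (fun n : ℕ => 1 / ((n : ℝ) + 1)) atTop (𝓝[Ici 0] 0) :=
    tendsto_nhdsWithin_iff.2 ⟨tendsto_one_div_add_atTop_nhds_zero_nat,
      Eventually.of_forall fun n => by rw [mem_Ici]; positivity⟩
  have hs : Tendsto (fun n : ℕ => sig (1 / ((n : ℝ) + 1))) atTop (𝓝 0) := by
    have := (sig_continuousOn 0 (mem_Ici.2 le_rfl)).tendsto.comp hu
    rwa [sig_zero] at this
  -- `J` only sees `s > 0`, so the measurable representatives are cut off there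
  have key : J ((Ioi 0).indicator fun s => m s * ζ (sig s)) ≤ SS := by
    refine J_le_of_tendsto
      (w := fun n => (Ioi 0).indicator fun s => m s * ζ (sig s - sig (1 / ((n : ℝ) + 1))))
      (fun n => ?_) (fun s hs0 => ?_) (Eventually.of_forall fun n => ?_)
    · have c : ContinuousOn (fun s => m s * ζ (sig s - sig (1 / ((n : ℝ) + 1)))) (Ioi 0) :=
        m_continuousOn.mul (hζ.comp_continuousOn
          (ContinuousOn.sub (sig_continuousOn.mono Ioi_subset_Ici_self) continuousOn_const))
      have := c.measurable_piecewise (continuousOn_const (c := (0:ℝ)) (s := (Ioi (0:ℝ))ᶜ))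
        measurableSet_Ioi
      rw [← Set.piecewise_eq_indicator]
      exact this
    · simp only [indicator_of_mem (mem_Ioi.2 hs0)]
      refine Tendsto.const_mul _ ((hζ.tendsto _).comp ?_)
      simpa using hs.const_sub (sig s)
    · refine le_trans (le_of_eq ?_) (profile_shift hζ hζ0 hM hm1 hK hE hE1 hd hdE
        (a := 1 / ((n : ℝ) + 1)) (by positivity))
      refine setLIntegral_congr_fun measurableSet_Ioi fun s hs => ?_
      simp only [indicator_of_mem hs]
  refine le_trans (le_of_eq ?_) key
  refine setLIntegral_congr_fun measurableSet_Ioi fun s hs => ?_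
  simp only [indicator_of_mem hs]

/-! ### The bubble and the strict inequality -/

/-- For `L t = log (1 + B e^{-t})`: the derivative of `L`, a primitive of `(L')²`, and a primitive
of `B e^{-t} / (1 + B e^{-t})²`, the density of the bubble. -/
lemma bubble_deriv {B : ℝ} (hB : 0 < B) (t : ℝ) :
    HasDerivAt (fun t => log (1 + B * exp (-t))) (-(1 - 1 / (1 + B * exp (-t)))) t ∧
    HasDerivAt (fun t => 1 - 1 / (1 + B * exp (-t)) - log (1 + B * exp (-t)))
      ((1 - 1 / (1 + B * exp (-t))) ^ 2) t ∧
    HasDerivAt (fun t => 1 / (1 + B * exp (-t))) (B * exp (-t) / (1 + B * exp (-t)) ^ 2) t := by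
  have hp : 0 < 1 + B * exp (-t) := by positivity
  have h0 : HasDerivAt (fun t => 1 + B * exp (-t)) (-(B * exp (-t))) t := by
    refine (((hasDerivAt_exp_neg t).const_mul B).const_add 1).congr_deriv (by ring)
  have h1 := h0.log hp.ne'
  have h2 : HasDerivAt (fun t => 1 / (1 + B * exp (-t))) (B * exp (-t) / (1 + B * exp (-t)) ^ 2) t := by
    simp only [one_div]
    refine (h0.inv hp.ne').congr_deriv (by ring)
  refine ⟨h1.congr_deriv (by field_simp; ring), ?_, h2⟩
  refine ((h2.const_sub 1).sub h1).congr_deriv ?_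
  field_simp
  ring

/-- A two-piece test profile: linear up to `n/2` and then a bubble. -/
lemma bubble_profile {n : ℝ} (hn : 4 ≤ n) :
    ∃ ζ : ℝ → ℝ, J (fun s => m s * ζ (sig s)) ≤ SS ∧
      (∀ t, 0 ≤ t → t ≤ n / 2 → t ^ 2 / n ≤ ζ t ^ 2) ∧
      (∀ t, n / 2 ≤ t → n + (1 - exp (-(n / 2))) - 2 * log (1 + (exp n - exp (n / 2)) * exp (-t))
        ≤ ζ t ^ 2 ∧ ζ t ^ 2 ≤ n + 2) := by
  set B : ℝ := exp n - exp (n / 2) with hBdef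
  have hB : 0 < B := sub_pos.2 (exp_lt_exp.2 (by linarith))
  set θ : ℝ := 1 - exp (-(n / 2)) with hθ
  have hθ0 : 0 < θ := sub_pos.2 (by rw [exp_lt_one_iff]; linarith)
  have hθ1 : θ ≤ 1 := by have := exp_pos (-(n/2)); linarith
  set κ : ℝ := 1 / √(n - θ) with hκ
  have hnθ : 0 < n - θ := by linarith
  have hκ0 : 0 < κ := by positivity
  have hκ2 : κ ^ 2 = 1 / (n - θ) := by rw [hκ, div_pow, sq_sqrt hnθ.le, one_pow]
  set L : ℝ → ℝ := fun t => log (1 + B * exp (-t)) with hL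
  have hLpos : ∀ t, 0 ≤ L t := fun t => log_nonneg (by have := exp_pos (-t); nlinarith)
  have hBb : 1 + B * exp (-(n / 2)) = exp (n / 2) := by
    rw [hBdef, sub_mul, ← exp_add, ← exp_add]
    have : n + -(n / 2) = n / 2 := by ring
    rw [this]; simp
  have hLb : L (n / 2) = n / 2 := by simp only [hL]; rw [hBb, log_exp]
  have hLc : Continuous L := by
    refine Continuous.log (by fun_prop) fun t => ?_
    positivity
  have hLle : ∀ t, n / 2 ≤ t → L t ≤ n / 2 := fun t ht => by
    rw [← hLb]
    refine log_le_log (by positivity) ?_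
    have : exp (-t) ≤ exp (-(n / 2)) := exp_le_exp.2 (by linarith)
    gcongr
  set ζ : ℝ → ℝ := fun t => κ * if t ≤ n / 2 then max t 0 else n - L t with hζ
  set ζ1 : ℝ → ℝ := fun t => κ * if t ≤ n / 2 then 1 else 1 - 1 / (1 + B * exp (-t)) with hζ1
  set E : ℝ → ℝ := fun t => κ ^ 2 * if t ≤ n / 2 then t else
    (1 - 1 / (1 + B * exp (-t)) - L t) + (n - θ) with hE
  have hout : ∀ t, n / 2 ≤ t → ζ t = κ * (n - L t) := fun t ht => by
    rcases eq_or_lt_of_le ht with h | h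
    · simp only [hζ, ← h, le_refl, if_true, hLb]
      rw [max_eq_left (by linarith)]; ring
    · simp only [hζ, not_le.2 h, if_false]
  refine ⟨ζ, ?_, fun t h0 ht => ?_, fun t ht => ?_⟩
  · refine profile (ζ := ζ) (ζ1 := ζ1) (E := E) (b := n / 2) (K := κ * exp n) (M := κ * n)
      ?_ ?_ ?_ ?_ ?_ ?_ ?_ ?_ ?_
    · refine continuous_const.mul (Continuous.if_le (by fun_prop) (by fun_prop) continuous_id
        continuous_const ?_)
      intro t ht
      have ht : t = n / 2 := ht
      rw [ht, hLb, max_eq_left (by linarith)]; ring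
    · intro t ht
      simp only [hζ, if_pos (show t ≤ n / 2 by linarith), max_eq_right ht, mul_zero]
    · intro t
      simp only [hζ]
      rw [abs_mul, abs_of_pos hκ0]
      gcongr
      split_ifs with h
      · rw [abs_of_nonneg (le_max_right _ _)]
        exact max_le (by linarith) (by linarith)
      · have := hLle t (by linarith)
        have := hLpos t
        rw [abs_of_nonneg (by linarith)]; linarith
    · refine Measurable.const_mul (Measurable.ite measurableSet_Iic measurable_const ?_) κ
      fun_prop
    · intro t ht
      simp only [hζ1]
      rw [abs_mul, abs_of_pos hκ0, mul_assoc]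
      gcongr
      split_ifs with h
      · rw [abs_one, ← exp_add]
        exact one_le_exp (by linarith)
      · have e : 1 - 1 / (1 + B * exp (-t)) = B * exp (-t) / (1 + B * exp (-t)) := by
          have : 0 < 1 + B * exp (-t) := by positivity
          field_simp; ring
        rw [e, abs_of_nonneg (by positivity)]
        have h3 : B ≤ exp n := by have := exp_pos (n / 2); linarith
        calc B * exp (-t) / (1 + B * exp (-t)) ≤ B * exp (-t) / 1 := by
              gcongr; have := exp_pos (-t); nlinarith
          _ ≤ _ := by rw [div_one]; gcongr
    · refine continuous_const.mul (Continuous.if_le continuous_id ?_ continuous_id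
        continuous_const ?_)
      · have : ∀ t, (1 + B * exp (-t)) ≠ 0 := fun t => by positivity
        fun_prop (disch := assumption)
      · intro t ht
        have ht : t = n / 2 := ht
        simp only [ht]
        rw [hLb, hBb, one_div, ← exp_neg, ← hθ]; ring
    · intro t ht
      simp only [hE]
      rw [if_pos (show (0:ℝ) ≤ n / 2 by linarith), mul_zero, sub_zero, hκ2, one_div,
        inv_mul_le_iff₀ hnθ, mul_one]
      split_ifs with h
      · linarith
      · have := one_sub_inv_le_log_of_pos (show 0 < 1 + B * exp (-t) by positivity)
        simp only [hL, one_div]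
        linarith
    · intro t ht hne
      rcases lt_or_gt_of_ne hne with h | h
      · simp only [hζ1, if_pos h.le]
        refine HasDerivAt.congr_of_eventuallyEq ((hasDerivAt_id t).const_mul κ) ?_
        filter_upwards [Iio_mem_nhds h, Ioi_mem_nhds ht] with x hx hx0
        simp only [hζ, if_pos (mem_Iio.1 hx).le, max_eq_left (mem_Ioi.1 hx0).le, id]
      · simp only [hζ1, if_neg (not_le.2 h)]
        refine HasDerivAt.congr_of_eventuallyEq
          (((((bubble_deriv hB t).1).const_sub n).congr_deriv (neg_neg _)).const_mul κ) ?_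
        filter_upwards [Ioi_mem_nhds h] with x hx
        simp only [hζ, if_neg (not_le.2 (mem_Ioi.1 hx)), hL]
    · intro t ht hne
      rcases lt_or_gt_of_ne hne with h | h
      · simp only [hζ1, if_pos h.le]
        refine HasDerivAt.congr_of_eventuallyEq (((hasDerivAt_id t).const_mul (κ ^ 2)).congr_deriv
          (by ring)) ?_
        filter_upwards [Iio_mem_nhds h] with x hx
        simp only [hE, if_pos (mem_Iio.1 hx).le, id]
      · simp only [hζ1, if_neg (not_le.2 h)]
        refine HasDerivAt.congr_of_eventuallyEq
          (((((bubble_deriv hB t).2.1).add_const (n - θ)).const_mul (κ ^ 2)).congr_deriv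
            (by ring)) ?_
        filter_upwards [Ioi_mem_nhds h] with x hx
        simp only [hE, if_neg (not_le.2 (mem_Ioi.1 hx)), hL]
  · simp only [hζ, if_pos ht, max_eq_left h0]
    rw [mul_pow, hκ2, div_eq_mul_one_div, mul_comm]
    have : 1 / n ≤ 1 / (n - θ) := one_div_le_one_div_of_le hnθ (by linarith)
    gcongr
  · rw [hout t ht, mul_pow, hκ2, one_div, inv_mul_eq_div]
    have h1 := hLpos t
    have h2 := hLle t ht
    constructor
    · rw [le_div_iff₀ hnθ]
      show (n + θ - 2 * L t) * (n - θ) ≤ _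
      nlinarith [sq_nonneg (L t - θ)]
    · rw [div_le_iff₀ hnθ]
      nlinarith

lemma bubble_aux {n x y M2 e : ℝ} (hn : 0 ≤ n) (hy : 0 < y) (hyx : y ≤ x) (hM : 1 - y ≤ M2)
    (he : 1 - (n + 4) * y ≤ e) (hc : 0 ≤ 1 - (n + 5) * x) : 1 - (n + 5) * x ≤ M2 * e := by
  have h1 : (n + 5) * y ≤ (n + 5) * x := by gcongr
  have h2 : 0 ≤ n * y := by positivity
  have p : 0 ≤ 1 - (n + 4) * y := by linarith
  have p2 : 0 ≤ 1 - y := by linarith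
  have h3 : 0 ≤ (n + 4) * y * y := by positivity
  calc 1 - (n + 5) * x ≤ (1 - y) * (1 - (n + 4) * y) := by linarith
    _ ≤ M2 * e := mul_le_mul hM he p (p2.trans hM)

set_option maxHeartbeats 1000000 in
/-- The outer, linear part of the profile contributes `1` up to an exponentially small error, plus a
gain of order `1 / n` from `e^{w²} ≥ 1 + w²` on `(1, 2)`; the bubble contributes `e^{1 + aa}` up to an
exponentially small error. -/
lemma J_lower {ζ : ℝ → ℝ} {n : ℝ} (hn : 4 ≤ n) (hna : 4 + 2 * aa ≤ n)
    (h1 : ∀ t, 0 ≤ t → t ≤ n / 2 → t ^ 2 / n ≤ ζ t ^ 2)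
    (h2 : ∀ t, n / 2 ≤ t →
      n + (1 - exp (-(n / 2))) - 2 * log (1 + (exp n - exp (n / 2)) * exp (-t))
        ≤ ζ t ^ 2 ∧ ζ t ^ 2 ≤ n + 2) :
    ENNReal.ofReal (1 - exp (aa - n / 2) + exp (-2) / (2 * n) +
      exp (1 + aa) * (1 - (n + 6) * exp (aa - n / 2))) ≤ J (fun s => m s * ζ (sig s)) := by
  set B : ℝ := exp n - exp (n / 2) with hBdef
  have hB : 0 < B := sub_pos.2 (exp_lt_exp.2 (by linarith))
  set θ : ℝ := 1 - exp (-(n / 2)) with hθ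
  have haa := aa_nonneg
  obtain ⟨b, hb, hbs⟩ : n / 2 ∈ sig '' Icc 0 (n / 2) := by
    refine intermediate_value_Icc (by linarith) (sig_continuousOn.mono Icc_subset_Ici_self) ⟨?_, ?_⟩
    · rw [sig_zero]; linarith
    · exact sig_ge (by linarith)
  have hbaa : n / 2 - aa ≤ b := by have := sig_le hb.1; linarith
  have hb2 : 2 ≤ b := by linarith
  set x : ℝ := exp (aa - n / 2) with hx
  have hx0 : 0 < x := exp_pos _
  have hbx : exp (-b) ≤ x := exp_le_exp.2 (by linarith)
  have ho : ENNReal.ofReal (1 - x + exp (-2) / (2 * n)) ≤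
      ∫⁻ s in Ioc 0 b, ENNReal.ofReal (exp ((m s * ζ (sig s)) ^ 2 - s)) := by
    have e0 : IntegrableOn (fun s => exp (-s)) (Ioc 0 b) :=
      (integrableOn_exp_neg_Ioi 0).mono_set Ioc_subset_Ioi_self
    have e1 : IntegrableOn ((Ioc 1 2).indicator fun _ => exp (-2) / (2 * n)) (Ioc 0 b) :=
      ((integrable_indicator_iff measurableSet_Ioc).2 (by simp)).integrableOn
    have e2 : ∫ s in Ioc 0 b, (exp (-s) + (Ioc 1 2).indicator (fun _ => exp (-2) / (2 * n)) s)
        = 1 - exp (-b) + exp (-2) / (2 * n) := by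
      rw [integral_add e0 e1]
      congr 1
      · rw [← intervalIntegral.integral_of_le hb.1,
          intervalIntegral.integral_eq_sub_of_hasDerivAt (f := fun s => -exp (-s))
          (fun s _ => (hasDerivAt_exp_neg s).neg.congr_deriv (by simp))
          ((by fun_prop : Continuous fun s : ℝ => exp (-s)).intervalIntegrable _ _)]
        simp; ring
      · rw [setIntegral_indicator measurableSet_Ioc, inter_eq_self_of_subset_right
          (Ioc_subset_Ioc zero_le_one hb2)]
        simp
        norm_num
    calc ENNReal.ofReal (1 - x + exp (-2) / (2 * n))
        ≤ ENNReal.ofReal (∫ s in Ioc 0 b,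
          (exp (-s) + (Ioc 1 2).indicator (fun _ => exp (-2) / (2 * n)) s)) := by
          rw [e2]; exact ENNReal.ofReal_le_ofReal (by linarith)
      _ = ∫⁻ s in Ioc 0 b, ENNReal.ofReal
          (exp (-s) + (Ioc 1 2).indicator (fun _ => exp (-2) / (2 * n)) s) := by
          refine ofReal_integral_eq_lintegral_ofReal (e0.add e1) (Eventually.of_forall fun s => ?_)
          refine add_nonneg (exp_pos _).le (indicator_nonneg (fun _ _ => by positivity) _)
      _ ≤ _ := by
          refine setLIntegral_mono' measurableSet_Ioc fun s hs => ENNReal.ofReal_le_ofReal ?_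
          have hs0 := hs.1
          have hsb : sig s ≤ n / 2 := hbs ▸ sig_mono hs0.le hs.2
          have hsg := sig_ge hs0.le
          have k1 := h1 (sig s) (hs0.le.trans hsg) hsb
          have k2 : 1 + (m s * ζ (sig s)) ^ 2 ≤ exp ((m s * ζ (sig s)) ^ 2) := by
            linarith [add_one_le_exp ((m s * ζ (sig s)) ^ 2)]
          rw [sub_eq_add_neg, exp_add]
          by_cases h12 : s ∈ Ioc 1 2
          · rw [indicator_of_mem h12]
            have k3 : exp (-2) ≤ exp (-s) := exp_le_exp.2 (by linarith [h12.2])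
            have k4 : 1 / 2 ≤ m s ^ 2 := by
              have := m_sq_lower hs0
              have : exp (-s) ≤ 1 / 2 := by
                have : exp (-s) ≤ exp (-1) := exp_le_exp.2 (by linarith [h12.1])
                have := exp_neg_one_lt_half
                linarith
              linarith
            have k5 : 1 / n ≤ ζ (sig s) ^ 2 := by
              refine le_trans ?_ k1
              have : 1 ≤ sig s := by linarith [h12.1]
              gcongr
              nlinarith
            have k6 : 1 / 2 * (1 / n) ≤ (m s * ζ (sig s)) ^ 2 := by
              rw [mul_pow]; gcongr
            calc exp (-s) + exp (-2) / (2 * n) = exp (-s) + exp (-2) * (1 / 2 * (1 / n)) := by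
                  field_simp
              _ ≤ exp (-s) + exp (-s) * (1 / 2 * (1 / n)) := by gcongr
              _ = (1 + (1 / 2 * (1 / n))) * exp (-s) := by ring
              _ ≤ _ := by gcongr; linarith
          · rw [indicator_of_notMem h12, add_zero]
            have := exp_pos (-s)
            nlinarith [sq_nonneg (m s * ζ (sig s))]
  have hi : ENNReal.ofReal (exp (1 + aa) * (1 - (n + 6) * x)) ≤
      ∫⁻ s in Ioi b, ENNReal.ofReal (exp ((m s * ζ (sig s)) ^ 2 - s)) := by
    have hpos : ∀ t, 0 < 1 + B * exp (-t) := fun t => by positivity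
    set G : ℝ → ℝ := fun s => exp (n + θ) / B * (1 / (1 + B * exp (-sig s))) with hG
    set G1 : ℝ → ℝ := fun s => exp (n + θ) / B *
      (B * exp (-sig s) / (1 + B * exp (-sig s)) ^ 2 * (1 / m s ^ 2)) with hG1
    have hGd : ∀ s ∈ Ici b, HasDerivAt G (G1 s) s := fun s hs => by
      have hs0 : 0 < s := by linarith [show b ≤ s from hs]
      exact ((bubble_deriv hB (sig s)).2.2.comp s (hasDerivAt_sig hs0)).const_mul _
    have hGp : ∀ s ∈ Ioi b, 0 ≤ G1 s := fun s hs => by positivity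
    have hsigtop : Tendsto sig atTop atTop := tendsto_atTop_mono' _
      (by filter_upwards [eventually_ge_atTop 0] with s hs using sig_ge hs) tendsto_id
    have hGt : Tendsto G atTop (𝓝 (exp (n + θ) / B)) := by
      have : Tendsto (fun s => 1 + B * exp (-sig s)) atTop (𝓝 1) := by
        simpa using ((tendsto_exp_neg_atTop_nhds_zero.comp hsigtop).const_mul B).const_add 1
      have := (this.inv₀ one_ne_zero).const_mul (exp (n + θ) / B)
      simpa [hG] using this
    have hGb : exp (n + θ) / B - G b = exp θ := by
      simp only [hG]
      have hBb : 1 + B * exp (-(n / 2)) = exp (n / 2) := by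
        rw [hBdef, sub_mul, ← exp_add, ← exp_add]
        have : n + -(n / 2) = n / 2 := by ring
        rw [this]; simp
      rw [hbs, hBb, exp_add]
      have e : exp n = exp (n / 2) * exp (n / 2) := by rw [← exp_add]; ring_nf
      have hB2 : B = exp (n / 2) * (exp (n / 2) - 1) := by rw [hBdef, e]; ring
      have : 0 < exp (n / 2) - 1 := by
        rcases (mul_pos_iff_of_pos_left (exp_pos (n / 2))).1 (hB2 ▸ hB) with h
        exact h
      rw [hB2, e]
      have := exp_pos (n / 2)
      field_simp
    have hGi := integral_Ioi_of_hasDerivAt_of_nonneg' hGd hGp hGt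
    rw [hGb] at hGi
    have hGint := integrableOn_Ioi_deriv_of_nonneg' hGd hGp hGt
    have hc : 0 ≤ 1 - (n + 5) * x ∨ 1 - (n + 5) * x < 0 := le_or_gt _ _
    rcases hc with hc | hc
    swap
    · rw [ENNReal.ofReal_of_nonpos]
      · exact zero_le
      · have := exp_pos (1 + aa)
        nlinarith
    calc ENNReal.ofReal (exp (1 + aa) * (1 - (n + 6) * x))
        ≤ ENNReal.ofReal (∫ s in Ioi b, (exp aa * (1 - (n + 5) * x)) * G1 s) := by
          rw [integral_const_mul, hGi]
          refine ENNReal.ofReal_le_ofReal ?_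
          have k1 : exp 1 * (1 - x) ≤ exp θ := by
            have : exp θ = exp 1 * exp (-exp (-(n / 2))) := by rw [← exp_add]; rfl
            rw [this]
            have k2 : exp (-(n / 2)) ≤ x := exp_le_exp.2 (by linarith)
            have := add_one_le_exp (-exp (-(n / 2)))
            gcongr; linarith
          rw [exp_add, mul_comm (exp 1), mul_assoc, mul_assoc]
          refine mul_le_mul_of_nonneg_left ?_ (exp_pos aa).le
          calc exp 1 * (1 - (n + 6) * x) ≤ (1 - (n + 5) * x) * (exp 1 * (1 - x)) := by
                have := exp_pos (1:ℝ)
                have : 0 ≤ exp 1 * ((n + 5) * x * x) := by positivity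
                nlinarith
            _ ≤ _ := by gcongr
      _ = ∫⁻ s in Ioi b, ENNReal.ofReal ((exp aa * (1 - (n + 5) * x)) * G1 s) := by
          refine ofReal_integral_eq_lintegral_ofReal (hGint.const_mul _) ?_
          filter_upwards [ae_restrict_mem measurableSet_Ioi] with s hs
          exact mul_nonneg (mul_nonneg (exp_pos _).le hc) (hGp s hs)
      _ ≤ _ := by
          refine setLIntegral_mono' measurableSet_Ioi fun s hs => ENNReal.ofReal_le_ofReal ?_
          have hs0 : 0 < s := by linarith [show b < s from hs]
          have hsb : n / 2 ≤ sig s := hbs ▸ sig_mono hb.1 (le_of_lt hs)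
          obtain ⟨q1, q2⟩ := h2 _ hsb
          set y : ℝ := exp (-s) with hy
          have hy0 : 0 < y := exp_pos _
          have hyx : y ≤ x := (exp_le_exp.2 (by linarith [show b < s from hs])).trans hbx
          have hm := m_pos hs0
          have hm2 := m_sq_lower hs0
          have hm1 := m_le_one hs0
          have hG1' : G1 s = exp (n + θ - 2 * log (1 + B * exp (-sig s)) - sig s) * (1 / m s ^ 2) := by
            simp only [hG1]
            rw [exp_sub, exp_sub, mul_comm 2 (log _), exp_mul, exp_log (hpos _), exp_neg]
            rw [rpow_two]
            field_simp
          have a1 : G1 s * m s ^ 2 ≤ exp (ζ (sig s) ^ 2 - sig s) := by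
            rw [hG1', mul_assoc, one_div, inv_mul_cancel₀ (by positivity), mul_one]
            exact exp_le_exp.2 (by linarith)
          have a2 : exp (ζ (sig s) ^ 2 - sig s) * exp (aa - 2 * y - y * (n + 2)) ≤
              exp ((m s * ζ (sig s)) ^ 2 - s) := by
            rw [← exp_add]
            refine exp_le_exp.2 ?_
            have k := aa_le (show 1 ≤ s by linarith [show b < s from hs])
            have k2 : (1 - m s ^ 2) * ζ (sig s) ^ 2 ≤ y * (n + 2) := by
              refine mul_le_mul (by linarith) q2 (sq_nonneg _) hy0.le
            rw [mul_pow]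
            nlinarith
          have a3 : exp aa * (1 - (n + 5) * x) ≤ m s ^ 2 * exp (aa - 2 * y - y * (n + 2)) := by
            have : exp (aa - 2 * y - y * (n + 2)) = exp aa * exp (-(n + 4) * y) := by
              rw [← exp_add]; ring_nf
            rw [this]
            have k1 := add_one_le_exp (-(n + 4) * y)
            have k2 : 1 - (n + 5) * x ≤ m s ^ 2 * exp (-(n + 4) * y) :=
              bubble_aux (by linarith) hy0 hyx hm2 (by linarith) hc
            calc exp aa * (1 - (n + 5) * x) ≤ exp aa * (m s ^ 2 * exp (-(n + 4) * y)) := by gcongr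
              _ = _ := by ring
          calc exp aa * (1 - (n + 5) * x) * G1 s
              ≤ m s ^ 2 * exp (aa - 2 * y - y * (n + 2)) * G1 s := by
                have := hGp s hs; gcongr
            _ = G1 s * m s ^ 2 * exp (aa - 2 * y - y * (n + 2)) := by ring
            _ ≤ exp (ζ (sig s) ^ 2 - sig s) * exp (aa - 2 * y - y * (n + 2)) := by gcongr
            _ ≤ _ := a2
  unfold J
  rw [← Ioc_union_Ioi_eq_Ioi hb.1, lintegral_union measurableSet_Ioi
    (Set.disjoint_left.2 fun t ht ht2 => absurd ht.2 (not_le.2 ht2))]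
  exact ENNReal.ofReal_add_le.trans (add_le_add ho hi)

/-- The supremum exceeds the largest value that a concentrating sequence can produce. -/
lemma level_lt : ENNReal.ofReal (1 + exp (1 + aa)) < SS := by
  have haa := aa_nonneg
  have lim : Tendsto (fun n : ℝ => (2 * n) * (exp aa * exp (-(1 / 2) * n) + exp (1 + aa) * ((n + 6) *
      (exp aa * exp (-(1 / 2) * n))))) atTop (𝓝 0) := by
    have k : ∀ j : ℕ, Tendsto (fun n : ℝ => n ^ j * exp (-(1 / 2) * n)) atTop (𝓝 0) := fun j => by
      have := tendsto_rpow_mul_exp_neg_mul_atTop_nhds_zero j (1 / 2) (by norm_num)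
      refine this.congr fun n => ?_
      rw [rpow_natCast]
    have := ((k 1).const_mul (2 * exp aa + 12 * exp (1 + aa) * exp aa)).add
      ((k 2).const_mul (2 * exp (1 + aa) * exp aa))
    simp only [mul_zero, add_zero] at this
    refine this.congr fun n => ?_
    ring
  obtain ⟨n, hlt, hn, hna⟩ := ((lim.eventually_lt_const (exp_pos (-2))).and
    ((eventually_ge_atTop 4).and (eventually_ge_atTop (4 + 2 * aa)))).exists
  obtain ⟨ζ, hJ, h1, h2⟩ := bubble_profile hn
  have hl := (J_lower hn hna h1 h2).trans hJ
  refine lt_of_lt_of_le ?_ hl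
  rw [ENNReal.ofReal_lt_ofReal_iff_of_nonneg (by positivity)]
  have e : exp (aa - n / 2) = exp aa * exp (-(1 / 2) * n) := by rw [← exp_add]; ring_nf
  rw [e]
  have : exp aa * exp (-(1 / 2) * n) + exp (1 + aa) * ((n + 6) *
      (exp aa * exp (-(1 / 2) * n))) < exp (-2) / (2 * n) := by
    rw [lt_div_iff₀ (by linarith)]
    linarith
  linarith

/-! ### The Cauchy–Pompeiu formula -/

/-- The Wirtinger derivative `∂̄F = (∂₁F + i ∂₂F)/2`. -/
def dbar (F : ℂ → ℂ) (z : ℂ) : ℂ := (1 / 2) * (fderiv ℝ F z 1 + Complex.I * fderiv ℝ F z Complex.I)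

/-- The Cauchy–Pompeiu formula for compactly supported functions. -/
lemma pompeiu {F : ℂ → ℂ} (hF : ContDiff ℝ 1 F) (hc : HasCompactSupport F) (w : ℂ) :
    ∫ z, dbar F (w + z) / z = -π * F w := by
  set e : ℝ → ℂ := fun θ => (Real.cos θ + Real.sin θ * Complex.I : ℂ) with he
  have hec : Continuous e := by fun_prop
  have hen : ∀ θ, ‖e θ‖ = 1 := fun θ => by
    simp only [he]
    simp
  have he1 : ∀ θ, HasDerivAt e (Complex.I * e θ) θ := fun θ => by
    have h1 := (Real.hasDerivAt_cos θ).ofReal_comp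
    have h2 := (Real.hasDerivAt_sin θ).ofReal_comp
    refine (h1.add (h2.mul_const Complex.I)).congr_deriv ?_
    simp only [he]
    push_cast
    ring_nf
    rw [Complex.I_sq]; ring
  have hD : Continuous (fderiv ℝ F) := hF.continuous_fderiv (by norm_num)
  have hdF : ∀ z, HasFDerivAt F (fderiv ℝ F z) z := fun z =>
    (hF.differentiable (by norm_num) z).hasFDerivAt
  obtain ⟨R, hR0, hR⟩ : ∃ R > 0, ∀ z : ℂ, R ≤ ‖z‖ → F (w + z) = 0 ∧ fderiv ℝ F (w + z) = 0 := by
    obtain ⟨R, hR⟩ := hc.isCompact.isBounded.subset_closedBall w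
    refine ⟨|R| + 1, by positivity, fun z hz => ?_⟩
    have hnot : w + z ∉ tsupport F := fun hm => by
      have := hR hm
      simp at this
      linarith [le_abs_self R]
    exact ⟨image_eq_zero_of_notMem_tsupport hnot,
      image_eq_zero_of_notMem_tsupport (fun hm => hnot (tsupport_fderiv_subset ℝ hm))⟩
  set A : ℝ × ℝ → ℂ := fun p => fderiv ℝ F (w + p.1 * e p.2) (e p.2) with hA
  set A' : ℝ × ℝ → ℂ := fun p => fderiv ℝ F (w + p.1 * e p.2) (Complex.I * e p.2) with hA'
  have hAc : Continuous A := by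
    simp only [hA]
    exact (hD.comp (by fun_prop)).clm_apply (by fun_prop)
  have hAc' : Continuous A' := by
    simp only [hA']
    exact (hD.comp (by fun_prop)).clm_apply (by fun_prop)
  have hzero : ∀ p : ℝ × ℝ, R ≤ p.1 → A p = 0 ∧ A' p = 0 := fun p hp => by
    have : R ≤ ‖(p.1 : ℂ) * e p.2‖ := by
      rw [norm_mul, hen, mul_one, Complex.norm_real]; exact hp.trans (le_abs_self _)
    simp [hA, hA', (hR _ this).2]
  have h_int : ∀ {a : ℝ × ℝ → ℂ}, Continuous a → (∀ p : ℝ × ℝ, R ≤ p.1 → a p = 0) →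
      IntegrableOn a (Ioi 0 ×ˢ Ioo (-π) π) (volume.prod volume) := fun {a} ha h0 => by
    have h1 : IntegrableOn a (Icc 0 R ×ˢ Icc (-π) π) (volume.prod volume) :=
      ha.continuousOn.integrableOn_compact (isCompact_Icc.prod isCompact_Icc)
    refine h1.of_forall_sdiff_eq_zero ((measurableSet_Ioi.prod measurableSet_Ioo)) fun p hp => ?_
    refine h0 p ?_
    by_contra hlt
    push Not at hlt
    exact hp.2 ⟨⟨le_of_lt hp.1.1, hlt.le⟩, Ioo_subset_Icc_self hp.1.2⟩
  rw [← Complex.integral_comp_polarCoord_symm]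
  have hcong : ∀ p ∈ polarCoord.target,
      p.1 • (dbar F (w + Complex.polarCoord.symm p) / Complex.polarCoord.symm p) =
        (1 / 2) * A p + (Complex.I / 2) * A' p := by
    intro p hp
    have hp0 : (0:ℝ) < p.1 := hp.1
    rw [Complex.polarCoord_symm_apply]
    have e1 : (p.1 * (Real.cos p.2 + Real.sin p.2 * Complex.I) : ℂ) = p.1 * e p.2 := rfl
    rw [e1]
    have hl : ∀ c s : ℝ, fderiv ℝ F (w + p.1 * e p.2) (c + s * Complex.I) =
        c * fderiv ℝ F (w + p.1 * e p.2) 1 + s * fderiv ℝ F (w + p.1 * e p.2) Complex.I := by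
      intro c s
      have : (c + s * Complex.I : ℂ) = c • (1:ℂ) + s • Complex.I := by
        simp [Complex.real_smul]
      rw [this, map_add, map_smul, map_smul, Complex.real_smul, Complex.real_smul]
    have k1 : A p = Real.cos p.2 * fderiv ℝ F (w + p.1 * e p.2) 1
        + Real.sin p.2 * fderiv ℝ F (w + p.1 * e p.2) Complex.I := hl _ _
    have k2 : A' p = -Real.sin p.2 * fderiv ℝ F (w + p.1 * e p.2) 1
        + Real.cos p.2 * fderiv ℝ F (w + p.1 * e p.2) Complex.I := by
      have : Complex.I * e p.2 = ((-Real.sin p.2 : ℝ) : ℂ) + (Real.cos p.2 : ℝ) * Complex.I := by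
        simp only [he]; push_cast; ring_nf; rw [Complex.I_sq]; ring
      simp only [hA']
      rw [this, hl]
      push_cast; ring
    rw [k1, k2, dbar, Complex.real_smul]
    have hne : e p.2 ≠ 0 := fun h => by have := hen p.2; rw [h] at this; simp at this
    have hpc : (p.1 : ℂ) ≠ 0 := by exact_mod_cast hp0.ne'
    have hcs : (Real.cos p.2 : ℂ) ^ 2 + (Real.sin p.2 : ℂ) ^ 2 = 1 := by
      exact_mod_cast Real.cos_sq_add_sin_sq p.2
    generalize fderiv ℝ F (w + p.1 * e p.2) 1 = a
    generalize fderiv ℝ F (w + p.1 * e p.2) Complex.I = b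
    field_simp
    simp only [he]
    linear_combination (-(a + Complex.I * b)) * hcs + ((Real.sin p.2 : ℂ) ^ 2 * a
      - (Real.sin p.2 : ℂ) * (Real.cos p.2) * b) * Complex.I_sq
  rw [setIntegral_congr_fun polarCoord.open_target.measurableSet hcong]
  have ht : polarCoord.target = Ioi (0:ℝ) ×ˢ Ioo (-π) π := rfl
  rw [ht]
  have iA := h_int hAc fun p hp => (hzero p hp).1
  have iA' := h_int hAc' fun p hp => (hzero p hp).2
  have I1 : ∫ p in Ioi (0:ℝ) ×ˢ Ioo (-π) π, A p = -(2 * π) * F w := by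
    rw [IntegrableOn, ← Measure.prod_restrict] at iA
    rw [Measure.volume_eq_prod, ← Measure.prod_restrict, integral_prod_symm _ iA]
    have : ∀ θ : ℝ, ∫ ρ in Ioi (0:ℝ), A (ρ, θ) = - F w := fun θ => by
      have hd : ∀ ρ : ℝ, HasDerivAt (fun ρ : ℝ => F (w + ρ * e θ)) (A (ρ, θ)) ρ := fun ρ => by
        have h1 : HasDerivAt (fun ρ : ℝ => w + ρ * e θ) (e θ) ρ := by
          simpa using ((Complex.ofRealCLM.hasDerivAt (x := ρ)).mul_const (e θ)).const_add w
        exact (hdF _).comp_hasDerivAt ρ h1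
      have hi : IntegrableOn (fun ρ => A (ρ, θ)) (Ioi 0) := by
        have h1 : IntegrableOn (fun ρ => A (ρ, θ)) (Icc 0 R) :=
          (hAc.comp (by fun_prop)).continuousOn.integrableOn_compact isCompact_Icc
        refine h1.of_forall_sdiff_eq_zero measurableSet_Ioi fun ρ hρ => (hzero _ ?_).1
        by_contra hlt
        push Not at hlt
        exact hρ.2 ⟨le_of_lt hρ.1, hlt.le⟩
      have hl : Tendsto (fun ρ : ℝ => F (w + ρ * e θ)) atTop (𝓝 0) := by
        refine tendsto_const_nhds.congr' ?_
        filter_upwards [eventually_ge_atTop R] with ρ hρ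
        refine (hR _ ?_).1.symm
        rw [norm_mul, hen, mul_one, Complex.norm_real]; exact hρ.trans (le_abs_self _)
      rw [integral_Ioi_of_hasDerivAt_of_tendsto' (fun ρ _ => hd ρ) hi hl]
      simp
    simp only [this]
    rw [setIntegral_const]
    simp [Measure.real, Real.volume_Ioo, pi_pos.le]
    left; ring
  have I2 : ∫ p in Ioi (0:ℝ) ×ˢ Ioo (-π) π, A' p = 0 := by
    rw [Measure.volume_eq_prod, setIntegral_prod _ iA']
    refine setIntegral_eq_zero_of_forall_eq_zero fun ρ hρ => ?_
    have hρ0 : (0:ℝ) < ρ := hρ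
    have hd : ∀ θ : ℝ, HasDerivAt (fun θ : ℝ => F (w + ρ * e θ)) (ρ • A' (ρ, θ)) θ := fun θ => by
      have h1 : HasDerivAt (fun θ : ℝ => w + ρ * e θ) (ρ • (Complex.I * e θ)) θ := by
        simpa [Complex.real_smul] using ((he1 θ).const_mul (ρ : ℂ)).const_add w
      have := (hdF (w + ρ * e θ)).comp_hasDerivAt θ h1
      rw [map_smul] at this
      exact this
    have h2 := intervalIntegral.integral_eq_sub_of_hasDerivAt (a := -π) (b := π) (fun θ _ => hd θ)
      (((hAc'.comp (by fun_prop : Continuous fun θ : ℝ => (ρ, θ))).const_smul ρ).intervalIntegrable _ _)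
    have h3 : e π = e (-π) := by simp [he]
    rw [h3, sub_self, intervalIntegral.integral_smul, smul_eq_zero] at h2
    have h4 := h2.resolve_left hρ0.ne'
    rwa [intervalIntegral.integral_of_le (by linarith [pi_pos]), integral_Ioc_eq_integral_Ioo] at h4
  have iA1 : IntegrableOn A (Ioi 0 ×ˢ Ioo (-π) π) := iA
  have iA1' : IntegrableOn A' (Ioi 0 ×ˢ Ioo (-π) π) := iA'
  rw [integral_add (iA1.const_mul _) (iA1'.const_mul _), integral_const_mul, integral_const_mul,
    I1, I2]
  ring

/-! ### The hyperbolic isoperimetric inequality -/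

open scoped ComplexConjugate

/-- Conformal factor of the hyperbolic metric on the unit disc. -/
def lam (z : ℂ) : ℝ := 2 / (1 - ‖z‖ ^ 2)

lemma one_sub_pos {z : ℂ} (hz : z ∈ Metric.ball (0:ℂ) 1) : 0 < 1 - ‖z‖ ^ 2 := by
  have : ‖z‖ < 1 := by simpa using hz
  nlinarith [norm_nonneg z]

lemma lam_pos {z : ℂ} (hz : z ∈ Metric.ball (0:ℂ) 1) : 0 < lam z :=
  div_pos two_pos (one_sub_pos hz)

lemma lam_contDiffAt {z : ℂ} (hz : z ∈ Metric.ball (0:ℂ) 1) : ContDiffAt ℝ (⊤ : ℕ∞) lam z := by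
  unfold lam
  exact contDiffAt_const.div (contDiffAt_const.sub (contDiff_norm_sq ℝ).contDiffAt)
    (one_sub_pos hz).ne'

lemma lam_continuousOn : ContinuousOn lam (Metric.ball 0 1) := fun _ hz =>
  (lam_contDiffAt hz).continuousAt.continuousWithinAt

lemma dbar_mul {F K : ℂ → ℂ} {z : ℂ} (hF : DifferentiableAt ℝ F z) (hK : DifferentiableAt ℝ K z) :
    dbar (fun x => F x * K x) z = dbar F z * K z + F z * dbar K z := by
  unfold dbar
  have := (hF.hasFDerivAt.mul hK.hasFDerivAt).fderiv
  have e : (fun x => F x * K x) = F * K := rfl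
  rw [e, this]
  simp
  ring

lemma dbar_conj_affine (c d z : ℂ) : dbar (fun x => c + conj x * d) z = d := by
  have h : HasFDerivAt (fun x : ℂ => c + conj x * d)
      ((ContinuousLinearMap.mul ℝ ℂ).flip d ∘L (Complex.conjCLE : ℂ →L[ℝ] ℂ)) z :=
    (((ContinuousLinearMap.mul ℝ ℂ).flip d ∘L (Complex.conjCLE : ℂ →L[ℝ] ℂ)).hasFDerivAt).const_add c
  unfold dbar
  rw [h.fderiv]
  simp
  ring_nf
  rw [Complex.I_sq]; ring

lemma dbar_lam {z : ℂ} (hz : z ∈ Metric.ball (0:ℂ) 1) :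
    dbar (fun x => (lam x : ℂ)) z = (lam z : ℂ) ^ 2 * z / 2 := by
  have h1 : HasFDerivAt (fun x : ℂ => 1 - ‖x‖ ^ 2) (-(2 • innerSL ℝ z)) z :=
    ((hasStrictFDerivAt_norm_sq z).hasFDerivAt).const_sub 1
  have hp := one_sub_pos hz
  have h2 : HasDerivAt (fun t : ℝ => 2 / t) (-2 / (1 - ‖z‖ ^ 2) ^ 2) (1 - ‖z‖ ^ 2) := by
    have := (hasDerivAt_inv hp.ne').const_mul 2
    refine this.congr_deriv ?_
    ring
  have h3 : HasFDerivAt lam _ z := h2.comp_hasFDerivAt z h1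
  have h4 := (Complex.ofRealCLM.hasFDerivAt (x := lam z)).comp z h3
  have h5 : fderiv ℝ (fun x => (lam x : ℂ)) z = _ := h4.fderiv
  unfold dbar
  rw [h5]
  simp [lam]
  have hpc : ((1 - ‖z‖ ^ 2 : ℝ) : ℂ) ≠ 0 := by exact_mod_cast hp.ne'
  push_cast at hpc
  field_simp
  conv_rhs => rw [← Complex.re_add_im z]
  ring

section iso
variable {G : ℂ → ℝ} (hG : ContDiff ℝ 1 G) (hc : HasCompactSupport G)
  (hs : tsupport G ⊆ Metric.ball 0 1)

lemma cont_mul {q a : ℂ → ℂ} (hs : tsupport G ⊆ Metric.ball 0 1) (hq : Continuous q)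
    (h0 : ∀ z, z ∉ tsupport G → q z = 0)
    (ha : ContinuousOn a (Metric.ball 0 1)) : Continuous fun z => q z * a z := by
  refine continuous_iff_continuousAt.2 fun z => ?_
  by_cases hz : z ∈ tsupport G
  · exact hq.continuousAt.mul (ha.continuousAt (Metric.isOpen_ball.mem_nhds (hs hz)))
  · have : (fun z => q z * a z) =ᶠ[𝓝 z] fun _ => 0 := by
      filter_upwards [(isClosed_tsupport G).isOpen_compl.mem_nhds hz] with x hx
      rw [h0 x hx, zero_mul]
    exact continuousAt_const.congr this.symm

lemma dbar_zero {z : ℂ} (hz : z ∉ tsupport G) : dbar (fun x => (G x : ℂ)) z = 0 := by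
  have : (fun x => (G x : ℂ)) =ᶠ[𝓝 z] fun _ => 0 := by
    filter_upwards [(isClosed_tsupport G).isOpen_compl.mem_nhds hz] with x hx
    rw [image_eq_zero_of_notMem_tsupport hx, Complex.ofReal_zero]
  unfold dbar
  rw [this.fderiv_eq]; simp

include hG in
lemma dbar_cont : Continuous (dbar fun x => (G x : ℂ)) := by
  have h : ContDiff ℝ 1 (fun x => (G x : ℂ)) := Complex.ofRealCLM.contDiff.comp hG
  have := h.continuous_fderiv (by norm_num)
  unfold dbar
  fun_prop

include hG in
lemma norm_dbar_le (z : ℂ) : ‖dbar (fun x => (G x : ℂ)) z‖ ≤ 1 / 2 * ‖fderiv ℝ G z‖ := by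
  have hd : DifferentiableAt ℝ G z := hG.differentiable (by norm_num) z
  have e : fderiv ℝ (fun x => (G x : ℂ)) z = Complex.ofRealCLM ∘L fderiv ℝ G z :=
    ((Complex.ofRealCLM.hasFDerivAt (x := G z)).comp z hd.hasFDerivAt).fderiv
  unfold dbar
  rw [e, norm_mul]
  have : ‖(1 / 2 : ℂ)‖ = 1 / 2 := by norm_num
  rw [this]
  refine mul_le_mul_of_nonneg_left ?_ (by norm_num)
  simp only [ContinuousLinearMap.comp_apply, Complex.ofRealCLM_apply]
  set p := fderiv ℝ G z 1
  set q := fderiv ℝ G z Complex.I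
  set v : ℂ := p + Complex.I * q with hv
  have h1 : fderiv ℝ G z v = p ^ 2 + q ^ 2 := by
    have : v = p • (1:ℂ) + q • Complex.I := by simp [hv, Complex.real_smul, mul_comm]
    rw [this, map_add, map_smul, map_smul, smul_eq_mul, smul_eq_mul]; ring
  have h2 : ‖v‖ ^ 2 = p ^ 2 + q ^ 2 := by
    rw [← Complex.normSq_eq_norm_sq, Complex.normSq_apply]; simp [hv]; ring
  have h3 := (fderiv ℝ G z).le_opNorm v
  rw [h1, ← h2, norm_pow, norm_norm] at h3
  rcases (norm_nonneg v).eq_or_lt with h | h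
  · rw [← h]; exact norm_nonneg _
  · nlinarith

lemma pompeiu' {F : ℂ → ℂ} (hF : ContDiff ℝ 1 F) (hc : HasCompactSupport F) (w : ℂ) :
    ∫ y, dbar F y / (y - w) = -π * F w := by
  rw [← pompeiu hF hc w, ← integral_add_left_eq_self (fun y => dbar F y / (y - w)) w]
  simp

lemma inv_locInt : LocallyIntegrable (fun z : ℂ => z⁻¹) := by
  refine locallyIntegrable_of_norm_le_rpow (C := 1) (α := 1) (by simp) (by simp) ?_ (by fun_prop)
  refine Eventually.of_forall fun z => ?_
  rw [norm_inv, rpow_neg_one, one_mul]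

lemma int_div {c : ℂ → ℂ} (h1 : Continuous c) (h2 : HasCompactSupport c) (w : ℂ) :
    Integrable fun y => c y / (y - w) := by
  have hc' : HasCompactSupport fun z => c (z + w) := h2.comp_homeomorph (Homeomorph.addRight w)
  have h := (inv_locInt.integrable_smul_left_of_hasCompactSupport
    (h1.comp (continuous_add_const w)) hc').comp_sub_right w
  refine h.congr (Eventually.of_forall fun y => ?_)
  simp [div_eq_mul_inv]

lemma prod_int {a b : ℂ → ℂ} (ha : Continuous a) (hb : Continuous b)
    (ha0 : ∀ z, z ∉ Metric.ball (0:ℂ) 1 → a z = 0) (hb0 : ∀ z, z ∉ Metric.ball (0:ℂ) 1 → b z = 0) :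
    Integrable (fun p : ℂ × ℂ => a p.1 * b p.2 / (p.1 - p.2)) (volume.prod volume) := by
  have cs : ∀ {q : ℂ → ℂ}, (∀ z, z ∉ Metric.ball (0:ℂ) 1 → q z = 0) → HasCompactSupport q :=
    fun {q} h => HasCompactSupport.of_support_subset_isCompact (isCompact_closedBall (0:ℂ) 1)
      fun z hz => by
        by_contra hn
        exact hz (h z fun hm => hn (Metric.ball_subset_closedBall hm))
  obtain ⟨C, hC⟩ := ha.bounded_above_of_compact_support (cs ha0)
  have hk : Integrable ((Metric.ball (0:ℂ) 2).indicator fun z : ℂ => z⁻¹) :=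
    ((inv_locInt.integrableOn_isCompact (isCompact_closedBall 0 2)).mono_set
      Metric.ball_subset_closedBall).integrable_indicator Metric.isOpen_ball.measurableSet
  have hbi : Integrable b := hb.integrable_of_hasCompactSupport (cs hb0)
  have h := hbi.convolution_integrand (ContinuousLinearMap.mul ℝ ℂ) hk
  have h2 := h.bdd_mul (f := fun p : ℂ × ℂ => a p.1) (c := C)
    (ha.comp continuous_fst).aestronglyMeasurable (Eventually.of_forall fun p => hC p.1)
  refine h2.congr (Eventually.of_forall fun p => ?_)
  simp only [ContinuousLinearMap.mul_apply']
  by_cases h1 : p.1 ∈ Metric.ball (0:ℂ) 1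
  · by_cases h3 : p.2 ∈ Metric.ball (0:ℂ) 1
    · rw [indicator_of_mem, div_eq_mul_inv, mul_assoc]
      simp only [mem_ball_zero_iff] at *
      linarith [norm_sub_le p.1 p.2]
    · rw [hb0 _ h3]; simp
  · rw [ha0 _ h1]; simp

include hG hc hs in
/-- `F = G λ P` is an admissible function in the Cauchy–Pompeiu formula. -/
lemma glp {P : ℂ → ℂ} (hP : ContDiff ℝ 1 P) :
    ContDiff ℝ 1 (fun z => (G z : ℂ) * (lam z : ℂ) * P z) ∧
    HasCompactSupport (fun z => (G z : ℂ) * (lam z : ℂ) * P z) ∧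
    ∀ z, dbar (fun z => (G z : ℂ) * (lam z : ℂ) * P z) z =
      dbar (fun x => (G x : ℂ)) z * lam z * P z + (G z : ℂ) * ((lam z : ℂ) ^ 2 * z / 2) * P z +
      (G z : ℂ) * lam z * dbar P z := by
  have hGc : ContDiff ℝ 1 (fun x => (G x : ℂ)) := Complex.ofRealCLM.contDiff.comp hG
  have hlc : ∀ z ∈ Metric.ball (0:ℂ) 1, ContDiffAt ℝ 1 (fun x => (lam x : ℂ)) z := fun z hz =>
    Complex.ofRealCLM.contDiff.contDiffAt.comp z ((lam_contDiffAt hz).of_le (by simp))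
  have hev : ∀ z, z ∉ tsupport G → (fun z => (G z : ℂ) * (lam z : ℂ) * P z) =ᶠ[𝓝 z] fun _ => 0 := by
    intro z hz
    filter_upwards [(isClosed_tsupport G).isOpen_compl.mem_nhds hz] with x hx
    rw [image_eq_zero_of_notMem_tsupport hx]; simp
  refine ⟨contDiff_iff_contDiffAt.2 fun z => ?_, ?_, fun z => ?_⟩
  · by_cases hz : z ∈ tsupport G
    · exact (hGc.contDiffAt.mul (hlc z (hs hz))).mul hP.contDiffAt
    · exact contDiffAt_const.congr_of_eventuallyEq (hev z hz)
  · refine HasCompactSupport.of_support_subset_isCompact hc.isCompact fun z hz => ?_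
    by_contra hn
    exact hz (hev z hn).self_of_nhds
  · by_cases hz : z ∈ tsupport G
    · have d1 := hGc.differentiable (by norm_num) z
      have d2 := (hlc z (hs hz)).differentiableAt (by norm_num)
      have d3 := hP.differentiable (by norm_num) z
      rw [dbar_mul (F := fun x => (G x : ℂ) * (lam x : ℂ)) (K := P) (d1.mul d2) d3, dbar_mul d1 d2, dbar_lam (hs hz)]
      ring
    · rw [dbar_zero hz, image_eq_zero_of_notMem_tsupport hz]
      unfold dbar
      rw [(hev z hz).fderiv_eq]; simp

include hG hc hs in
/-- The isoperimetric inequality of the hyperbolic plane in functional form. It is obtained from the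
double integral of `∂̄G(x)λ(x) ∂̄G(y)λ(y) conj(x-y)/(x-y)`, whose kernel has modulus one and which
two applications of the Cauchy–Pompeiu formula evaluate exactly. -/
lemma iso : 4 * π * (∫ z, G z ^ 2 * lam z ^ 2) + (∫ z, G z * lam z ^ 2) ^ 2 ≤
    (∫ z, ‖fderiv ℝ G z‖ * lam z) ^ 2 := by
  set Gc : ℂ → ℂ := fun x => (G x : ℂ) with hGc
  set D : ℂ → ℂ := fun z => dbar Gc z * lam z with hD
  set g : ℂ → ℂ := fun z => Gc z * ((lam z : ℂ) ^ 2 / 2) with hg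
  have hGcc : Continuous Gc := Complex.continuous_ofReal.comp hG.continuous
  have hG0 : ∀ z, z ∉ tsupport G → Gc z = 0 := fun z hz => by
    simp only [hGc]; rw [image_eq_zero_of_notMem_tsupport hz, Complex.ofReal_zero]
  have hlamc : ContinuousOn (fun z => (lam z : ℂ)) (Metric.ball 0 1) :=
    Complex.continuous_ofReal.comp_continuousOn lam_continuousOn
  have hDc : Continuous D := cont_mul hs (dbar_cont hG) (fun z hz => dbar_zero hz) hlamc
  have hgc : Continuous g := cont_mul hs hGcc hG0 ((hlamc.pow 2).div_const 2)
  have hD0 : ∀ z, z ∉ tsupport G → D z = 0 := fun z hz => by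
    simp only [hD, hGc]; rw [dbar_zero hz, zero_mul]
  have hg0 : ∀ z, z ∉ tsupport G → g z = 0 := fun z hz => by
    simp only [hg]; rw [hG0 z hz, zero_mul]
  have cs : ∀ {q : ℂ → ℂ}, (∀ z, z ∉ tsupport G → q z = 0) → HasCompactSupport q := fun {q} h =>
    HasCompactSupport.of_support_subset_isCompact hc.isCompact fun z hz => by
      by_contra hn
      exact hz (h z hn)
  -- Cauchy–Pompeiu for `y ↦ G y λ(y) conj (x - y)`, which vanishes at `y = x`
  have hN : ∀ x, ∫ y, D y * (conj (x - y) / (x - y)) = ∫ y, g y * ((1 - conj x * y) / (x - y)) := by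
    intro x
    obtain ⟨f1, f2, f3⟩ := glp hG hc hs (P := fun y => conj x + conj y * (-1))
      (contDiff_const.add ((Complex.conjCLE.contDiff).mul contDiff_const))
    have hp := pompeiu' f1 f2 x
    have i1 : Integrable fun y => D y * (conj (x - y)) / (y - x) :=
      int_div (by fun_prop) ((cs hD0).mul_right) x
    have i2 : Integrable fun y => g y * (1 - conj x * y) / (y - x) :=
      int_div (by fun_prop) ((cs hg0).mul_right) x
    have e : ∀ y, dbar (fun z => (G z : ℂ) * (lam z : ℂ) * (conj x + conj z * (-1))) y / (y - x) =
        D y * (conj (x - y)) / (y - x) - g y * (1 - conj x * y) / (y - x) := by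
      intro y
      rw [← sub_div, f3, dbar_conj_affine]
      congr 1
      by_cases hy : y ∈ tsupport G
      · have hpos := one_sub_pos (hs hy)
        have hpc : ((1 - ‖y‖ ^ 2 : ℝ) : ℂ) ≠ 0 := by exact_mod_cast hpos.ne'
        have hn : (‖y‖ ^ 2 : ℂ) = y * conj y := by
          rw [Complex.mul_conj, Complex.normSq_eq_norm_sq]; push_cast; rfl
        simp only [hD, hg, hGc, lam, map_sub]
        push_cast at hpc ⊢
        rw [hn] at hpc ⊢
        field_simp
        ring
      · have := hD0 y hy
        simp only [hD, hGc] at this ⊢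
        rw [dbar_zero hy, hg0 y hy, image_eq_zero_of_notMem_tsupport hy]
        simp
    rw [integral_congr_ae (Eventually.of_forall e), integral_sub i1 i2] at hp
    simp only [mul_neg, mul_one, add_neg_cancel, mul_zero] at hp
    have e1 : ∀ y, D y * (conj (x - y) / (x - y)) = -(D y * (conj (x - y)) / (y - x)) := fun y => by
      rw [← neg_sub x y, div_neg, neg_neg, mul_div_assoc]
    have e2 : ∀ y, g y * ((1 - conj x * y) / (x - y)) = -(g y * (1 - conj x * y) / (y - x)) :=
      fun y => by rw [← neg_sub x y, div_neg, neg_neg, mul_div_assoc]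
    simp only [e1, e2, integral_neg]
    rw [sub_eq_zero.1 hp]
  -- Cauchy–Pompeiu for `x ↦ G x λ(x) (1 - conj x * y)`, whose value at `x = y` is `2 G y`
  have hM : ∀ y, y ∈ tsupport G → ∫ x, D x * ((1 - conj x * y) / (x - y)) =
      -(2 * π) * G y - ∫ x, g x := by
    intro y hy
    obtain ⟨f1, f2, f3⟩ := glp hG hc hs (P := fun x => 1 + conj x * (-y))
      (contDiff_const.add ((Complex.conjCLE.contDiff).mul contDiff_const))
    have hp := pompeiu' f1 f2 y
    have i1 : Integrable fun x => D x * (1 - conj x * y) / (x - y) :=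
      int_div (by fun_prop) ((cs hD0).mul_right) y
    have i2 : Integrable g := hgc.integrable_of_hasCompactSupport (cs hg0)
    have e : ∀ x, x ≠ y →
        dbar (fun z => (G z : ℂ) * (lam z : ℂ) * (1 + conj z * (-y))) x / (x - y) =
        D x * (1 - conj x * y) / (x - y) + g x := by
      intro x hxy
      have hne : x - y ≠ 0 := sub_ne_zero.2 hxy
      rw [f3, dbar_conj_affine, div_add' _ _ _ hne]
      congr 1
      by_cases hx : x ∈ tsupport G
      · have hpos := one_sub_pos (hs hx)
        have hpc : ((1 - ‖x‖ ^ 2 : ℝ) : ℂ) ≠ 0 := by exact_mod_cast hpos.ne'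
        have hn : (‖x‖ ^ 2 : ℂ) = x * conj x := by
          rw [Complex.mul_conj, Complex.normSq_eq_norm_sq]; push_cast; rfl
        simp only [hD, hg, hGc, lam]
        push_cast at hpc ⊢
        rw [hn] at hpc ⊢
        field_simp
        ring
      · simp only [hD, hGc, hg]
        rw [dbar_zero hx, image_eq_zero_of_notMem_tsupport hx]
        simp
    have hae : ∀ᵐ x : ℂ, x ≠ y := by simp [ae_iff]
    rw [integral_congr_ae (hae.mono e), integral_add i1 i2] at hp
    have e3 : (G y : ℂ) * (lam y : ℂ) * (1 + conj y * (-y)) = 2 * G y := by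
      have hpos := one_sub_pos (hs hy)
      have hpc : ((1 - ‖y‖ ^ 2 : ℝ) : ℂ) ≠ 0 := by exact_mod_cast hpos.ne'
      have hn : (‖y‖ ^ 2 : ℂ) = y * conj y := by
        rw [Complex.mul_conj, Complex.normSq_eq_norm_sq]; push_cast; rfl
      simp only [lam]
      push_cast at hpc ⊢
      rw [hn] at hpc ⊢
      field_simp
      ring
    rw [e3] at hp
    simp only [← mul_div_assoc]
    linear_combination hp
  -- Fubini brings the inner integral of `hN` into the form evaluated by `hM`
  have hQ : ∫ x, D x * ∫ y, D y * (conj (x - y) / (x - y)) =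
      -π * (∫ z, G z ^ 2 * lam z ^ 2 : ℝ) - 1 / 4 * (∫ z, G z * lam z ^ 2 : ℝ) ^ 2 := by
    have h_int : Integrable (Function.uncurry fun x y => D x * (g y * ((1 - conj x * y) / (x - y))))
        (volume.prod volume) := by
      have hb : ∀ {q : ℂ → ℂ}, (∀ z, z ∉ tsupport G → q z = 0) → ∀ z, z ∉ Metric.ball (0:ℂ) 1 →
          q z = 0 := fun h z hz => h z fun hm => hz (hs hm)
      have k1 := prod_int hDc hgc (hb hD0) (hb hg0)
      have k2 := prod_int (a := fun x => D x * conj x) (b := fun y => g y * y) (by fun_prop)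
        (by fun_prop) (fun z hz => by simp only [hb hD0 z hz, zero_mul])
        (fun z hz => by simp only [hb hg0 z hz, zero_mul])
      refine (k1.sub k2).congr (Eventually.of_forall fun p => ?_)
      simp only [Function.uncurry, Pi.sub_apply]
      ring
    have s1 : ∀ x, D x * ∫ y, D y * (conj (x - y) / (x - y)) =
        ∫ y, D x * (g y * ((1 - conj x * y) / (x - y))) := fun x => by
      rw [hN x, integral_const_mul]
    have s2 : ∀ y, ∫ x, D x * (g y * ((1 - conj x * y) / (x - y))) =
        g y * (-(2 * π) * G y) - g y * ∫ x, g x := fun y => by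
      have : ∀ x, D x * (g y * ((1 - conj x * y) / (x - y))) =
        g y * (D x * ((1 - conj x * y) / (x - y))) := fun x => by ring
      simp only [this, integral_const_mul]
      by_cases hy : y ∈ tsupport G
      · rw [hM y hy]; ring
      · rw [hg0 y hy]; simp
    have s3 : ∀ z, g z = ((G z * lam z ^ 2 / 2 : ℝ) : ℂ) := fun z => by
      simp only [hg, hGc]; push_cast; ring
    have s4 : ∫ z, g z = ((1 / 2 * ∫ z, G z * lam z ^ 2 : ℝ) : ℂ) := by
      simp only [s3]
      rw [integral_complex_ofReal]
      congr 1
      rw [← integral_const_mul]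
      congr 1; ext z; ring
    have s5 : ∫ z, g z * (-(2 * π) * G z) = ((-π * ∫ z, G z ^ 2 * lam z ^ 2 : ℝ) : ℂ) := by
      have : ∀ z, g z * (-(2 * π) * G z) = ((-π * (G z ^ 2 * lam z ^ 2) : ℝ) : ℂ) := fun z => by
        rw [s3]; push_cast; ring
      simp only [this]
      rw [integral_complex_ofReal, integral_const_mul]
    simp only [s1]
    rw [integral_integral_swap h_int]
    simp only [s2]
    have i3 : Integrable fun z => g z * (-(2 * π) * G z) :=
      (hgc.mul (continuous_const.mul hGcc)).integrable_of_hasCompactSupport (cs hg0).mul_right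
    have i4 : Integrable fun z => g z * ∫ x, g x :=
      (hgc.integrable_of_hasCompactSupport (cs hg0)).mul_const _
    rw [integral_sub i3 i4, integral_mul_const, s5, s4]
    push_cast
    ring
  have hDn : ∀ z, ‖D z‖ ≤ 1 / 2 * (‖fderiv ℝ G z‖ * lam z) := fun z => by
    by_cases hz : z ∈ tsupport G
    · have h1 := lam_pos (hs hz)
      simp only [hD]
      rw [norm_mul, Complex.norm_real, Real.norm_eq_abs, abs_of_pos h1, ← mul_assoc]
      exact mul_le_mul_of_nonneg_right (norm_dbar_le hG z) h1.le
    · have h0 : fderiv ℝ G z = 0 :=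
        image_eq_zero_of_notMem_tsupport fun hm => hz (tsupport_fderiv_subset ℝ hm)
      rw [hD0 z hz, h0]; simp
  have hDi : Integrable D := hDc.integrable_of_hasCompactSupport (cs hD0)
  have hRi : Integrable fun z => ‖fderiv ℝ G z‖ * lam z := by
    have hcf : Continuous fun z => ((‖fderiv ℝ G z‖ : ℂ) * (lam z : ℂ)) :=
      cont_mul hs (Complex.continuous_ofReal.comp (hG.continuous_fderiv (by norm_num)).norm)
        (fun z hz => by
          have h0 : fderiv ℝ G z = 0 :=
            image_eq_zero_of_notMem_tsupport fun hm => hz (tsupport_fderiv_subset ℝ hm)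
          simp [h0]) hlamc
    have := (hcf.integrable_of_hasCompactSupport (μ := volume) (cs fun z hz => by
          have h0 : fderiv ℝ G z = 0 :=
            image_eq_zero_of_notMem_tsupport fun hm => hz (tsupport_fderiv_subset ℝ hm)
          rw [h0]; simp)).re
    refine this.congr (Eventually.of_forall fun z => ?_)
    simp [← Complex.ofReal_mul]
  have hD1 : ∫ z, ‖D z‖ ≤ 1 / 2 * ∫ z, ‖fderiv ℝ G z‖ * lam z := by
    rw [← integral_const_mul]
    exact integral_mono hDi.norm (hRi.const_mul _) hDn
  have hQn : ‖∫ x, D x * ∫ y, D y * (conj (x - y) / (x - y))‖ ≤ (∫ z, ‖D z‖) * ∫ z, ‖D z‖ := by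
    rw [← integral_mul_const]
    refine norm_integral_le_of_norm_le (hDi.norm.mul_const _) (Eventually.of_forall fun x => ?_)
    rw [norm_mul]
    refine mul_le_mul_of_nonneg_left ?_ (norm_nonneg _)
    refine norm_integral_le_of_norm_le hDi.norm (Eventually.of_forall fun y => ?_)
    rw [norm_mul, norm_div, Complex.norm_conj]
    exact mul_le_of_le_one_right (norm_nonneg _) (div_self_le_one _)
  have hA : 0 ≤ ∫ z, G z ^ 2 * lam z ^ 2 := integral_nonneg fun z => by positivity
  set A := ∫ z, G z ^ 2 * lam z ^ 2
  set A1 := ∫ z, G z * lam z ^ 2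
  rw [hQ] at hQn
  have e : (-π * (A : ℂ) - 1 / 4 * (A1 : ℂ) ^ 2) = ((-(π * A + 1 / 4 * A1 ^ 2) : ℝ) : ℂ) := by
    push_cast; ring
  rw [e, Complex.norm_real, norm_neg, Real.norm_eq_abs, abs_of_nonneg (by positivity)] at hQn
  have h0 : 0 ≤ ∫ z, ‖D z‖ := integral_nonneg fun z => norm_nonneg _
  nlinarith

end iso

/-! ### Superlevel sets and the differential inequality for their hyperbolic area -/

/-- Hyperbolic area of the superlevel set `{|U| > t}`. -/
def mu (U : ℂ → ℝ) (t : ℝ) : ℝ := ∫ z in {z | t < |U z|}, lam z ^ 2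

section layer
variable {U : ℂ → ℝ} (hU : ContDiff ℝ 1 U) (hc : HasCompactSupport U)
  (hs : tsupport U ⊆ Metric.ball (0:ℂ) 1)

include hc hs in
lemma int_lam {F : ℂ → ℝ} (hF : Continuous F) (h0 : ∀ z, z ∉ tsupport U → F z = 0) (n : ℕ) :
    Integrable fun z => F z * lam z ^ n := by
  have h1 : IntegrableOn (fun z => F z * lam z ^ n) (tsupport U) :=
    (hF.continuousOn.mul ((lam_continuousOn.mono hs).pow n)).integrableOn_compact hc.isCompact
  refine (integrableOn_iff_integrable_of_support_subset fun z hz => ?_).1 h1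
  by_contra hn
  exact hz (by simp [h0 z hn])

include hc hs in
lemma lam_sq_int : IntegrableOn (fun z => lam z ^ 2) (tsupport U) :=
  ((lam_continuousOn.mono hs).pow 2).integrableOn_compact hc.isCompact

lemma superlevel_subset {t : ℝ} (ht : 0 ≤ t) : {z | t < |U z|} ⊆ tsupport U := fun z hz => by
  refine subset_tsupport U fun h => ?_
  simp only [mem_ofPred_eq, h, abs_zero] at hz
  linarith

include hU in
lemma meas_gt (t : ℝ) : MeasurableSet {z | t < |U z|} :=
  (isOpen_lt continuous_const hU.continuous.abs).measurableSet

include hc hs in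
lemma mu_int {t : ℝ} (ht : 0 ≤ t) : IntegrableOn (fun z => lam z ^ 2) {z | t < |U z|} :=
  (lam_sq_int hc hs).mono_set (superlevel_subset ht)

lemma mu_nonneg (t : ℝ) : 0 ≤ mu U t := integral_nonneg fun _ => sq_nonneg _

include hc hs in
lemma mu_anti {s t : ℝ} (h0 : 0 ≤ s) (hst : s ≤ t) : mu U t ≤ mu U s :=
  setIntegral_mono_set (mu_int hc hs h0) (Eventually.of_forall fun _ => sq_nonneg _)
    (Eventually.of_forall fun _ hz => lt_of_le_of_lt hst hz)

include hU hc hs in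
/-- `layer` with a loss `ε`, coming from a continuous cut-off of the interval `(t1, t2)`. -/
lemma layer_eps {t1 t2 ε : ℝ} (h1 : 0 ≤ t1) (h12 : t1 < t2) (hε : 0 < ε) (hε2 : 2 * ε ≤ t2 - t1) :
    (t2 - t1 - 2 * ε) ^ 2 * (4 * π * mu U t2 + mu U t2 ^ 2) ≤
      (∫ z in {z | t1 < |U z| ∧ |U z| < t2}, ‖fderiv ℝ U z‖ ^ 2) * (mu U t1 - mu U t2) := by
  set κ : ℝ → ℝ := fun t => max 0 (min 1 (min (t - t1) (t2 - t) / ε)) with hκ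
  have κc : Continuous κ := by fun_prop
  have κ0 : ∀ t, 0 ≤ κ t := fun t => le_max_left _ _
  have κ1 : ∀ t, κ t ≤ 1 := fun t => max_le zero_le_one (min_le_left _ _)
  have κz : ∀ t, t ≤ t1 ∨ t2 ≤ t → κ t = 0 := fun t ht => by
    refine max_eq_left ((min_le_right _ _).trans (div_nonpos_of_nonpos_of_nonneg ?_ hε.le))
    rcases ht with h | h
    · exact (min_le_left _ _).trans (by linarith)
    · exact (min_le_right _ _).trans (by linarith)
  have κo : ∀ t ∈ Icc (t1 + ε) (t2 - ε), κ t = 1 := fun t ht => by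
    have : 1 ≤ min (t - t1) (t2 - t) / ε := by
      rw [le_div_iff₀ hε, one_mul]; exact le_min (by linarith [ht.1]) (by linarith [ht.2])
    simp only [hκ, min_eq_left this]; norm_num
  have κi : ∀ a b, IntervalIntegrable κ volume a b := fun a b => κc.intervalIntegrable a b
  set K : ℝ → ℝ := fun x => ∫ t in (0)..x, κ t with hK
  have Kd : ∀ x, HasDerivAt K (κ x) x := fun x => κc.integral_hasStrictDerivAt 0 x |>.hasDerivAt
  have KC : ContDiff ℝ 1 K := by
    rw [contDiff_one_iff_deriv]
    exact ⟨fun x => (Kd x).differentiableAt, by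
      rw [show deriv K = κ from funext fun x => (Kd x).deriv]; exact κc⟩
  have Kz : ∀ x ≤ t1, K x = 0 := fun x hx => by
    simp only [hK]
    rw [intervalIntegral.integral_congr (g := fun _ => 0), intervalIntegral.integral_zero]
    intro t ht
    refine κz t (Or.inl (ht.2.trans (max_le h1 hx)))
  have Kp : ∀ x, 0 ≤ K x := fun x => by
    rcases le_total x t1 with h | h
    · rw [Kz x h]
    · exact intervalIntegral.integral_nonneg (h1.trans h) fun t _ => κ0 t
  have Kt : ∀ x, t2 ≤ x → K x = K t2 := fun x hx => by
    simp only [hK]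
    rw [← intervalIntegral.integral_add_adjacent_intervals (κi 0 t2) (κi t2 x),
      intervalIntegral.integral_congr (a := t2) (b := x) (g := fun _ => 0)]
    · simp
    intro t ht
    rw [uIcc_of_le hx] at ht
    exact κz t (Or.inr ht.1)
  have Kl : t2 - t1 - 2 * ε ≤ K t2 := by
    have := intervalIntegral.integral_mono_interval (a := t1 + ε) (b := t2 - ε) (c := 0) (d := t2)
      (by linarith) (by linarith) (by linarith) (Eventually.of_forall fun t => κ0 t) (κi 0 t2)
    rw [intervalIntegral.integral_congr (g := fun _ => 1)] at this
    · rw [intervalIntegral.integral_const, smul_eq_mul] at this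
      simp only [hK]; linarith
    · intro t ht
      rw [uIcc_of_le (by linarith)] at ht
      exact κo t ht
  set G : ℂ → ℝ := fun z => K (U z) + K (-U z) with hG
  have GC : ContDiff ℝ 1 G := (KC.comp hU).add (KC.comp hU.neg)
  have G0 : ∀ z, U z = 0 → G z = 0 := fun z hz => by
    simp only [hG, hz, neg_zero, Kz 0 h1, add_zero]
  have Gsup : tsupport G ⊆ tsupport U := closure_mono fun z hz hz0 => hz (G0 z hz0)
  have Gc : HasCompactSupport G := hc.mono' (subset_closure.trans Gsup)
  have Gt : ∀ z, t2 < |U z| → G z = K t2 := fun z hz => by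
    simp only [hG]
    rcases lt_abs.1 hz with h | h
    · rw [Kt _ h.le, Kz (-U z) (by linarith), add_zero]
    · rw [Kt _ h.le, Kz (U z) (by linarith), zero_add]
  have Gp : ∀ z, 0 ≤ G z := fun z => add_nonneg (Kp _) (Kp _)
  set S : Set ℂ := {z | t1 < |U z| ∧ |U z| < t2} with hS
  have Sm : MeasurableSet S := ((isOpen_lt continuous_const hU.continuous.abs).inter
    (isOpen_lt hU.continuous.abs continuous_const)).measurableSet
  have Gf : ∀ z, ‖fderiv ℝ G z‖ ≤ S.indicator (fun z => ‖fderiv ℝ U z‖) z := fun z => by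
    have hd := (hU.differentiable (by norm_num) z).hasFDerivAt
    have e : HasFDerivAt G (κ (U z) • fderiv ℝ U z + κ (-U z) • -fderiv ℝ U z) z :=
      ((Kd (U z)).comp_hasFDerivAt z hd).add
        ((Kd (-U z)).comp_hasFDerivAt (f := fun z => -U z) z hd.neg)
    rw [e.fderiv]
    have e2 : κ (U z) • fderiv ℝ U z + κ (-U z) • -fderiv ℝ U z =
      (κ (U z) - κ (-U z)) • fderiv ℝ U z := by rw [smul_neg, sub_smul, sub_eq_add_neg]
    rw [e2, norm_smul]
    by_cases hz : z ∈ S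
    · rw [indicator_of_mem hz]
      refine mul_le_of_le_one_left (norm_nonneg _) ?_
      rw [Real.norm_eq_abs, abs_le]
      constructor <;> linarith [κ0 (U z), κ1 (U z), κ0 (-U z), κ1 (-U z)]
    · rw [indicator_of_notMem hz]
      have : κ (U z) = 0 ∧ κ (-U z) = 0 := by
        simp only [hS, mem_ofPred_eq, not_and_or, not_lt] at hz
        rcases hz with hz | hz
        · exact ⟨κz _ (Or.inl ((le_abs_self _).trans hz)), κz _ (Or.inl ((neg_le_abs _).trans hz))⟩
        · rcases le_abs.1 hz with h | h
          · exact ⟨κz _ (Or.inr h), κz _ (Or.inl (by linarith))⟩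
          · exact ⟨κz _ (Or.inl (by linarith)), κz _ (Or.inr h)⟩
      rw [this.1, this.2]; simp
  have hiso := iso GC Gc (Gsup.trans hs)
  have ht2 : 0 ≤ t2 := h1.trans h12.le
  have hm2 := meas_gt hU t2
  have Gz : ∀ z, z ∉ tsupport U → G z = 0 := fun z hz => G0 z (image_eq_zero_of_notMem_tsupport hz)
  have L1 : K t2 ^ 2 * mu U t2 ≤ ∫ z, G z ^ 2 * lam z ^ 2 := by
    have hi := int_lam hc hs (GC.continuous.pow 2) (fun z hz => by simp [Gz z hz]) 2
    refine le_trans (le_of_eq ?_) (setIntegral_le_integral (s := {z | t2 < |U z|}) hi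
      (Eventually.of_forall fun z => by positivity))
    unfold mu
    rw [← integral_const_mul]
    refine setIntegral_congr_fun hm2 fun z hz => ?_
    simp only [Gt z hz]
  have L2 : K t2 * mu U t2 ≤ ∫ z, G z * lam z ^ 2 := by
    have hi := int_lam hc hs GC.continuous Gz 2
    refine le_trans (le_of_eq ?_) (setIntegral_le_integral (s := {z | t2 < |U z|}) hi
      (Eventually.of_forall fun z => mul_nonneg (Gp z) (sq_nonneg _)))
    unfold mu
    rw [← integral_const_mul]
    refine setIntegral_congr_fun hm2 fun z hz => ?_
    simp only [Gt z hz]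
  have Fc : Continuous fun z => ‖fderiv ℝ U z‖ := (hU.continuous_fderiv (by norm_num)).norm
  have Fz : ∀ z, z ∉ tsupport U → ‖fderiv ℝ U z‖ = 0 := fun z hz => by
    have h0 : fderiv ℝ U z = 0 :=
      image_eq_zero_of_notMem_tsupport fun hm => hz (tsupport_fderiv_subset ℝ hm)
    rw [h0, norm_zero]
  have Sl : S ⊆ {z | t1 < |U z|} := fun z hz => hz.1
  have i1 : IntegrableOn (fun z => ‖fderiv ℝ U z‖ * lam z) S := by
    simpa using (int_lam hc hs Fc Fz 1).integrableOn (s := S)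
  have i2 : IntegrableOn (fun z => ‖fderiv ℝ U z‖ ^ 2) S := by
    have := (int_lam hc hs (Fc.pow 2) (fun z hz => by simp [Fz z hz]) 0).integrableOn (s := S)
    simpa using this
  have i3 : IntegrableOn (fun z => lam z ^ 2) S := (mu_int hc hs h1).mono_set Sl
  have lp : ∀ z ∈ S, 0 < lam z := fun z hz => lam_pos (hs (superlevel_subset h1 (Sl hz)))
  have F0 : ∀ z ∉ S, ‖fderiv ℝ G z‖ = 0 := fun z hz =>
    le_antisymm ((Gf z).trans (by rw [indicator_of_notMem hz])) (norm_nonneg _)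
  have R0 : 0 ≤ ∫ z, ‖fderiv ℝ G z‖ * lam z := integral_nonneg fun z => by
    by_cases hz : z ∈ S
    · exact mul_nonneg (norm_nonneg _) (lp z hz).le
    · simp [F0 z hz]
  have R1 : ∫ z, ‖fderiv ℝ G z‖ * lam z ≤ ∫ z in S, ‖fderiv ℝ U z‖ * lam z := by
    rw [← integral_indicator Sm]
    refine integral_mono_of_nonneg (Eventually.of_forall fun z => ?_) (i1.integrable_indicator Sm)
      (Eventually.of_forall fun z => ?_)
    · by_cases hz : z ∈ S
      · exact mul_nonneg (norm_nonneg _) (lp z hz).le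
      · simp [F0 z hz]
    · by_cases hz : z ∈ S
      · have := Gf z
        rw [indicator_of_mem hz] at this
        simp only [indicator_of_mem hz]
        exact mul_le_mul_of_nonneg_right this (lp z hz).le
      · simp [F0 z hz, indicator_of_notMem hz]
  have R2 : (∫ z in S, ‖fderiv ℝ U z‖ * lam z) ^ 2 ≤
      (∫ z in S, lam z ^ 2) * ∫ z in S, ‖fderiv ℝ U z‖ ^ 2 := by
    refine sq_le_of_forall (integral_nonneg fun _ => sq_nonneg _) fun c _ => ?_
    rw [abs_of_nonneg (R0.trans R1), ← integral_const_mul, ← integral_const_mul,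
      ← integral_add (i3.const_mul _) i2]
    refine integral_mono (i1.const_mul _) ((i3.const_mul _).add i2) fun z => ?_
    simp only
    nlinarith [sq_nonneg (c * lam z - ‖fderiv ℝ U z‖)]
  have R3 : ∫ z in S, lam z ^ 2 ≤ mu U t1 - mu U t2 := by
    have hd : Disjoint S {z | t2 < |U z|} :=
      disjoint_left.2 fun z hz hz2 => lt_asymm hz.2 hz2
    have := setIntegral_union hd hm2 i3 (mu_int hc hs ht2)
    have h4 : ∫ z in S ∪ {z | t2 < |U z|}, lam z ^ 2 ≤ mu U t1 :=
      setIntegral_mono_set (mu_int hc hs h1) (Eventually.of_forall fun _ => sq_nonneg _)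
        (Eventually.of_forall (union_subset Sl fun z hz => lt_trans h12 hz))
    unfold mu at h4 ⊢
    linarith
  have B0 : 0 ≤ ∫ z in S, ‖fderiv ℝ U z‖ ^ 2 := integral_nonneg fun _ => sq_nonneg _
  have hm0 := mu_nonneg (U := U) t2
  have hd0 : 0 ≤ t2 - t1 - 2 * ε := by linarith
  calc (t2 - t1 - 2 * ε) ^ 2 * (4 * π * mu U t2 + mu U t2 ^ 2)
      ≤ K t2 ^ 2 * (4 * π * mu U t2 + mu U t2 ^ 2) := by gcongr
    _ = 4 * π * (K t2 ^ 2 * mu U t2) + (K t2 * mu U t2) ^ 2 := by ring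
    _ ≤ 4 * π * (∫ z, G z ^ 2 * lam z ^ 2) + (∫ z, G z * lam z ^ 2) ^ 2 := by
        have := Kp t2
        gcongr
    _ ≤ (∫ z, ‖fderiv ℝ G z‖ * lam z) ^ 2 := hiso
    _ ≤ (∫ z in S, ‖fderiv ℝ U z‖ * lam z) ^ 2 := by gcongr
    _ ≤ _ := R2
    _ ≤ (mu U t1 - mu U t2) * ∫ z in S, ‖fderiv ℝ U z‖ ^ 2 := by gcongr
    _ = _ := mul_comm _ _

include hU hc hs in
/-- The isoperimetric inequality on the layer `t1 < |U| < t2`: the functional inequality `iso` is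
applied to a truncation of `|U|`. -/
lemma layer {t1 t2 : ℝ} (h1 : 0 ≤ t1) (h12 : t1 < t2) :
    (t2 - t1) ^ 2 * (4 * π * mu U t2 + mu U t2 ^ 2) ≤
      (∫ z in {z | t1 < |U z| ∧ |U z| < t2}, ‖fderiv ℝ U z‖ ^ 2) * (mu U t1 - mu U t2) := by
  have hc1 : Continuous fun ε : ℝ => (t2 - t1 - 2 * ε) ^ 2 * (4 * π * mu U t2 + mu U t2 ^ 2) := by
    fun_prop
  have hl := (hc1.tendsto 0).mono_left (nhdsWithin_le_nhds (s := Ioi 0))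
  simp only [mul_zero, sub_zero] at hl
  refine le_of_tendsto hl ?_
  filter_upwards [Ioo_mem_nhdsGT (show (0:ℝ) < (t2 - t1) / 2 by linarith)] with ε hε
  exact layer_eps hU hc hs h1 h12 hε.1 (by linarith [hε.2])

include hU hc hs in
/-- Right lower semicontinuity of the distribution function. -/
lemma mu_right {t v : ℝ} (h0 : 0 ≤ t) (hv : v < mu U t) : ∃ t' > t, v < mu U t' := by
  have ht : Tendsto (fun n : ℕ => mu U (t + 1 / ((n:ℝ) + 1))) atTop (𝓝 (mu U t)) := by
    have e : {z | t < |U z|} = ⋃ n : ℕ, {z | t + 1 / ((n:ℝ) + 1) < |U z|} := by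
      ext z
      simp only [mem_iUnion, mem_ofPred_eq]
      constructor
      · intro h
        obtain ⟨n, hn⟩ := exists_nat_one_div_lt (show 0 < |U z| - t by linarith)
        exact ⟨n, by linarith⟩
      · rintro ⟨n, hn⟩
        have : 0 < 1 / ((n:ℝ) + 1) := by positivity
        linarith
    unfold mu
    rw [e]
    refine tendsto_setIntegral_of_monotone (fun n => meas_gt hU _) ?_ (e ▸ mu_int hc hs h0)
    intro n k hnk z hz
    have : 1 / ((k:ℝ) + 1) ≤ 1 / ((n:ℝ) + 1) := by gcongr
    simp only [mem_ofPred_eq] at hz ⊢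
    linarith
  obtain ⟨n, hn⟩ := (ht.eventually_const_lt hv).exists
  exact ⟨_, by have : 0 < 1 / ((n:ℝ) + 1) := by positivity
               linarith, hn⟩

end layer

/-! ### The decreasing rearrangement -/

/-- Hyperbolic area of the disc of Euclidean radius `exp (-s / 2)`. -/
def vv (s : ℝ) : ℝ := 4 * π / (exp s - 1)

/-- The hyperbolic rearrangement of `|U|` in the logarithmic variable `s = -log |z|²`, extended by
zero to `s ≤ 0`. -/
def us (U : ℂ → ℝ) (s : ℝ) : ℝ := if s ≤ 0 then 0 else sSup {t | 0 ≤ t ∧ vv s < mu U t}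

lemma exp_sub_one_pos {s : ℝ} (hs : 0 < s) : 0 < exp s - 1 := by
  linarith [add_one_lt_exp hs.ne']

lemma vv_pos {s : ℝ} (hs : 0 < s) : 0 < vv s := by
  have := exp_sub_one_pos hs
  unfold vv; positivity

lemma vv_anti {s t : ℝ} (hs : 0 < s) (hst : s ≤ t) : vv t ≤ vv s := by
  have := exp_sub_one_pos hs
  unfold vv; gcongr

lemma vv_strictAnti {s t : ℝ} (hs : 0 < s) (hst : s < t) : vv t < vv s := by
  have := exp_sub_one_pos hs
  have := pi_pos
  unfold vv; gcongr

lemma vv_surj {x : ℝ} (hx : 0 < x) : ∃ s > 0, vv s = x := by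
  have := pi_pos
  refine ⟨log (1 + 4 * π / x), log_pos (by have : 0 < 4 * π / x := by positivity
                                           linarith), ?_⟩
  unfold vv
  rw [exp_log (by positivity)]
  field_simp
  ring

section rearr
variable {U : ℂ → ℝ} (hU : ContDiff ℝ 1 U) (hc : HasCompactSupport U)
  (hs : tsupport U ⊆ Metric.ball (0:ℂ) 1)

include hU hc in
lemma us_bdd : ∃ M : ℝ, 0 ≤ M ∧ ∀ s, 0 < s → ∀ t, (0 ≤ t ∧ vv s < mu U t) → t ≤ M := by
  obtain ⟨M, hM⟩ := hU.continuous.bounded_above_of_compact_support hc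
  refine ⟨M, (norm_nonneg _).trans (hM 0), fun s hs t ht => ?_⟩
  by_contra hn
  have e : {z | t < |U z|} = ∅ := eq_empty_iff_forall_notMem.2 fun z hz => by
    have h1 := hM z
    rw [Real.norm_eq_abs] at h1
    simp only [mem_ofPred_eq] at hz
    linarith
  have h2 := ht.2
  unfold mu at h2
  rw [e] at h2
  simp at h2
  linarith [vv_pos hs]

lemma us_nonneg (s : ℝ) : 0 ≤ us U s := by
  unfold us
  split_ifs with h
  · exact le_rfl
  · exact Real.sSup_nonneg fun t ht => ht.1

include hU hc in
lemma us_le : ∃ M : ℝ, ∀ s, us U s ≤ M := by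
  obtain ⟨M, h0, hM⟩ := us_bdd hU hc
  refine ⟨M, fun s => ?_⟩
  unfold us
  split_ifs with h
  · exact h0
  · exact Real.sSup_le (fun t ht => hM s (not_le.1 h) t ht) h0

include hU hc hs in
lemma lt_us {s t : ℝ} (h0 : 0 < s) (ht : 0 ≤ t) : t < us U s ↔ vv s < mu U t := by
  obtain ⟨M, _, hM⟩ := us_bdd hU hc
  have hb : BddAbove {t | 0 ≤ t ∧ vv s < mu U t} := ⟨M, fun t ht => hM s h0 t ht⟩
  unfold us
  rw [if_neg (not_le.2 h0)]
  constructor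
  · intro h
    have hne : {t | 0 ≤ t ∧ vv s < mu U t}.Nonempty := by
      by_contra hn
      rw [not_nonempty_iff_eq_empty] at hn
      rw [hn, Real.sSup_empty] at h
      linarith
    obtain ⟨t', ht', h2⟩ := exists_lt_of_lt_csSup hne h
    exact ht'.2.trans_le (mu_anti hc hs ht h2.le)
  · intro h
    obtain ⟨t', h1, h2⟩ := mu_right hU hc hs ht h
    exact h1.trans_le (le_csSup hb ⟨ht.trans h1.le, h2⟩)

include hU hc hs in
lemma us_mono : Monotone (us U) := fun a b hab => by
  rcases le_or_gt a 0 with h | h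
  · have : us U a = 0 := if_pos h
    rw [this]; exact us_nonneg b
  · by_contra! hn
    have h1 := (lt_us hU hc hs h (us_nonneg b)).1 hn
    exact lt_irrefl _ ((lt_us hU hc hs (h.trans_le hab) (us_nonneg b)).2
      ((vv_anti h hab).trans_lt h1))

include hU hc hs in
lemma us_zero : ∃ s0 > 0, ∀ s ≤ s0, us U s = 0 := by
  obtain ⟨s0, h0, hv⟩ := vv_surj (show 0 < mu U 0 + 1 by linarith [mu_nonneg (U := U) 0])
  refine ⟨s0, h0, fun s h => ?_⟩
  refine le_antisymm ?_ (us_nonneg s)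
  refine (us_mono hU hc hs h).trans ?_
  by_contra! hn
  have := (lt_us hU hc hs h0 le_rfl).1 hn
  linarith

include hU hc hs in
/-- `layer` between the levels `us a` and `us b`; the isoperimetric quotient of the hyperbolic discs of
areas `vv a` and `vv b` is evaluated explicitly. -/
lemma us_step {a b : ℝ} (ha : 0 < a) (hab : a < b) :
    4 * π * (us U b - us U a) ^ 2 * ((exp a - 1) / (exp b - 1)) ≤
      (b - a) * ∫ z in {z | us U a < |U z| ∧ |U z| < us U b}, ‖fderiv ℝ U z‖ ^ 2 := by
  set D := ∫ z in {z | us U a < |U z| ∧ |U z| < us U b}, ‖fderiv ℝ U z‖ ^ 2 with hD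
  have D0 : 0 ≤ D := integral_nonneg fun _ => sq_nonneg _
  have hb := ha.trans hab
  rcases (us_mono hU hc hs hab.le).eq_or_lt with h | h
  · rw [h]
    have : 0 ≤ (b - a) * D := mul_nonneg (by linarith) D0
    simpa using this
  have hu0 := us_nonneg (U := U) a
  have key : (us U b - us U a) ^ 2 * (4 * π * vv b + vv b ^ 2) ≤ D * (vv a - vv b) := by
    have hc1 : Continuous fun t : ℝ => (t - us U a) ^ 2 * (4 * π * vv b + vv b ^ 2) := by
      fun_prop
    have hl := (hc1.tendsto (us U b)).mono_left (nhdsWithin_le_nhds (s := Iio (us U b)))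
    refine le_of_tendsto hl ?_
    filter_upwards [Ioo_mem_nhdsLT h] with t ht
    have h1 := layer hU hc hs hu0 ht.1
    have h2 := (lt_us hU hc hs hb (hu0.trans ht.1.le)).1 ht.2
    have h3 : mu U (us U a) ≤ vv a :=
      not_lt.1 fun hn => lt_irrefl _ ((lt_us hU hc hs ha hu0).2 hn)
    have hvb := vv_pos hb
    have h4 : ∫ z in {z | us U a < |U z| ∧ |U z| < t}, ‖fderiv ℝ U z‖ ^ 2 ≤ D := by
      have Fc : Continuous fun z => ‖fderiv ℝ U z‖ := (hU.continuous_fderiv (by norm_num)).norm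
      have i2 := int_lam hc hs (Fc.pow 2) (fun z hz => by
        have h0 : fderiv ℝ U z = 0 :=
          image_eq_zero_of_notMem_tsupport fun hm => hz (tsupport_fderiv_subset ℝ hm)
        simp [h0]) 0
      simp only [pow_zero, mul_one] at i2
      exact setIntegral_mono_set i2.integrableOn (Eventually.of_forall fun _ => sq_nonneg _)
        (Eventually.of_forall fun z hz => ⟨hz.1, hz.2.trans ht.2⟩)
    have h5 := mu_anti (U := U) hc hs hu0 ht.1.le
    calc (t - us U a) ^ 2 * (4 * π * vv b + vv b ^ 2)
        ≤ (t - us U a) ^ 2 * (4 * π * mu U t + mu U t ^ 2) := by gcongr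
      _ ≤ _ := h1
      _ ≤ D * (mu U (us U a) - mu U t) := mul_le_mul_of_nonneg_right h4 (by linarith)
      _ ≤ D * (vv a - vv b) := mul_le_mul_of_nonneg_left (by linarith) D0
  have hA := exp_sub_one_pos ha
  have hB := exp_sub_one_pos hb
  have hAB : exp a < exp b := exp_lt_exp.2 hab
  have hpi := pi_pos
  have e1 : 4 * π * vv b + vv b ^ 2 = (4 * π) ^ 2 * exp b / (exp b - 1) ^ 2 := by
    unfold vv; field_simp; ring
  have e2 : vv a - vv b = 4 * π * (exp b - exp a) / ((exp a - 1) * (exp b - 1)) := by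
    unfold vv; field_simp; ring
  have e3 : exp b - exp a ≤ (b - a) * exp b := by
    have := add_one_le_exp (-(b - a))
    have e : exp a = exp b * exp (-(b - a)) := by rw [← exp_add]; ring_nf
    rw [e]
    nlinarith [exp_pos b]
  rw [e1, e2] at key
  have k2 : (us U b - us U a) ^ 2 * (4 * π) * exp b * ((exp a - 1) / (exp b - 1)) ≤
      D * (exp b - exp a) := by
    have h1 : (us U b - us U a) ^ 2 * ((4 * π) ^ 2 * exp b / (exp b - 1) ^ 2) *
        ((exp a - 1) * (exp b - 1) / (4 * π)) ≤
        D * (4 * π * (exp b - exp a) / ((exp a - 1) * (exp b - 1))) *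
        ((exp a - 1) * (exp b - 1) / (4 * π)) := by gcongr
    have r1 : (us U b - us U a) ^ 2 * ((4 * π) ^ 2 * exp b / (exp b - 1) ^ 2) *
        ((exp a - 1) * (exp b - 1) / (4 * π)) =
        (us U b - us U a) ^ 2 * (4 * π) * exp b * ((exp a - 1) / (exp b - 1)) := by
      field_simp
    have r2 : D * (4 * π * (exp b - exp a) / ((exp a - 1) * (exp b - 1))) *
        ((exp a - 1) * (exp b - 1) / (4 * π)) = D * (exp b - exp a) := by
      field_simp
    rwa [r1, r2] at h1
  have k3 : D * (exp b - exp a) ≤ D * ((b - a) * exp b) := mul_le_mul_of_nonneg_left e3 D0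
  have hE := exp_pos b
  have := k2.trans k3
  refine le_of_mul_le_mul_right ?_ hE
  linarith

end rearr

/-! ### The logarithmic variable and equimeasurability -/

/-- Image of the Lebesgue measure of the unit disc under `z ↦ -log ‖z‖²`. -/
def rho : Measure ℝ := (volume.restrict (Ioi 0)).withDensity fun s => ENNReal.ofReal (π * exp (-s))

lemma lintegral_exp_Ioi (a : ℝ) :
    ∫⁻ s in Ioi a, ENNReal.ofReal (π * exp (-s)) = ENNReal.ofReal (π * exp (-a)) := by
  rw [← ofReal_integral_eq_lintegral_ofReal, integral_const_mul, integral_exp_neg_Ioi]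
  · have := exp_neg_integrableOn_Ioi a one_pos
    simp only [neg_mul, one_mul] at this
    exact this.const_mul π
  · exact Eventually.of_forall fun s => by have := pi_pos; positivity

lemma rho_Ioi {a : ℝ} (ha : 0 ≤ a) : rho (Ioi a) = ENNReal.ofReal (π * exp (-a)) := by
  unfold rho
  rw [withDensity_apply _ measurableSet_Ioi, Measure.restrict_restrict measurableSet_Ioi,
    Ioi_inter_Ioi, max_eq_left ha, lintegral_exp_Ioi]

section radial
variable {E : Type*} [NormedAddCommGroup E] [MeasureSpace E] [BorelSpace E]
  [NullSingletonClass (volume : Measure E)]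
  (hb : ∀ r : ℝ, volume (Metric.closedBall (0:E) r) = ENNReal.ofReal r ^ 2 * ENNReal.ofReal π)
  (hb' : ∀ r : ℝ, volume (Metric.ball (0:E) r) = ENNReal.ofReal r ^ 2 * ENNReal.ofReal π)

include hb hb' in
/-- In a plane, i.e. a space whose balls of radius `r` have volume `π r²`, the variable
`-log ‖z‖²` has distribution `rho` on the unit ball. -/
lemma radial_map : (volume.restrict (Metric.ball (0:E) 1)).map (fun z => -2 * log ‖z‖) = rho := by
  have hT : Measurable fun z : E => -2 * log ‖z‖ := by fun_prop
  have hball : volume (Metric.ball (0:E) 1) = ENNReal.ofReal π := by rw [hb']; simp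
  have : IsFiniteMeasure (volume.restrict (Metric.ball (0:E) 1)) :=
    ⟨by rw [Measure.restrict_apply_univ, hball]; exact ENNReal.ofReal_lt_top⟩
  have : IsFiniteMeasure ((volume.restrict (Metric.ball (0:E) 1)).map (fun z => -2 * log ‖z‖)) :=
    Measure.isFiniteMeasure_map _ _
  refine Measure.ext_of_Ici _ _ fun a => ?_
  rw [Measure.map_apply hT measurableSet_Ici,
    Measure.restrict_apply (hT measurableSet_Ici)]
  rcases le_or_gt a 0 with ha | ha
  · have e1 : (fun z : E => -2 * log ‖z‖) ⁻¹' Ici a ∩ Metric.ball 0 1 = Metric.ball 0 1 := by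
      refine inter_eq_right.2 fun z hz => ?_
      have : ‖z‖ ≤ 1 := by simpa using (mem_ball_zero_iff.1 hz).le
      have := log_nonpos (norm_nonneg z) this
      simp only [mem_preimage, mem_Ici]
      linarith
    have e2 : rho (Ici a) = rho (Ioi 0) := by
      unfold rho
      rw [withDensity_apply _ measurableSet_Ioi, withDensity_apply _ measurableSet_Ici,
        Measure.restrict_restrict measurableSet_Ici, Measure.restrict_restrict measurableSet_Ioi,
        inter_self, inter_eq_right.2 (show Ioi (0:ℝ) ⊆ Ici a from fun x hx => ha.trans (le_of_lt hx))]
    rw [e1, e2, rho_Ioi le_rfl, hball]; simp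
  · have e1 : (fun z : E => -2 * log ‖z‖) ⁻¹' Ici a ∩ Metric.ball 0 1 =
        Metric.closedBall 0 (exp (-a / 2)) \ {0} := by
      ext z
      simp only [mem_inter_iff, mem_preimage, mem_Ici, mem_ball_zero_iff, Set.mem_sdiff,
        mem_closedBall_zero_iff, mem_singleton_iff]
      constructor
      · rintro ⟨h1, h2⟩
        have hz : z ≠ 0 := by rintro rfl; simp at h1; linarith
        exact ⟨(log_le_iff_le_exp (norm_pos_iff.2 hz)).1 (by linarith), hz⟩
      · rintro ⟨h1, hz⟩
        have := (log_le_iff_le_exp (norm_pos_iff.2 hz)).2 h1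
        exact ⟨by linarith, h1.trans_lt (exp_lt_one_iff.2 (by linarith))⟩
    have e2 : rho (Ici a) = rho (Ioi a) := by
      unfold rho
      rw [withDensity_apply _ measurableSet_Ioi, withDensity_apply _ measurableSet_Ici,
        Measure.restrict_restrict measurableSet_Ici, Measure.restrict_restrict measurableSet_Ioi]
      exact setLIntegral_congr (Ioi_ae_eq_Ici.symm.inter (ae_eq_refl _))
    rw [e1, e2, rho_Ioi ha.le, measure_sdiff_null (measure_singleton 0), hb,
      ← ENNReal.ofReal_pow (exp_pos _).le, ← ENNReal.ofReal_mul (by positivity), mul_comm,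
      ← exp_nat_mul]
    congr 3
    push_cast; ring

include hb hb' in
lemma radial_lintegral {F : ℝ → ENNReal} (hF : Measurable F) :
    ∫⁻ z in Metric.ball (0:E) 1, F (-2 * log ‖z‖) =
      ∫⁻ s in Ioi 0, ENNReal.ofReal (π * exp (-s)) * F s := by
  have hT : Measurable fun z : E => -2 * log ‖z‖ := by fun_prop
  rw [← lintegral_map hF hT, radial_map hb hb']
  unfold rho
  rw [lintegral_withDensity_eq_lintegral_mul _ (by fun_prop) hF]
  rfl

include hb hb' in
lemma radial_integral {F : ℝ → ℝ} (hF : Measurable F) (h0 : ∀ s, 0 ≤ F s) :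
    ∫ z in Metric.ball (0:E) 1, F (-2 * log ‖z‖) = ∫ s in Ioi 0, π * exp (-s) * F s := by
  have hT : Measurable fun z : E => -2 * log ‖z‖ := by fun_prop
  have hpi := pi_pos
  rw [integral_eq_lintegral_of_nonneg_ae (Eventually.of_forall fun z => h0 _)
      (hF.comp hT).aestronglyMeasurable,
    integral_eq_lintegral_of_nonneg_ae (Eventually.of_forall fun s =>
      mul_nonneg (by positivity) (h0 s)) (by fun_prop),
    radial_lintegral hb hb' (F := fun s => ENNReal.ofReal (F s)) (by fun_prop)]
  congr 1
  refine lintegral_congr fun s => ?_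
  rw [ENNReal.ofReal_mul (p := π * exp (-s)) (by positivity)]

end radial

lemma pi_coe : (NNReal.pi : ENNReal) = ENNReal.ofReal π := by
  rw [ENNReal.ofReal, toNNReal_of_nonneg pi_nonneg]; rfl

lemma radial_lintegral_C {F : ℝ → ENNReal} (hF : Measurable F) :
    ∫⁻ z in Metric.ball (0:ℂ) 1, F (-2 * log ‖z‖) =
      ∫⁻ s in Ioi 0, ENNReal.ofReal (π * exp (-s)) * F s :=
  radial_lintegral (fun r => by rw [Complex.volume_closedBall, pi_coe])
    (fun r => by rw [Complex.volume_ball, pi_coe]) hF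

lemma hasDerivAt_vv {s : ℝ} (hs : 0 < s) : HasDerivAt vv (-(16 * π * V s)) s := by
  have h := exp_sub_one_pos hs
  have h1 := ((((hasDerivAt_exp s).sub_const 1).inv h.ne').const_mul (4 * π))
  have e : vv = fun s => 4 * π * (exp s - 1)⁻¹ := by funext s; unfold vv; rw [div_eq_mul_inv]
  rw [e]
  refine h1.congr_deriv ?_
  unfold V
  have h2 := exp_neg_lt_one hs
  have h3 : 1 - exp (-s) ≠ 0 := by linarith
  rw [exp_neg] at h3 ⊢
  have h4 := (exp_pos s).ne'
  field_simp
  ring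

lemma vv_tendsto : Tendsto vv atTop (𝓝 0) := by
  unfold vv
  exact Tendsto.const_div_atTop (tendsto_atTop_add_const_right _ _ tendsto_exp_atTop) _

lemma lintegral_V_Ioi {a : ℝ} (ha : 0 < a) :
    ∫⁻ s in Ioi a, ENNReal.ofReal (16 * π * V s) = ENNReal.ofReal (vv a) := by
  have hp : ∀ s ∈ Ioi a, 0 ≤ 16 * π * V s := fun s hs => by
    have := V_pos (ha.trans hs); have := pi_pos; positivity
  have hd : ∀ s ∈ Ici a, HasDerivAt (fun s => -vv s) (16 * π * V s) s := fun s hs => by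
    exact (hasDerivAt_vv (ha.trans_le hs)).fun_neg.congr_deriv (by ring)
  have ht : Tendsto (fun s => -vv s) atTop (𝓝 0) := by simpa using vv_tendsto.neg
  rw [← ofReal_integral_eq_lintegral_ofReal (integrableOn_Ioi_deriv_of_nonneg' hd hp ht)
    ((ae_restrict_mem measurableSet_Ioi).mono hp),
    integral_Ioi_of_hasDerivAt_of_nonneg' hd hp ht]
  simp

/-- Bathtub principle: of two sets with the same `φ`-mass, the one on which `φ` is smaller has the
larger volume. -/
lemma bathtub {A B : Set ℂ} (hA : MeasurableSet A) (hB : MeasurableSet B) {φ : ℂ → ENNReal}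
    {c : ENNReal} (hc0 : c ≠ 0) (hc : c ≠ ⊤) (h1 : ∀ z ∈ A \ B, c ≤ φ z)
    (h2 : ∀ z ∈ B \ A, φ z ≤ c) (he : ∫⁻ z in A, φ z = ∫⁻ z in B, φ z)
    (hf : ∫⁻ z in B, φ z ≠ ⊤) : volume A ≤ volume B := by
  have i1 : c * volume (A \ B) ≤ ∫⁻ z in A \ B, φ z := by
    rw [← setLIntegral_const]
    exact setLIntegral_mono' (hA.diff hB) h1
  have i2 : ∫⁻ z in B \ A, φ z ≤ c * volume (B \ A) := by
    rw [← setLIntegral_const]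
    exact setLIntegral_mono' (hB.diff hA) h2
  have i3 := lintegral_inter_add_sdiff (μ := volume) φ A hB
  have i4 := lintegral_inter_add_sdiff (μ := volume) φ B hA
  rw [inter_comm] at i4
  have i5 : ∫⁻ z in A ∩ B, φ z ≠ ⊤ :=
    ne_top_of_le_ne_top hf (lintegral_mono_set inter_subset_right)
  have i6 : ∫⁻ z in A \ B, φ z = ∫⁻ z in B \ A, φ z := by
    rw [← i3, ← i4] at he
    exact (ENNReal.add_right_inj i5).1 he
  have i7 : volume (A \ B) ≤ volume (B \ A) :=
    (ENNReal.mul_le_mul_iff_right hc0 hc).1 (i1.trans (i6 ▸ i2))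
  rw [← measure_inter_add_sdiff A hB, ← measure_inter_add_sdiff B hA, inter_comm B A]
  gcongr

lemma lam_sq_eq {z : ℂ} (hz : z ≠ 0) :
    lam z ^ 2 = 4 / (1 - exp (-(-2 * log ‖z‖))) ^ 2 := by
  have : exp (-(-2 * log ‖z‖)) = ‖z‖ ^ 2 := by
    rw [neg_mul, neg_neg, two_mul, exp_add, exp_log (norm_pos_iff.2 hz)]; ring
  rw [this]; unfold lam; rw [div_pow]; norm_num

lemma lintegral_lam_ball {a : ℝ} (ha : 0 < a) :
    ∫⁻ z in Metric.ball (0:ℂ) (exp (-a / 2)), ENNReal.ofReal (lam z ^ 2) =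
      ENNReal.ofReal (vv a) := by
  have hsub : Metric.ball (0:ℂ) (exp (-a / 2)) ⊆ Metric.ball 0 1 :=
    Metric.ball_subset_ball (exp_le_one_iff.2 (by linarith))
  have hF : Measurable ((Ioi a).indicator fun s : ℝ => ENNReal.ofReal (4 / (1 - exp (-s)) ^ 2)) :=
    Measurable.indicator (by fun_prop) measurableSet_Ioi
  have h1 : ∫⁻ z in Metric.ball (0:ℂ) (exp (-a / 2)), ENNReal.ofReal (lam z ^ 2) =
      ∫⁻ z in Metric.ball (0:ℂ) 1,
        (Ioi a).indicator (fun s : ℝ => ENNReal.ofReal (4 / (1 - exp (-s)) ^ 2)) (-2 * log ‖z‖) := by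
    rw [← inter_eq_left.2 hsub, ← setLIntegral_indicator Metric.isOpen_ball.measurableSet]
    have h0 : ∀ᵐ z : ℂ ∂volume.restrict (Metric.ball (0:ℂ) 1), z ≠ 0 :=
      ae_restrict_of_ae (by simp [ae_iff])
    refine lintegral_congr_ae (h0.mono fun z hz => ?_)
    have hiff : z ∈ Metric.ball (0:ℂ) (exp (-a / 2)) ↔ -2 * log ‖z‖ ∈ Ioi a := by
      rw [mem_ball_zero_iff, mem_Ioi, ← log_lt_iff_lt_exp (norm_pos_iff.2 hz)]
      constructor <;> intro h <;> linarith
    beta_reduce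
    by_cases hm : z ∈ Metric.ball (0:ℂ) (exp (-a / 2))
    · rw [indicator_of_mem hm, indicator_of_mem (hiff.1 hm), lam_sq_eq hz]
    · rw [indicator_of_notMem hm, indicator_of_notMem (fun h => hm (hiff.2 h))]
  rw [h1, radial_lintegral_C hF, ← lintegral_V_Ioi ha]
  have h2 : ∀ s : ℝ, ENNReal.ofReal (π * exp (-s)) *
      (Ioi a).indicator (fun s : ℝ => ENNReal.ofReal (4 / (1 - exp (-s)) ^ 2)) s =
      (Ioi a).indicator (fun s : ℝ => ENNReal.ofReal (16 * π * V s)) s := fun s => by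
    by_cases hm : s ∈ Ioi a
    · rw [indicator_of_mem hm, indicator_of_mem hm, ← ENNReal.ofReal_mul
        (by have := pi_pos; positivity)]
      congr 1
      unfold V
      have h3 := exp_neg_lt_one (ha.trans hm)
      have h4 : 1 - exp (-s) ≠ 0 := by linarith
      field_simp
      ring
    · rw [indicator_of_notMem hm, indicator_of_notMem hm, mul_zero]
  rw [lintegral_congr h2, setLIntegral_indicator measurableSet_Ioi, Ioi_inter_Ioi,
    max_eq_left ha.le]

section equi
variable {U : ℂ → ℝ} (hU : ContDiff ℝ 1 U) (hc : HasCompactSupport U)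
  (hs : tsupport U ⊆ Metric.ball (0:ℂ) 1)

include hc hs in
lemma ofReal_mu {t : ℝ} (ht : 0 ≤ t) :
    ENNReal.ofReal (mu U t) = ∫⁻ z in {z | t < |U z|}, ENNReal.ofReal (lam z ^ 2) :=
  ofReal_integral_eq_lintegral_ofReal (mu_int hc hs ht) (Eventually.of_forall fun _ => sq_nonneg _)

include hU hc hs in
lemma us_superlevel {t : ℝ} (ht : 0 ≤ t) (hm : 0 < mu U t) :
    ∃ a > 0, vv a = mu U t ∧ {s | t < us U s} = Ioi a := by
  obtain ⟨a, ha, hv⟩ := vv_surj hm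
  refine ⟨a, ha, hv, ?_⟩
  ext s
  simp only [mem_ofPred_eq, mem_Ioi]
  rcases le_or_gt s 0 with h | h
  · have : us U s = 0 := if_pos h
    rw [this]
    constructor <;> intro <;> linarith
  · rw [lt_us hU hc hs h ht, ← hv]
    constructor
    · intro h2
      by_contra! hn
      exact absurd (vv_anti h hn) (not_le.2 h2)
    · exact fun h2 => vv_strictAnti ha h2

include hU hc hs in
lemma us_superlevel_empty {t : ℝ} (ht : 0 ≤ t) (hm : mu U t = 0) : {s | t < us U s} = ∅ := by
  refine eq_empty_iff_forall_notMem.2 fun s hs' => ?_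
  simp only [mem_ofPred_eq] at hs'
  rcases le_or_gt s 0 with h | h
  · have : us U s = 0 := if_pos h
    linarith
  · have := (lt_us hU hc hs h ht).1 hs'
    linarith [vv_pos h]

include hU hc hs in
/-- Superlevel sets of `|U|` and of its rearrangement have the same hyperbolic area. -/
lemma equi_hyp {t : ℝ} (ht : 0 ≤ t) :
    ∫⁻ z in {z | t < |U z|}, ENNReal.ofReal (lam z ^ 2) =
      ∫⁻ s in {s | t < us U s}, ENNReal.ofReal (16 * π * V s) := by
  rw [← ofReal_mu hc hs ht]
  rcases (mu_nonneg (U := U) t).eq_or_lt with h | h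
  · rw [us_superlevel_empty hU hc hs ht h.symm, ← h]; simp
  · obtain ⟨a, ha, hv, he⟩ := us_superlevel hU hc hs ht h
    rw [he, lintegral_V_Ioi ha, hv]

include hU hc hs in
/-- Among sets of given hyperbolic area the centred disc has the largest Euclidean area, because the
hyperbolic density increases with `‖z‖`. -/
lemma equi_area {t : ℝ} (ht : 0 ≤ t) : volume {z | t < |U z|} ≤ rho {s | t < us U s} := by
  have hA := meas_gt hU t
  have hAs : {z | t < |U z|} ⊆ Metric.ball 0 1 := (superlevel_subset ht).trans hs
  rcases (mu_nonneg (U := U) t).eq_or_lt with h | h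
  · have h1 : ∫⁻ z in {z | t < |U z|}, ENNReal.ofReal (lam z ^ 2) = 0 := by
      rw [← ofReal_mu hc hs ht, ← h]; simp
    have h2 : ∫⁻ z in {z | t < |U z|}, 1 ≤ ∫⁻ z in {z | t < |U z|}, ENNReal.ofReal (lam z ^ 2) := by
      refine setLIntegral_mono' hA fun z hz => ?_
      rw [ENNReal.one_le_ofReal]
      have h3 := one_sub_pos (hAs hz)
      have : 1 ≤ lam z := by
        unfold lam
        rw [le_div_iff₀ h3]
        nlinarith [sq_nonneg ‖z‖]
      nlinarith
    rw [setLIntegral_one, h1] at h2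
    exact h2.trans zero_le
  · obtain ⟨a, ha, hv, he⟩ := us_superlevel hU hc hs ht h
    have hR : exp (-a / 2) < 1 := exp_lt_one_iff.2 (by linarith)
    have hR0 := exp_pos (-a / 2)
    have hRp : 0 < 1 - exp (-a / 2) ^ 2 := by nlinarith
    have hvol : volume (Metric.ball (0:ℂ) (exp (-a / 2))) = rho {s | t < us U s} := by
      rw [he, rho_Ioi ha.le, Complex.volume_ball, ← ENNReal.ofReal_pow hR0.le]
      rw [pi_coe, ← ENNReal.ofReal_mul (by positivity), mul_comm, ← exp_nat_mul]
      congr 3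
      push_cast; ring
    rw [← hvol]
    have hfin := lintegral_lam_ball ha
    refine bathtub hA Metric.isOpen_ball.measurableSet (φ := fun z => ENNReal.ofReal (lam z ^ 2))
      (c := ENNReal.ofReal ((2 / (1 - exp (-a / 2) ^ 2)) ^ 2)) ?_ ENNReal.ofReal_ne_top ?_ ?_ ?_ ?_
    · exact (ENNReal.ofReal_pos.2 (by positivity)).ne'
    · rintro z ⟨h1, h2⟩
      have h3 := one_sub_pos (hAs h1)
      simp only [mem_ball_zero_iff, not_lt] at h2
      refine ENNReal.ofReal_le_ofReal ?_
      unfold lam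
      gcongr
    · rintro z ⟨h1, h2⟩
      rw [mem_ball_zero_iff] at h1
      refine ENNReal.ofReal_le_ofReal ?_
      unfold lam
      have : 0 < 1 - ‖z‖ ^ 2 := by nlinarith [norm_nonneg z]
      gcongr
    · rw [hfin, ← ofReal_mu hc hs ht, hv]
    · rw [hfin]; exact ENNReal.ofReal_ne_top

include hU hc hs in
/-- Equimeasurability for the hyperbolic measure. -/
lemma equi_sq : ∫⁻ z in Metric.ball (0:ℂ) 1, ENNReal.ofReal (U z ^ 2 * lam z ^ 2) =
    ∫⁻ s in Ioi 0, ENNReal.ofReal (16 * π * V s * us U s ^ 2) := by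
  have lm : Measurable fun z : ℂ => ENNReal.ofReal (lam z ^ 2) := by unfold lam; fun_prop
  have vm : Measurable fun s : ℝ => ENNReal.ofReal (16 * π * V s) := by unfold V; fun_prop
  have um : Measurable (us U) := (us_mono hU hc hs).measurable
  have cake := fun (x : ℝ) => show ∫ t in (0)..x, 2 * t = x ^ 2 by
    rw [intervalIntegral.integral_const_mul, integral_id]; ring
  set n1 := (volume.restrict (Metric.ball (0:ℂ) 1)).withDensity fun z => ENNReal.ofReal (lam z ^ 2)
  set n2 := (volume.restrict (Ioi (0:ℝ))).withDensity fun s => ENNReal.ofReal (16 * π * V s)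
  have gi : ∀ t > 0, IntervalIntegrable (fun t : ℝ => 2 * t) volume 0 t := fun t _ =>
    Continuous.intervalIntegrable (by fun_prop) _ _
  have gn : ∀ᵐ t : ℝ ∂volume.restrict (Ioi 0), 0 ≤ 2 * t :=
    (ae_restrict_mem measurableSet_Ioi).mono fun t ht => by
      have : 0 < t := ht
      positivity
  have c1 := lintegral_comp_eq_lintegral_meas_lt_mul n1 (f := fun z => |U z|)
    (Eventually.of_forall fun z => abs_nonneg _) hU.continuous.abs.measurable.aemeasurable gi gn
  have c2 := lintegral_comp_eq_lintegral_meas_lt_mul n2 (f := us U)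
    (Eventually.of_forall fun z => us_nonneg _) um.aemeasurable gi gn
  simp only [cake, sq_abs] at c1 c2
  have hUm : Measurable fun z => ENNReal.ofReal (U z ^ 2) := by
    have := hU.continuous.measurable; fun_prop
  have hum : Measurable fun s => ENNReal.ofReal (us U s ^ 2) := by fun_prop
  rw [lintegral_withDensity_eq_lintegral_mul _ lm hUm] at c1
  rw [lintegral_withDensity_eq_lintegral_mul _ vm hum] at c2
  calc _ = _ := ?_
    _ = _ := c1
    _ = _ := ?_
    _ = _ := c2.symm
    _ = _ := ?_
  · refine lintegral_congr fun z => ?_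
    rw [Pi.mul_apply, ← ENNReal.ofReal_mul (sq_nonneg _), mul_comm]
  · refine setLIntegral_congr_fun measurableSet_Ioi fun t ht => ?_
    have ht : 0 < t := ht
    have e1 : n1 {z | t < |U z|} = ∫⁻ z in {z | t < |U z|}, ENNReal.ofReal (lam z ^ 2) := by
      rw [withDensity_apply _ (meas_gt hU t), Measure.restrict_restrict (meas_gt hU t),
        inter_eq_left.2 ((superlevel_subset ht.le).trans hs)]
    have hms : MeasurableSet {s | t < us U s} := measurableSet_lt measurable_const um
    have e2 : n2 {s | t < us U s} = ∫⁻ s in {s | t < us U s}, ENNReal.ofReal (16 * π * V s) := by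
      rw [withDensity_apply _ hms, Measure.restrict_restrict hms, inter_eq_left.2]
      intro s hs'
      by_contra hn
      have : us U s = 0 := if_pos (not_lt.1 hn)
      simp only [mem_ofPred_eq] at hs'
      linarith
    simp only [e1, e2, equi_hyp hU hc hs ht.le]
  · refine setLIntegral_congr_fun measurableSet_Ioi fun s hs' => ?_
    rw [Pi.mul_apply, ← ENNReal.ofReal_mul (by have := V_pos hs'; have := pi_pos; positivity)]

include hU hc hs in
/-- The exponential integral does not decrease under rearrangement. -/
lemma equi_exp : ∫⁻ z in Metric.ball (0:ℂ) 1, ENNReal.ofReal (exp (4 * π * U z ^ 2)) ≤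
    ENNReal.ofReal π * J (fun s => √(4 * π) * us U s) := by
  have um : Measurable (us U) := (us_mono hU hc hs).measurable
  have hpi := pi_pos
  have cake := fun (x : ℝ) => show ∫ t in (0)..x, 8 * π * t * exp (4 * π * t ^ 2) =
      exp (4 * π * x ^ 2) - 1 by
    rw [intervalIntegral.integral_eq_sub_of_hasDerivAt (f := fun t => exp (4 * π * t ^ 2))]
    · simp
    · intro t _
      refine (((hasDerivAt_pow 2 t).const_mul (4 * π)).exp).congr_deriv ?_
      simp; ring
    · exact Continuous.intervalIntegrable (by fun_prop) _ _
  have gi : ∀ t > 0, IntervalIntegrable (fun t : ℝ => 8 * π * t * exp (4 * π * t ^ 2)) volume 0 t :=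
    fun t _ => Continuous.intervalIntegrable (by fun_prop) _ _
  have gn : ∀ᵐ t : ℝ ∂volume.restrict (Ioi 0), 0 ≤ 8 * π * t * exp (4 * π * t ^ 2) :=
    (ae_restrict_mem measurableSet_Ioi).mono fun t ht => by
      have : 0 < t := ht
      positivity
  have c1 := lintegral_comp_eq_lintegral_meas_lt_mul (volume.restrict (Metric.ball (0:ℂ) 1))
    (f := fun z => |U z|)
    (Eventually.of_forall fun z => abs_nonneg _) hU.continuous.abs.measurable.aemeasurable gi gn
  have c2 := lintegral_comp_eq_lintegral_meas_lt_mul rho (f := us U)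
    (Eventually.of_forall fun z => us_nonneg _) um.aemeasurable gi gn
  simp only [cake, sq_abs] at c1 c2
  have e1 : ∀ x : ℝ, ENNReal.ofReal (exp (4 * π * x ^ 2)) =
      1 + ENNReal.ofReal (exp (4 * π * x ^ 2) - 1) := fun x => by
    rw [← ENNReal.ofReal_one, ← ENNReal.ofReal_add zero_le_one
      (by linarith [one_le_exp (show 0 ≤ 4 * π * x ^ 2 by positivity)])]
    congr 1; ring
  have hJ : ENNReal.ofReal π * J (fun s => √(4 * π) * us U s) =
      ∫⁻ s, ENNReal.ofReal (exp (4 * π * us U s ^ 2)) ∂rho := by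
    unfold J rho
    rw [lintegral_withDensity_eq_lintegral_mul _ (by fun_prop) (by fun_prop),
      ← lintegral_const_mul _ (by fun_prop)]
    refine lintegral_congr fun s => ?_
    rw [Pi.mul_apply, ← ENNReal.ofReal_mul hpi.le, ← ENNReal.ofReal_mul (by positivity), mul_assoc π,
      ← exp_add, mul_pow, sq_sqrt (by positivity)]
    congr 3; ring
  have hr : rho univ = ENNReal.ofReal π := by
    unfold rho
    rw [withDensity_apply _ MeasurableSet.univ, Measure.restrict_univ, lintegral_exp_Ioi]; simp
  have hv : volume (Metric.ball (0:ℂ) 1) = ENNReal.ofReal π := by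
    rw [Complex.volume_ball, pi_coe]; simp
  rw [hJ]
  simp only [e1]
  rw [lintegral_add_left measurable_const, lintegral_add_left measurable_const, c1, c2,
    lintegral_const, lintegral_const, Measure.restrict_apply_univ, hr, hv]
  refine add_le_add le_rfl (setLIntegral_mono' measurableSet_Ioi fun t ht => ?_)
  have ht : 0 < t := ht
  gcongr
  exact (Measure.restrict_apply_le _ _).trans (equi_area hU hc hs ht.le)

end equi

/-! ### Steklov averages of the rearrangement -/

/-- The loss factor in the energy estimate for difference quotients of step `δ` on `[σ, ∞)`. -/
def CC (σ δ : ℝ) : ℝ := (exp σ - 1) / (exp (σ + δ) - 1)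

lemma CC_pos {σ δ : ℝ} (hσ : 0 < σ) (hδ : 0 ≤ δ) : 0 < CC σ δ :=
  div_pos (exp_sub_one_pos hσ) (exp_sub_one_pos (by linarith))

lemma CC_mono {σ a δ : ℝ} (hσ : 0 < σ) (ha : σ ≤ a) (hδ : 0 ≤ δ) : CC σ δ ≤ CC a δ := by
  unfold CC
  rw [div_le_div_iff₀ (exp_sub_one_pos (by linarith)) (exp_sub_one_pos (by linarith)), exp_add,
    exp_add]
  nlinarith [mul_nonneg (sub_nonneg.2 (one_le_exp hδ)) (sub_nonneg.2 (exp_le_exp.2 ha))]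

lemma CC_tendsto {σ : ℝ} (hσ : 0 < σ) : Tendsto (CC σ) (𝓝[>] 0) (𝓝 1) := by
  have h := exp_sub_one_pos hσ
  have : ContinuousAt (CC σ) 0 := by
    unfold CC
    refine ContinuousAt.div (by fun_prop) (by fun_prop) ?_
    simpa using h.ne'
  have h2 : CC σ 0 = 1 := by unfold CC; rw [add_zero, div_self h.ne']
  rw [← h2]
  exact this.tendsto.mono_left nhdsWithin_le_nhds

/-- The potential at shifted points: translating a profile by `δ` loses at most the factor `CC²` in the
potential term. -/
lemma V_shift {σ s δ : ℝ} (hσ : 0 < σ) (hs : σ ≤ s) (hδ : 0 ≤ δ) :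
    CC σ δ ^ 2 * V s ≤ V (s + δ) := by
  have hs0 : 0 < s := by linarith
  have e : ∀ {t : ℝ}, 0 < t → V t = exp t / (4 * (exp t - 1) ^ 2) := fun {t} ht => by
    unfold V
    have h1 := exp_sub_one_pos ht
    have h2 := exp_neg_lt_one ht
    have h3 : 1 - exp (-t) ≠ 0 := by linarith
    rw [exp_neg] at h3 ⊢
    have h4 := exp_pos t
    field_simp
  have h1 := exp_sub_one_pos hs0
  have h2 := exp_sub_one_pos (show 0 < s + δ by linarith)
  calc CC σ δ ^ 2 * V s ≤ CC s δ ^ 2 * V s := by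
        have := V_pos hs0
        have := CC_pos hσ hδ
        gcongr
        exact CC_mono hσ hs hδ
    _ = exp s / (4 * (exp (s + δ) - 1) ^ 2) := by
        rw [e hs0]; unfold CC; field_simp
    _ ≤ V (s + δ) := by
        rw [e (by linarith)]
        gcongr
        linarith

lemma lintegral_shift {F : ℝ → ENNReal} {δ : ℝ} (hδ : 0 ≤ δ) :
    ∫⁻ s in Ioi 0, F (s + δ) ≤ ∫⁻ s in Ioi 0, F s := by
  calc ∫⁻ s in Ioi 0, F (s + δ) = ∫⁻ s, (Ioi δ).indicator F (s + δ) := by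
        rw [← lintegral_indicator measurableSet_Ioi]
        refine lintegral_congr fun s => ?_
        by_cases h : 0 < s
        · rw [indicator_of_mem (mem_Ioi.2 h), indicator_of_mem (mem_Ioi.2 (by linarith))]
        · rw [indicator_of_notMem (by simpa using h), indicator_of_notMem (by simpa using h)]
    _ = ∫⁻ s in Ioi δ, F s := by
        rw [lintegral_add_right_eq_self, lintegral_indicator measurableSet_Ioi]
    _ ≤ _ := lintegral_mono_set (Ioi_subset_Ioi hδ)

/-- The Steklov average of `f` over `(s - δ, s)`, written as the primitive of the difference quotient,
dominates `f (s - δ)`. -/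
lemma steklov_ge {f : ℝ → ℝ} (fm : Monotone f) (hz : ∀ s ≤ 0, f s = 0) {δ : ℝ} (hδ : 0 < δ) (s : ℝ) :
    f (s - δ) ≤ ∫ t in (0)..s, (f t - f (t - δ)) / δ := by
  have fi : ∀ a b, IntervalIntegrable f volume a b := fun a b => fm.intervalIntegrable
  have fi2 : IntervalIntegrable (fun t => f (t - δ)) volume 0 s :=
    Monotone.intervalIntegrable fun a b h => fm (by linarith)
  rw [intervalIntegral.integral_div, intervalIntegral.integral_sub (fi 0 s) fi2,
    intervalIntegral.integral_comp_sub_right, le_div_iff₀ hδ]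
  have h1 : ∫ t in (0 - δ)..0, f t = 0 := by
    rw [intervalIntegral.integral_congr (g := fun _ => 0), intervalIntegral.integral_zero]
    intro t ht
    rw [uIcc_of_le (by linarith)] at ht
    exact hz t ht.2
  have h2 := intervalIntegral.integral_add_adjacent_intervals (fi (0 - δ) 0) (fi 0 (s - δ))
  have h3 := intervalIntegral.integral_add_adjacent_intervals (fi 0 (s - δ)) (fi (s - δ) s)
  have h4 : ∫ t in (s - δ)..s, f (s - δ) ≤ ∫ t in (s - δ)..s, f t :=
    intervalIntegral.integral_mono_on (by linarith) intervalIntegrable_const (fi _ _)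
      fun t ht => fm ht.1
  rw [intervalIntegral.integral_const, smul_eq_mul] at h4
  linarith

/-- The Steklov average of `c f` is an admissible profile and dominates `c f (s - δ)`; undoing the
shift in the weight `e^{-s}` costs the factor `e^δ`. -/
lemma steklov_mul_le {f : ℝ → ℝ} (fm : Monotone f) {s0 : ℝ} (hs0 : 0 < s0) (hz : ∀ s ≤ s0, f s = 0)
    {A Q c δ : ℝ} (hc : 0 < c) (hδ : 0 < δ)
    (hQ0 : 0 ≤ Q) (hQ : ENNReal.ofReal Q = ∫⁻ s in Ioi 0, ENNReal.ofReal (V s * f s ^ 2))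
    (hE : ∫⁻ s, ENNReal.ofReal (((f s - f (s - δ)) / δ) ^ 2) ≤
      ENNReal.ofReal (A / CC (s0 / 2) δ))
    (hA : c ^ 2 * (A / CC (s0 / 2) δ) ≤ 1 + c ^ 2 * CC (s0 / 2) δ ^ 2 * Q) :
    J (fun s => c * f s) ≤ ENNReal.ofReal (exp δ) * SS := by
  have fz : ∀ s ≤ 0, f s = 0 := fun s hs => hz s (hs.trans hs0.le)
  have f0 : ∀ s, 0 ≤ f s := fun s => by
    rcases le_total s 0 with h | h
    · rw [fz s h]
    · rw [← fz 0 le_rfl]; exact fm h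
  have fme := fm.measurable
  have hCp : 0 < CC (s0 / 2) δ := CC_pos (by linarith) hδ.le
  set g : ℝ → ℝ := fun s => (f s - f (s - δ)) / δ with hg
  set F : ℝ → ℝ := fun s => ∫ t in (0)..s, g t with hF
  have gme : Measurable g := by fun_prop
  have hFge : ∀ s, f (s - δ) ≤ F s := fun s => steklov_ge fm fz hδ s
  have gi : Integrable fun s => g s ^ 2 := by
    refine ⟨by fun_prop, ?_⟩
    rw [hasFiniteIntegral_iff_ofReal (Eventually.of_forall fun _ => sq_nonneg _)]
    exact hE.trans_lt ENNReal.ofReal_lt_top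
  have key : J (fun s => c * F s) ≤ SS := by
    refine approx (g := fun s => c * g s) (s0 := s0) ?_ hs0 ?_ ?_ ?_
    · rw [memLp_two_iff_integrable_sq (by fun_prop)]
      simpa only [mul_pow] using gi.const_mul (c ^ 2)
    · intro s hs
      simp only [hg, hz s hs, hz (s - δ) (by linarith)]; simp
    · intro s
      rw [intervalIntegral.integral_const_mul]
    · simp only [mul_pow]
      rw [integral_const_mul, ENNReal.ofReal_mul (by positivity),
        ofReal_integral_eq_lintegral_ofReal gi (Eventually.of_forall fun _ => sq_nonneg _)]
      calc ENNReal.ofReal (c ^ 2) * ∫⁻ s, ENNReal.ofReal (g s ^ 2)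
          ≤ ENNReal.ofReal (c ^ 2) * ENNReal.ofReal (A / CC (s0 / 2) δ) := by gcongr
        _ = ENNReal.ofReal (c ^ 2 * (A / CC (s0 / 2) δ)) := by
            rw [ENNReal.ofReal_mul (by positivity)]
        _ ≤ ENNReal.ofReal (1 + c ^ 2 * CC (s0 / 2) δ ^ 2 * Q) := ENNReal.ofReal_le_ofReal hA
        _ = 1 + ENNReal.ofReal (c ^ 2 * CC (s0 / 2) δ ^ 2) * ENNReal.ofReal Q := by
            rw [ENNReal.ofReal_add zero_le_one (by positivity), ENNReal.ofReal_one,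
              ENNReal.ofReal_mul (by positivity)]
        _ ≤ _ := by
            rw [hQ, ← lintegral_const_mul _ (by unfold V; fun_prop)]
            gcongr 1 + ?_
            calc _ ≤ ∫⁻ s in Ioi 0, ENNReal.ofReal (V (s + δ) * (c ^ 2 * f (s + δ - δ) ^ 2)) := by
                  refine setLIntegral_mono' measurableSet_Ioi fun s hs => ?_
                  rw [← ENNReal.ofReal_mul (by positivity), add_sub_cancel_right]
                  refine ENNReal.ofReal_le_ofReal ?_
                  rcases le_total s s0 with h | h
                  · rw [hz s h]; simp
                  · have := V_shift (σ := s0 / 2) (s := s) (by linarith) (by linarith) hδ.le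
                    have h3 : 0 ≤ c ^ 2 * f s ^ 2 := by positivity
                    nlinarith [mul_le_mul_of_nonneg_right this h3]
              _ ≤ ∫⁻ s in Ioi 0, ENNReal.ofReal (V s * (c ^ 2 * f (s - δ) ^ 2)) :=
                  lintegral_shift (F := fun s => ENNReal.ofReal (V s * (c ^ 2 * f (s - δ) ^ 2))) hδ.le
              _ ≤ _ := by
                  refine setLIntegral_mono' measurableSet_Ioi fun s hs => ?_
                  refine ENNReal.ofReal_le_ofReal ?_
                  have := V_pos hs
                  have := hFge s
                  have := f0 (s - δ)
                  gcongr
  have h2 : ENNReal.ofReal (exp (-δ)) * J (fun s => c * f s) ≤ SS := by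
    refine le_trans ?_ key
    unfold J
    rw [← lintegral_const_mul _ (by fun_prop)]
    calc _ = ∫⁻ s in Ioi 0, ENNReal.ofReal (exp ((c * f (s + δ - δ)) ^ 2 - (s + δ))) := by
          refine lintegral_congr fun s => ?_
          rw [← ENNReal.ofReal_mul (exp_pos _).le, ← exp_add, add_sub_cancel_right]
          congr 2; ring
      _ ≤ ∫⁻ s in Ioi 0, ENNReal.ofReal (exp ((c * f (s - δ)) ^ 2 - s)) :=
          lintegral_shift (F := fun s => ENNReal.ofReal (exp ((c * f (s - δ)) ^ 2 - s))) hδ.le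
      _ ≤ _ := by
          refine setLIntegral_mono' measurableSet_Ioi fun s hs => ?_
          refine ENNReal.ofReal_le_ofReal ?_
          have := hFge s
          have := f0 (s - δ)
          beta_reduce
          gcongr
  calc J (fun s => c * f s)
      = ENNReal.ofReal (exp δ) * (ENNReal.ofReal (exp (-δ)) * J (fun s => c * f s)) := by
        rw [← mul_assoc, ← ENNReal.ofReal_mul (exp_pos _).le, ← exp_add]; simp
    _ ≤ _ := by gcongr

/-- First `δ → 0` for a fixed `c < 1`, which leaves room for the loss factor `CC`, then `c → 1`. -/
lemma steklov_le {f : ℝ → ℝ} (fm : Monotone f) {s0 : ℝ} (hs0 : 0 < s0) (hz : ∀ s ≤ s0, f s = 0)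
    {A Q : ℝ} (hQ0 : 0 ≤ Q)
    (hQ : ENNReal.ofReal Q = ∫⁻ s in Ioi 0, ENNReal.ofReal (V s * f s ^ 2)) (hAQ : A ≤ 1 + Q)
    (hE : ∀ δ, 0 < δ → δ ≤ s0 / 2 → ∫⁻ s, ENNReal.ofReal (((f s - f (s - δ)) / δ) ^ 2) ≤
      ENNReal.ofReal (A / CC (s0 / 2) δ)) : J f ≤ SS := by
  have fme := fm.measurable
  have hσ : 0 < s0 / 2 := by linarith
  have main : ∀ c, 0 < c → c < 1 → J (fun s => c * f s) ≤ SS := fun c hc hc1 => by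
    have hC := CC_tendsto hσ
    have h1 : Tendsto (fun δ => c ^ 2 * (A / CC (s0 / 2) δ)) (𝓝[>] 0) (𝓝 (c ^ 2 * (A / 1))) :=
      (tendsto_const_nhds.div hC one_ne_zero).const_mul _
    have h2 : Tendsto (fun δ => 1 + c ^ 2 * CC (s0 / 2) δ ^ 2 * Q) (𝓝[>] 0)
        (𝓝 (1 + c ^ 2 * 1 ^ 2 * Q)) := (((hC.pow 2).const_mul _).mul_const Q).const_add 1
    have h3 : c ^ 2 * (A / 1) < 1 + c ^ 2 * 1 ^ 2 * Q := by
      have : c ^ 2 < 1 := by nlinarith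
      nlinarith [mul_le_mul_of_nonneg_left hAQ (sq_nonneg c)]
    have h4 := h1.eventually_lt h2 h3
    have h5 : Tendsto (fun δ => ENNReal.ofReal (exp δ) * SS) (𝓝[>] 0) (𝓝 (1 * SS)) := by
      refine ENNReal.Tendsto.mul_const ?_ (Or.inl one_ne_zero)
      have : Tendsto (fun δ : ℝ => ENNReal.ofReal (exp δ)) (𝓝 0) (𝓝 (ENNReal.ofReal (exp 0))) :=
        ENNReal.tendsto_ofReal (continuous_exp.tendsto 0)
      rw [exp_zero, ENNReal.ofReal_one] at this
      exact this.mono_left nhdsWithin_le_nhds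
    rw [one_mul] at h5
    refine ge_of_tendsto h5 ?_
    filter_upwards [h4, Ioo_mem_nhdsGT hσ] with δ hδ hδ2
    exact steklov_mul_le fm hs0 hz hc hδ2.1 hQ0 hQ (hE δ hδ2.1 hδ2.2.le) hδ.le
  refine J_le_of_tendsto (w := fun n s => (1 - 1 / ((n:ℝ) + 2)) * f s) (fun n => by fun_prop) ?_
    (Eventually.of_forall fun n => main _ ?_ ?_)
  · intro s _
    have : Tendsto (fun n : ℕ => 1 / ((n:ℝ) + 2)) atTop (𝓝 0) :=
      Tendsto.const_div_atTop (tendsto_atTop_add_const_right _ _ tendsto_natCast_atTop_atTop) 1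
    have := (this.const_sub 1).mul_const (f s)
    simpa using this
  · have : 1 / ((n:ℝ) + 2) < 1 := by
      rw [div_lt_one (by positivity)]
      have : (0:ℝ) ≤ n := by positivity
      linarith
    linarith
  · have : 0 < 1 / ((n:ℝ) + 2) := by positivity
    linarith

section conclusion
variable {U : ℂ → ℝ} (hU : ContDiff ℝ 1 U) (hc : HasCompactSupport U)
  (hs : tsupport U ⊆ Metric.ball (0:ℂ) 1)

include hU hc hs in
/-- Pólya–Szegő for difference quotients. For a fixed level `t`, the `s` with
`us (s - δ) < t < us s` form a set of length at most `δ`. -/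
lemma steklov_energy {s0 δ : ℝ} (hs0 : 0 < s0) (hz : ∀ s ≤ s0, us U s = 0) (hδ : 0 < δ)
    (hδ2 : δ ≤ s0 / 2) :
    ∫⁻ s, ENNReal.ofReal (((√(4 * π) * us U s - √(4 * π) * us U (s - δ)) / δ) ^ 2) ≤
      ENNReal.ofReal ((∫ z, ‖fderiv ℝ U z‖ ^ 2) / CC (s0 / 2) δ) := by
  have um := (us_mono hU hc hs).measurable
  have hCp : 0 < CC (s0 / 2) δ := CC_pos (by linarith) hδ.le
  have hpi := pi_pos
  have Fc : Continuous fun z => ‖fderiv ℝ U z‖ := (hU.continuous_fderiv (by norm_num)).norm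
  have i2 : Integrable fun z => ‖fderiv ℝ U z‖ ^ 2 := by
    have := int_lam hc hs (Fc.pow 2) (fun z hz => by
      have h0 : fderiv ℝ U z = 0 :=
        image_eq_zero_of_notMem_tsupport fun hm => hz (tsupport_fderiv_subset ℝ hm)
      simp [h0]) 0
    simpa using this
  have hUm := hU.continuous.abs.measurable
  set S : Set (ℝ × ℂ) := {p | us U (p.1 - δ) < |U p.2| ∧ |U p.2| < us U p.1} with hS
  have Sm : MeasurableSet S :=
    (measurableSet_lt (f := fun p : ℝ × ℂ => us U (p.1 - δ)) (g := fun p => |U p.2|)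
      (by fun_prop) (hUm.comp measurable_snd)).inter
    (measurableSet_lt (f := fun p : ℝ × ℂ => |U p.2|) (g := fun p => us U p.1)
      (hUm.comp measurable_snd) (by fun_prop))
  set Φ : ℝ → ℂ → ENNReal := fun s z =>
    S.indicator (fun p => ENNReal.ofReal (‖fderiv ℝ U p.2‖ ^ 2)) (s, z) with hΦ
  have Φm : Measurable (Function.uncurry Φ) := by
    have := Fc.measurable
    exact Measurable.indicator (by fun_prop) Sm
  have step : ∀ s, ENNReal.ofReal (((√(4 * π) * us U s - √(4 * π) * us U (s - δ)) / δ) ^ 2) ≤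
      ENNReal.ofReal (1 / (δ * CC (s0 / 2) δ)) * ∫⁻ z, Φ s z := fun s => by
    rcases le_total s s0 with h | h
    · rw [hz s h, hz (s - δ) (by linarith)]; simp
    have ha : s0 / 2 ≤ s - δ := by linarith
    have h1 := us_step hU hc hs (a := s - δ) (b := s) (by linarith) (by linarith)
    have h2 := CC_mono (by linarith) ha hδ.le
    have e1 : (exp (s - δ) - 1) / (exp s - 1) = CC (s - δ) δ := by
      unfold CC; rw [sub_add_cancel]
    rw [e1, sub_sub_cancel] at h1
    set D := ∫ z in {z | us U (s - δ) < |U z| ∧ |U z| < us U s}, ‖fderiv ℝ U z‖ ^ 2 with hD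
    have e2 : ENNReal.ofReal D = ∫⁻ z, Φ s z := by
      have hm : MeasurableSet {z | us U (s - δ) < |U z| ∧ |U z| < us U s} :=
        (measurableSet_lt (f := fun _ => us U (s - δ)) (g := fun z => |U z|)
          measurable_const hUm).inter
          (measurableSet_lt (f := fun z => |U z|) (g := fun _ => us U s) hUm measurable_const)
      rw [hD, ofReal_integral_eq_lintegral_ofReal i2.integrableOn
        (Eventually.of_forall fun _ => sq_nonneg _), ← lintegral_indicator hm]
      rfl
    rw [← e2, ← ENNReal.ofReal_mul (by positivity)]
    refine ENNReal.ofReal_le_ofReal ?_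
    rw [← mul_sub, div_pow, mul_pow, sq_sqrt (by positivity), one_div, inv_mul_eq_div,
      div_le_div_iff₀ (by positivity) (by positivity)]
    have h3 : 4 * π * (us U s - us U (s - δ)) ^ 2 * CC (s0 / 2) δ ≤ δ * D := by
      refine le_trans ?_ h1
      gcongr
    nlinarith [mul_le_mul_of_nonneg_left h3 hδ.le]
  calc _ ≤ ∫⁻ s, ENNReal.ofReal (1 / (δ * CC (s0 / 2) δ)) * ∫⁻ z, Φ s z := lintegral_mono step
    _ = ENNReal.ofReal (1 / (δ * CC (s0 / 2) δ)) * ∫⁻ z, ∫⁻ s, Φ s z := by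
        have hm1 : Measurable fun s => ∫⁻ z, Φ s z := Φm.lintegral_prod_right'
        rw [lintegral_const_mul _ hm1, lintegral_lintegral_swap Φm.aemeasurable]
    _ ≤ ENNReal.ofReal (1 / (δ * CC (s0 / 2) δ)) *
        ∫⁻ z, ENNReal.ofReal (‖fderiv ℝ U z‖ ^ 2) * ENNReal.ofReal δ := by
        gcongr with z
        have hm : MeasurableSet {s | (s, z) ∈ S} := Sm.preimage (by fun_prop)
        have e3 : ∀ s, Φ s z = {s | (s, z) ∈ S}.indicator
            (fun _ => ENNReal.ofReal (‖fderiv ℝ U z‖ ^ 2)) s := fun s => rfl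
        rw [lintegral_congr e3, lintegral_indicator hm, setLIntegral_const]
        gcongr
        refine (Real.volume_le_diam _).trans (Metric.ediam_le fun s h1 s' h2 => ?_)
        rw [edist_dist, Real.dist_eq]
        refine ENNReal.ofReal_le_ofReal (abs_le.2 ⟨?_, ?_⟩)
        · by_contra! hn
          have := us_mono hU hc hs (show s ≤ s' - δ by linarith)
          exact absurd (h1.2.trans_le this) (not_lt.2 h2.1.le)
        · by_contra! hn
          have := us_mono hU hc hs (show s' ≤ s - δ by linarith)
          exact absurd (h2.2.trans_le this) (not_lt.2 h1.1.le)
    _ = _ := by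
        rw [lintegral_mul_const _ (by have := Fc.measurable; fun_prop),
          ← ofReal_integral_eq_lintegral_ofReal i2 (Eventually.of_forall fun _ => sq_nonneg _),
          ← ENNReal.ofReal_mul (integral_nonneg fun _ => sq_nonneg _),
          ← ENNReal.ofReal_mul (by positivity)]
        congr 1
        field_simp

include hU hc hs in
/-- The symmetrization inequality on the disc: the rearrangement of `U`, normalized by `√(4π)`,
satisfies the hypotheses of `steklov_le`. -/
lemma symm_C (hH : ∫ z, ‖fderiv ℝ U z‖ ^ 2 ≤ 1 + ∫ z, U z ^ 2 / (1 - ‖z‖ ^ 2) ^ 2) :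
    ∫⁻ z in Metric.ball (0:ℂ) 1, ENNReal.ofReal (exp (4 * π * U z ^ 2)) ≤ ENNReal.ofReal π * SS := by
  refine (equi_exp hU hc hs).trans ?_
  gcongr
  obtain ⟨s0, hs0, hz⟩ := us_zero hU hc hs
  have hpi := pi_pos
  have e0 : ∀ z, U z ^ 2 / (1 - ‖z‖ ^ 2) ^ 2 = 1 / 4 * (U z ^ 2 * lam z ^ 2) := fun z => by
    unfold lam; rw [div_pow]; ring
  have Uz : ∀ z, z ∉ tsupport U → U z ^ 2 = 0 := fun z hz => by
    simp [image_eq_zero_of_notMem_tsupport hz]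
  have hi : Integrable fun z => U z ^ 2 * lam z ^ 2 := int_lam hc hs (hU.continuous.pow 2) Uz 2
  refine steklov_le (fun a b h => mul_le_mul_of_nonneg_left (us_mono hU hc hs h) (sqrt_nonneg _)) hs0
    (fun s h => by rw [hz s h, mul_zero]) (Q := ∫ z, U z ^ 2 / (1 - ‖z‖ ^ 2) ^ 2)
    (integral_nonneg fun _ => by positivity) ?_ hH
    (fun δ h1 h2 => steklov_energy hU hc hs hs0 hz h1 h2)
  simp only [e0]
  have e1 : ∫ z, U z ^ 2 * lam z ^ 2 = ∫ z in Metric.ball (0:ℂ) 1, U z ^ 2 * lam z ^ 2 := by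
    rw [setIntegral_eq_integral_of_forall_compl_eq_zero]
    intro z hz'
    rw [Uz z fun h => hz' (hs h), zero_mul]
  have um := (us_mono hU hc hs).measurable
  rw [integral_const_mul, e1, ENNReal.ofReal_mul (by norm_num),
    ofReal_integral_eq_lintegral_ofReal hi.integrableOn (Eventually.of_forall fun _ => by positivity),
    equi_sq hU hc hs, ← lintegral_const_mul _ (by unfold V; fun_prop)]
  refine lintegral_congr fun s => ?_
  rw [← ENNReal.ofReal_mul (by norm_num), mul_pow, sq_sqrt (by positivity)]
  congr 1; ring

end conclusion

/-! ### Symmetrization of test functions on the Euclidean disc -/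

lemma norm_gradient (u : E2 → ℝ) (x : E2) : ‖gradient u x‖ = ‖fderiv ℝ u x‖ :=
  LinearIsometryEquiv.norm_map _ _

lemma tsupport_gradient {u : E2 → ℝ} {x : E2} (hx : x ∉ tsupport u) : ‖gradient u x‖ = 0 := by
  rw [norm_gradient, image_eq_zero_of_notMem_tsupport fun hm => hx (tsupport_fderiv_subset ℝ hm),
    norm_zero]

/-- The symmetrization inequality for test functions on the Euclidean disc. -/
lemma symm_E2 {u : E2 → ℝ} (hu : IsTest u) (hH : H u ≤ 1) :
    ∫⁻ x in B2, ENNReal.ofReal (exp (4 * π * u x ^ 2)) ≤ ENNReal.ofReal π * SS := by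
  obtain ⟨hU, hc, hs⟩ := hu
  let L : ℂ ≃ₗᵢ[ℝ] E2 := Complex.orthonormalBasisOneI.repr
  have hmp : MeasurePreserving L volume volume := L.measurePreserving
  have hme : MeasurableEmbedding L := L.toHomeomorph.measurableEmbedding
  have hpre : L ⁻¹' B2 = Metric.ball (0:ℂ) 1 := by
    ext z; simp [B2]
  have hUL : ContDiff ℝ 1 (u ∘ L) := (hU.of_le (by simp)).comp L.contDiff
  have hts : tsupport (u ∘ L) = L ⁻¹' tsupport u := by
    have := tsupport_comp_eq_preimage u L.toHomeomorph
    exact this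
  have hfd : ∀ z, ‖fderiv ℝ (u ∘ L) z‖ = ‖gradient u (L z)‖ := fun z => by
    rw [norm_gradient]
    have h1 : HasFDerivAt (u ∘ L) ((fderiv ℝ u (L z)).comp (L : ℂ →L[ℝ] E2)) z :=
      (((hU.differentiable (by simp)) (L z)).hasFDerivAt).comp z L.toContinuousLinearEquiv.hasFDerivAt
    rw [h1.fderiv]
    exact ContinuousLinearMap.opNorm_comp_linearIsometryEquiv _ L
  have key := symm_C (U := u ∘ L) hUL (hc.comp_homeomorph L.toHomeomorph) (by
    rw [hts, ← hpre]; exact preimage_mono hs) ?_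
  · rw [← hmp.setLIntegral_comp_preimage_emb hme, hpre]
    exact key
  · unfold H at hH
    rw [setIntegral_eq_integral_of_forall_compl_eq_zero, 
      setIntegral_eq_integral_of_forall_compl_eq_zero] at hH
    · rw [← hmp.integral_comp hme (fun x => ‖gradient u x‖ ^ 2),
        ← hmp.integral_comp hme (fun x => u x ^ 2 / (1 - ‖x‖ ^ 2) ^ 2)] at hH
      simp only [hfd, Function.comp_apply]
      simp only [LinearIsometryEquiv.norm_map] at hH
      linarith
    · intro x hx
      rw [image_eq_zero_of_notMem_tsupport fun h => hx (hs h)]; simp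
    · intro x hx
      rw [tsupport_gradient fun h => hx (hs h)]; simp

/-! ### Radial test functions -/

/-- The radial function on the disc with profile `w` in the variable `s = -2 log |x|`. As
`log 0 = 0` in Lean, the value at the origin is set to the limit of `w` at infinity. -/
def rad (w : ℝ → ℝ) (x : E2) : ℝ :=
  (if x = 0 then limUnder atTop w else w (-2 * log ‖x‖)) / √(4 * π)

lemma rad_of_ne {w : ℝ → ℝ} {x : E2} (hx : x ≠ 0) : rad w x = w (-2 * log ‖x‖) / √(4 * π) := by
  simp [rad, hx]

lemma IsW.tendsto {w : ℝ → ℝ} (hw : IsW w) : ∃ s1, Tendsto w atTop (𝓝 (w s1)) := by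
  obtain ⟨s1, h1⟩ := hw.2.2
  refine ⟨s1, tendsto_const_nhds.congr' ?_⟩
  filter_upwards [eventually_ge_atTop s1] with s hs
  exact (h1 s hs).symm

lemma rad_sub {v w : ℝ → ℝ} (hv : IsW v) (hw : IsW w) :
    rad v - rad w = rad (fun s => v s - w s) := by
  obtain ⟨a, ha⟩ := hv.tendsto
  obtain ⟨b, hb⟩ := hw.tendsto
  ext x
  simp only [Pi.sub_apply, rad, ha.limUnder_eq, hb.limUnder_eq, (ha.sub hb).limUnder_eq]
  split_ifs <;> ring

lemma neg_two_log (x : E2) : -2 * log ‖x‖ = -log (‖x‖ ^ 2) := by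
  rw [log_pow]; push_cast; ring

lemma rad_near_zero {w : ℝ → ℝ} (hw : IsW w) : ∃ c, rad w =ᶠ[𝓝 0] fun _ => c := by
  obtain ⟨s1, h1⟩ := hw.2.2
  have ht : Tendsto w atTop (𝓝 (w s1)) := by
    refine tendsto_const_nhds.congr' ?_
    filter_upwards [eventually_ge_atTop s1] with s hs
    exact (h1 s hs).symm
  refine ⟨w s1 / √(4 * π), ?_⟩
  filter_upwards [Metric.ball_mem_nhds (0:E2) (exp_pos (-s1 / 2))] with x hx
  rw [mem_ball_zero_iff] at hx
  unfold rad
  split_ifs with h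
  · rw [ht.limUnder_eq]
  · have := (log_lt_iff_lt_exp (norm_pos_iff.2 h)).2 hx
    rw [h1 _ (by linarith)]

lemma rad_zero {w : ℝ → ℝ} {s0 : ℝ} (h0 : ∀ s ≤ s0, w s = 0) {x : E2}
    (hx : exp (-s0 / 2) ≤ ‖x‖) : rad w x = 0 := by
  have hp : 0 < ‖x‖ := (exp_pos _).trans_le hx
  have := (le_log_iff_exp_le hp).2 hx
  rw [rad_of_ne (norm_pos_iff.1 hp), h0 _ (by linarith), zero_div]

/-- Smoothness at the origin holds because the profile is constant near infinity. -/
lemma rad_isTest {w : ℝ → ℝ} (hw : IsW w) : IsTest (rad w) := by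
  obtain ⟨s0, hs0, h0⟩ := hw.2.1
  have hsub : tsupport (rad w) ⊆ Metric.closedBall 0 (exp (-s0 / 2)) := by
    refine closure_minimal (fun x hx => ?_) Metric.isClosed_closedBall
    rw [mem_closedBall_zero_iff]
    by_contra! h
    exact hx (rad_zero h0 h.le)
  refine ⟨?_, HasCompactSupport.of_support_subset_isCompact (isCompact_closedBall _ _)
    (subset_closure.trans hsub), hsub.trans (Metric.closedBall_subset_ball ?_)⟩
  · rw [contDiff_iff_contDiffAt]
    intro x
    by_cases hx : x = 0
    · obtain ⟨c, hc⟩ := rad_near_zero hw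
      rw [hx]
      exact contDiffAt_const.congr_of_eventuallyEq hc
    · have he : rad w =ᶠ[𝓝 x] fun x => w (-log (‖x‖ ^ 2)) / √(4 * π) := by
        filter_upwards [isOpen_ne.mem_nhds hx] with y hy
        rw [rad_of_ne hy, neg_two_log]
      refine ContDiffAt.congr_of_eventuallyEq ?_ he
      refine ContDiffAt.div_const ?_ _
      refine hw.1.contDiffAt.comp x ?_
      refine ContDiffAt.neg ?_
      refine ContDiffAt.log ((contDiff_norm_sq ℝ).contDiffAt) ?_
      have := norm_pos_iff.2 hx
      positivity
  · rw [exp_lt_one_iff]; linarith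

lemma rad_gradient {w : ℝ → ℝ} (hw : IsW w) {x : E2} (hx : x ≠ 0) :
    ‖gradient (rad w) x‖ ^ 2 =
      deriv w (-2 * log ‖x‖) ^ 2 * exp (-2 * log ‖x‖) / π := by
  have hp := norm_pos_iff.2 hx
  have hpi := pi_pos
  have he : rad w =ᶠ[𝓝 x] fun x => w (-log (‖x‖ ^ 2)) / √(4 * π) := by
    filter_upwards [isOpen_ne.mem_nhds hx] with y hy
    rw [rad_of_ne hy, neg_two_log]
  have h1 : HasDerivAt (fun t => w (-log t) / √(4 * π))
      (deriv w (-log (‖x‖ ^ 2)) * -(‖x‖ ^ 2)⁻¹ / √(4 * π)) (‖x‖ ^ 2) := by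
    have ha := (hasDerivAt_log (show ‖x‖ ^ 2 ≠ 0 by positivity)).fun_neg
    have hb := hw.diff (-log (‖x‖ ^ 2))
    exact (hb.comp (‖x‖ ^ 2) ha).div_const _
  have h2 := h1.comp_hasFDerivAt x (hasStrictFDerivAt_norm_sq x).hasFDerivAt
  have h3 : HasFDerivAt (rad w) _ x := h2.congr_of_eventuallyEq he
  rw [norm_gradient, h3.fderiv, norm_smul, ← Nat.cast_smul_eq_nsmul ℝ, norm_smul, innerSL_apply_norm,
    neg_two_log, exp_neg, exp_log (by positivity)]
  simp only [norm_div, norm_mul, norm_neg, norm_inv, norm_pow, mul_pow, div_pow,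
    Real.norm_eq_abs, sq_abs, abs_of_nonneg (sqrt_nonneg _), sq_sqrt (show 0 ≤ 4 * π by positivity),
    abs_of_nonneg (norm_nonneg x)]
  push_cast
  field_simp
  norm_num

lemma ae_ne_zero : ∀ᵐ x : E2 ∂(volume.restrict B2), x ≠ 0 :=
  ae_restrict_of_ae (Measure.ae_ne volume 0)

lemma H_rad {w : ℝ → ℝ} (hw : IsW w) : H (rad w) = h w := by
  have hpi := pi_pos
  have hb : ∀ r, volume (Metric.closedBall (0:E2) r) = ENNReal.ofReal r ^ 2 * ENNReal.ofReal π :=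
    fun r => by rw [EuclideanSpace.volume_closedBall_fin_two]
  have hb' : ∀ r, volume (Metric.ball (0:E2) r) = ENNReal.ofReal r ^ 2 * ENNReal.ofReal π :=
    fun r => by rw [EuclideanSpace.volume_ball_fin_two]
  have wm := hw.1.continuous.measurable
  have dm := hw.deriv_cont.measurable
  unfold H h
  congr 1
  · rw [integral_congr_ae (ae_ne_zero.mono fun x hx => rad_gradient hw hx)]
    have := radial_integral hb hb' (F := fun s => deriv w s ^ 2 * exp s / π) (by fun_prop)
      (fun s => by positivity)
    refine this.trans (setIntegral_congr_fun measurableSet_Ioi fun s _ => ?_)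
    simp only [exp_neg]
    field_simp
  · have he : ∀ x : E2, x ≠ 0 → rad w x ^ 2 / (1 - ‖x‖ ^ 2) ^ 2 =
        (fun s => w s ^ 2 / (4 * π) / (1 - exp (-s)) ^ 2) (-2 * log ‖x‖) := fun x hx => by
      have hp := norm_pos_iff.2 hx
      rw [rad_of_ne hx]
      beta_reduce
      rw [neg_two_log, neg_neg, exp_log (by positivity), div_pow, sq_sqrt (by positivity)]
    rw [integral_congr_ae (ae_ne_zero.mono he)]
    have := radial_integral hb hb' (F := fun s => w s ^ 2 / (4 * π) / (1 - exp (-s)) ^ 2)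
      (by fun_prop) (fun s => by positivity)
    refine this.trans (setIntegral_congr_fun measurableSet_Ioi fun s hs => ?_)
    have := exp_neg_lt_one hs
    have : 1 - exp (-s) ≠ 0 := by linarith
    simp only [V]
    field_simp

lemma lintegral_exp_rad {f : ℝ → ℝ} (hf : Measurable f) {u : E2 → ℝ}
    (hu : ∀ x, x ≠ 0 → u x = f (-2 * log ‖x‖) / √(4 * π)) :
    ∫⁻ x in B2, ENNReal.ofReal (exp (4 * π * u x ^ 2)) = ENNReal.ofReal π * J f := by
  have hpi := pi_pos
  have hb : ∀ r, volume (Metric.closedBall (0:E2) r) = ENNReal.ofReal r ^ 2 * ENNReal.ofReal π :=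
    fun r => by rw [EuclideanSpace.volume_closedBall_fin_two]
  have hb' : ∀ r, volume (Metric.ball (0:E2) r) = ENNReal.ofReal r ^ 2 * ENNReal.ofReal π :=
    fun r => by rw [EuclideanSpace.volume_ball_fin_two]
  have he : ∀ x : E2, x ≠ 0 → ENNReal.ofReal (exp (4 * π * u x ^ 2)) =
      (fun s => ENNReal.ofReal (exp (f s ^ 2))) (-2 * log ‖x‖) := fun x hx => by
    rw [hu x hx, div_pow, sq_sqrt (by positivity), mul_div_cancel₀ _ (by positivity)]
  rw [lintegral_congr_ae (ae_ne_zero.mono he)]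
  refine (radial_lintegral hb hb' (F := fun s => ENNReal.ofReal (exp (f s ^ 2)))
    (by fun_prop)).trans ?_
  unfold J
  rw [← lintegral_const_mul _ (by fun_prop)]
  refine lintegral_congr fun s => ?_
  rw [← ENNReal.ofReal_mul (by positivity), ← ENNReal.ofReal_mul hpi.le, mul_assoc, ← exp_add]
  congr 3; ring

/-! ### Existence of a maximizing profile -/

lemma IsW.add {v w : ℝ → ℝ} (hv : IsW v) (hw : IsW w) : IsW (fun s => v s + w s) := by
  obtain ⟨a, ⟨a0, ha, ha'⟩, a1, ha1⟩ := hv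
  obtain ⟨b, ⟨b0, hb, hb'⟩, b1, hb1⟩ := hw
  refine ⟨a.add b, ⟨min a0 b0, lt_min ha hb, fun s hs => ?_⟩, max a1 b1, fun s hs => ?_⟩
  · beta_reduce
    rw [ha' s (hs.trans (min_le_left _ _)), hb' s (hs.trans (min_le_right _ _)), add_zero]
  · beta_reduce
    rw [ha1 s ((le_max_left _ _).trans hs), hb1 s ((le_max_right _ _).trans hs),
      ha1 _ (le_max_left a1 b1), hb1 _ (le_max_right a1 b1)]

lemma IsW.sub {v w : ℝ → ℝ} (hv : IsW v) (hw : IsW w) : IsW (fun s => v s - w s) := by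
  have := hv.add (hw.smul (-1))
  simpa [sub_eq_add_neg] using this

lemma parallelogram {v w : ℝ → ℝ} (hv : IsW v) (hw : IsW w) :
    h (fun s => v s + w s) + h (fun s => v s - w s) = 2 * h v + 2 * h w := by
  have ha := hv.add hw
  have hs := hv.sub hw
  have e1 : (∫ s in Ioi 0, deriv (fun s => v s + w s) s ^ 2) +
      (∫ s in Ioi 0, deriv (fun s => v s - w s) s ^ 2) =
      2 * (∫ s in Ioi 0, deriv v s ^ 2) + 2 * ∫ s in Ioi 0, deriv w s ^ 2 := by
    rw [← integral_const_mul, ← integral_const_mul,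
      ← integral_add ha.deriv_integrable.integrableOn hs.deriv_integrable.integrableOn,
      ← integral_add (hv.deriv_integrable.integrableOn.integrable.const_mul 2)
        (hw.deriv_integrable.integrableOn.integrable.const_mul 2)]
    refine integral_congr_ae (Eventually.of_forall fun s => ?_)
    beta_reduce
    rw [((hv.diff s).fun_add (hw.diff s)).deriv, ((hv.diff s).fun_sub (hw.diff s)).deriv]
    ring
  have e2 : (∫ s in Ioi 0, V s * (v s + w s) ^ 2) + (∫ s in Ioi 0, V s * (v s - w s) ^ 2) =
      2 * (∫ s in Ioi 0, V s * v s ^ 2) + 2 * ∫ s in Ioi 0, V s * w s ^ 2 := by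
    rw [← integral_const_mul, ← integral_const_mul,
      ← integral_add ha.V_integrable hs.V_integrable,
      ← integral_add (hv.V_integrable.integrable.const_mul 2)
        (hw.V_integrable.integrable.const_mul 2)]
    refine integral_congr_ae (Eventually.of_forall fun s => ?_)
    beta_reduce
    ring
  unfold h
  linarith

lemma J_zero {f : ℝ → ℝ} (hf : ∀ᵐ s ∂(volume.restrict (Ioi (0:ℝ))), f s = 0) : J f = 1 := by
  unfold J
  rw [lintegral_congr_ae (hf.mono fun s hs => by rw [hs]),
    ← ofReal_integral_eq_lintegral_ofReal]
  · simp only [ne_eq, OfNat.ofNat_ne_zero, not_false_eq_true, zero_pow, zero_sub]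
    rw [integral_exp_neg_Ioi_zero, ENNReal.ofReal_one]
  · have := (exp_neg_integrableOn_Ioi 0 one_pos).integrable
    simpa using this
  · exact Eventually.of_forall fun _ => (exp_pos _).le

/-- In particular the zero profile is not a maximizer. -/
lemma one_lt_SS : 1 < SS := by
  refine lt_of_le_of_lt ?_ level_lt
  rw [ENNReal.one_le_ofReal]
  linarith [exp_pos (1 + aa)]

/-- A maximizer can only be approached by profiles whose energy tends to (at least) one: otherwise
rescaling the approximating profiles would produce a value larger than the supremum. -/
lemma no_gap {ι : Type*} {l : Filter ι} [l.IsCountablyGenerated] {v : ι → ℝ → ℝ} {f : ℝ → ℝ}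
    (hv : ∀ i, IsW (v i)) (hf : Measurable f)
    (hlim : ∀ s, 0 < s → Tendsto (fun i => v i s) l (𝓝 (f s))) (hJ : J f = SS) {η : ℝ}
    (hη : 0 < η) : ∀ᶠ i in l, 1 - η < h (v i) := by
  by_contra hcon
  rw [not_eventually] at hcon
  obtain ⟨ns, hns, hle⟩ := exists_seq_forall_of_frequently hcon
  set θ := min η (1 / 2) with hθ
  have hθ0 : 0 < θ := lt_min hη (by norm_num)
  have hθ1 : θ ≤ 1 / 2 := min_le_right _ _
  have hθη : θ ≤ η := min_le_left _ _
  set c := (√(1 - θ))⁻¹ with hc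
  have hsq : 0 < √(1 - θ) := sqrt_pos.2 (by linarith)
  have hc0 : 0 < c := by positivity
  have hc2 : c ^ 2 = (1 - θ)⁻¹ := by rw [hc, inv_pow, sq_sqrt (by linarith)]
  have hc1 : 1 < c ^ 2 := by rw [hc2, one_lt_inv₀ (by linarith)]; linarith
  have hle' : J (fun s => c * f s) ≤ SS := by
    refine J_le_of_tendsto (w := fun n s => c * v (ns n) s)
      (fun n => ((hv (ns n)).smul c).1.continuous.measurable)
      (fun s hs => ((hlim s hs).comp hns).const_mul c) (Eventually.of_forall fun n => ?_)
    refine le_SS ((hv (ns n)).smul c) ?_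
    rw [h_smul, hc2, inv_mul_le_one₀ (by linarith)]
    have := hle n
    rw [not_lt] at this
    linarith
  have hlt : J f < J (fun s => c * f s) := by
    unfold J
    refine lintegral_strict_mono_of_ae_le_of_frequently_ae_lt (by fun_prop)
      (by have := hJ.trans_lt SS_lt_top; exact this.ne) (Eventually.of_forall fun s => ?_) ?_
    · refine ENNReal.ofReal_le_ofReal (exp_le_exp.2 ?_)
      rw [mul_pow]
      nlinarith [sq_nonneg (f s)]
    · have hfr : ∃ᶠ s in ae (volume.restrict (Ioi (0:ℝ))), f s ≠ 0 := by
        intro hz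
        have := J_zero (f := f) (hz.mono fun s hs => not_not.1 hs)
        exact absurd (hJ.symm.trans this) one_lt_SS.ne'
      refine hfr.mono fun s hs => ?_
      refine ((ENNReal.ofReal_lt_ofReal_iff (exp_pos _)).2 (exp_lt_exp.2 ?_)).ne
      have : 0 < f s ^ 2 := by positivity
      rw [mul_pow]
      nlinarith
  exact absurd hle' (not_le.2 (hJ ▸ hlt))

/-- Helly-type compactness: the increments of `w / m` are controlled by those of `sig`. -/
lemma exists_subseq {w : ℕ → ℝ → ℝ} (hw : ∀ n, IsW (w n)) (hh : ∀ n, h (w n) ≤ 1) :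
    ∃ (φ : ℕ → ℕ) (f : ℝ → ℝ), StrictMono φ ∧
      ∀ s, Tendsto (fun n => w (φ n) s) atTop (𝓝 (f s)) := by
  have hb : ∀ n s, 0 < s → |zz (w n) s| ≤ √(sig s) := fun n s hs =>
    abs_le_sqrt ((hw n).sq_le (hh n) hs)
  let K : Set (ℚ → ℝ) := Set.pi univ fun q => Icc (-√(sig q)) (√(sig q))
  have hK : IsCompact K := isCompact_univ_pi fun _ => isCompact_Icc
  have hmem : ∀ n, (fun q : ℚ => if (0:ℝ) < q then zz (w n) q else 0) ∈ K := fun n q _ => by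
    beta_reduce
    split_ifs with h0
    · exact abs_le.1 (hb n q h0)
    · exact ⟨neg_nonpos.2 (sqrt_nonneg _), sqrt_nonneg _⟩
  obtain ⟨g, -, φ, hφ, hg⟩ := hK.tendsto_subseq hmem
  rw [tendsto_pi_nhds] at hg
  have hc : ∀ s, ∃ y, Tendsto (fun n => w (φ n) s) atTop (𝓝 y) := fun s => by
    rcases le_or_gt s 0 with hs | hs
    · exact ⟨0, by simp only [(hw _).zero hs]; exact tendsto_const_nhds⟩
    suffices hcz : CauchySeq fun n => zz (w (φ n)) s by
      obtain ⟨y, hy⟩ := cauchySeq_tendsto_of_complete hcz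
      refine ⟨y * m s, (hy.mul_const (m s)).congr fun n => ?_⟩
      unfold zz
      exact div_mul_cancel₀ _ (m_pos hs).ne'
    rw [Metric.cauchySeq_iff']
    intro ε hε
    have hcs := (hasDerivAt_sig hs).continuousAt
    have h1 : ∀ᶠ t in 𝓝 s, sig t < sig s + (ε / 4) ^ 2 :=
      hcs.eventually_lt_const (by have : 0 < (ε / 4) ^ 2 := by positivity
                                  linarith)
    obtain ⟨u, hu, hus⟩ := exists_Ico_subset_of_mem_nhds h1 ⟨s + 1, by linarith⟩
    obtain ⟨q, hq1, hq2⟩ := exists_rat_btwn hu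
    have hq0 : (0:ℝ) < q := hs.trans hq1
    have hd : ∀ n, |zz (w n) q - zz (w n) s| ≤ ε / 4 := fun n => by
      refine abs_le_of_sq_le_sq ?_ (by positivity)
      have e1 := (hw n).zz_incr hs hq1.le
      have e2 : sig q < sig s + (ε / 4) ^ 2 := hus ⟨hq1.le, hq2⟩
      have e3 := (hw n).en_le q
      have e4 := (hw n).en_nonneg hs.le
      have e5 := (hw n).en_mono hq1.le
      have e6 := sig_mono hs.le hq1.le
      have e7 := hh n
      nlinarith
    have hgq := (hg q).cauchySeq
    simp only [Function.comp_def, hq0, if_true] at hgq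
    rw [Metric.cauchySeq_iff'] at hgq
    obtain ⟨N, hN⟩ := hgq (ε / 4) (by positivity)
    refine ⟨N, fun n hn => ?_⟩
    have e1 := hN n hn
    rw [Real.dist_eq] at e1 ⊢
    have e2 := abs_le.1 (hd (φ n))
    have e3 := abs_le.1 (hd (φ N))
    have e4 := abs_lt.1 e1
    rw [abs_lt]
    constructor <;> linarith
  choose f hf using hc
  exact ⟨φ, f, hφ, hf⟩

/-- The one-dimensional problem has a maximizer in the closure of the admissible class. -/
lemma exists_max : ∃ (w : ℕ → ℝ → ℝ) (f : ℝ → ℝ), (∀ n, IsW (w n)) ∧ (∀ n, h (w n) ≤ 1) ∧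
    (∀ s, Tendsto (fun n => w n s) atTop (𝓝 (f s))) ∧
    Tendsto (fun n => J (w n)) atTop (𝓝 SS) ∧ J f = SS := by
  have hz : IsW fun _ => (0:ℝ) := ⟨contDiff_const, ⟨1, one_pos, fun _ _ => rfl⟩, 0, fun _ _ => rfl⟩
  have hz0 : h (fun _ => (0:ℝ)) ≤ 1 := by simp [h]
  have hne : {t | ∃ w, IsW w ∧ h w ≤ 1 ∧ t = J w}.Nonempty := ⟨_, _, hz, hz0, rfl⟩
  have hsup : SS = sSup {t | ∃ w, IsW w ∧ h w ≤ 1 ∧ t = J w} := by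
    refine le_antisymm ?_ ?_
    · refine iSup_le fun w => iSup_le fun hw => iSup_le fun hh => le_sSup ⟨w, hw, hh, rfl⟩
    · refine sSup_le ?_
      rintro _ ⟨w, hw, hh, rfl⟩
      exact le_SS hw hh
  obtain ⟨u, -, hu, hmem⟩ := exists_seq_tendsto_sSup hne (OrderTop.bddAbove _)
  rw [← hsup] at hu
  choose w hw hh hJ using hmem
  obtain ⟨φ, f, hφ, hf⟩ := exists_subseq hw hh
  have hJl : Tendsto (fun n => J (w (φ n))) atTop (𝓝 SS) := by
    have := hu.comp hφ.tendsto_atTop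
    exact this.congr fun n => hJ (φ n)
  refine ⟨fun n => w (φ n), f, fun n => hw _, fun n => hh _, hf, hJl, ?_⟩
  by_cases hc : ∃ s1, 0 < s1 ∧ f s1 ≠ 0
  · obtain ⟨s1, hs1, h1⟩ := hc
    exact tendsto_nhds_unique
      (nonconcentration (fun n => hw (φ n)) (fun n => hh _) (fun s _ => hf s) hs1 h1) hJl
  · push Not at hc
    have := concentration (fun n => hw (φ n)) (fun n => hh _)
      (fun s hs => by have := hf s; rwa [hc s hs] at this) hJl
    exact absurd this (not_le.2 level_lt)

/-! ### From profiles to the disc -/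

lemma integral_exp_eq {u : E2 → ℝ} (hu : Measurable u) :
    ∫ x in B2, exp (4 * π * u x ^ 2) =
      (∫⁻ x in B2, ENNReal.ofReal (exp (4 * π * u x ^ 2))).toReal :=
  integral_eq_lintegral_of_nonneg_ae (Eventually.of_forall fun _ => (exp_pos _).le)
    (by fun_prop)

lemma pi_SS_ne_top : ENNReal.ofReal π * SS ≠ ⊤ :=
  ENNReal.mul_ne_top ENNReal.ofReal_ne_top SS_lt_top.ne

end HMT

/-- The supremum `T₀ = sup{∫_B e^{4πu²} : u ∈ C_c^∞(B), H(u) ≤ 1}` is finite (it is a real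
least upper bound) and is attained in the completion of `C_c^∞(B)` under the Hardy norm:
there are a measurable `u₀` and a sequence `(u_k) ⊆ C_c^∞(B)` with `H(u_k) ≤ 1`,
`H(u_k) → 1`, `H(u_j − u_k) → 0` as `j, k → ∞`, and `u_k → u₀` a.e. in `B`, such that
`∫_B e^{4π u₀²} = T₀`. -/
theorem hardy_moser_trudinger_sup_attained :
    ∃ T₀ : ℝ,
      IsLUB {t : ℝ | ∃ u : E2 → ℝ, IsTest u ∧ H u ≤ 1 ∧
        t = ∫ x in B2, Real.exp (4 * π * (u x) ^ 2)} T₀ ∧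
      ∃ (u₀ : E2 → ℝ) (uk : ℕ → E2 → ℝ),
        Measurable u₀ ∧
        (∀ k, IsTest (uk k)) ∧
        (∀ k, H (uk k) ≤ 1) ∧
        Tendsto (fun k => H (uk k)) atTop (nhds 1) ∧
        Tendsto (fun p : ℕ × ℕ => H (uk p.1 - uk p.2)) atTop (nhds 0) ∧
        (∀ᵐ x ∂(volume.restrict B2), Tendsto (fun k => uk k x) atTop (nhds (u₀ x))) ∧
        (∫ x in B2, Real.exp (4 * π * (u₀ x) ^ 2)) = T₀ := by
  obtain ⟨w, f, hw, hh, hlim, hJl, hJ⟩ := HMT.exists_max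
  have hwm : ∀ n, Measurable (w n) := fun n => (hw n).1.continuous.measurable
  have hfm : Measurable f := measurable_of_tendsto_metrizable hwm (tendsto_pi_nhds.2 hlim)
  have hum : Measurable fun x : E2 => f (-2 * Real.log ‖x‖) / √(4 * π) := by fun_prop
  refine ⟨(ENNReal.ofReal π * HMT.SS).toReal, ⟨?_, ?_⟩,
    fun x => f (-2 * Real.log ‖x‖) / √(4 * π), fun k => HMT.rad (w k), hum,
    fun k => HMT.rad_isTest (hw k), fun k => (HMT.H_rad (hw k)).trans_le (hh k), ?_, ?_, ?_, ?_⟩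
  · rintro _ ⟨u, hu, hH, rfl⟩
    rw [HMT.integral_exp_eq hu.1.continuous.measurable]
    exact ENNReal.toReal_mono HMT.pi_SS_ne_top (HMT.symm_E2 hu hH)
  · intro b hb
    have hl : Tendsto (fun n => (ENNReal.ofReal π * HMT.J (w n)).toReal) atTop
        (nhds (ENNReal.ofReal π * HMT.SS).toReal) :=
      (ENNReal.tendsto_toReal HMT.pi_SS_ne_top).comp
        (ENNReal.Tendsto.const_mul hJl (Or.inr ENNReal.ofReal_ne_top))
    refine le_of_tendsto' hl fun n => hb ⟨HMT.rad (w n), HMT.rad_isTest (hw n),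
      (HMT.H_rad (hw n)).trans_le (hh n), ?_⟩
    rw [HMT.integral_exp_eq (HMT.rad_isTest (hw n)).1.continuous.measurable,
      HMT.lintegral_exp_rad (hwm n) fun x hx => HMT.rad_of_ne hx]
  · simp only [HMT.H_rad (hw _)]
    refine tendsto_order.2 ⟨fun a ha => ?_, fun a ha =>
      Eventually.of_forall fun n => (hh n).trans_lt ha⟩
    have := HMT.no_gap hw hfm (fun s _ => hlim s) hJ (η := 1 - a) (by linarith)
    filter_upwards [this] with n hn
    linarith
  · have hd : ∀ p : ℕ × ℕ, H (HMT.rad (w p.1) - HMT.rad (w p.2)) =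
        HMT.h (fun s => w p.1 s - w p.2 s) := fun p => by
      rw [HMT.rad_sub (hw _) (hw _), HMT.H_rad ((hw _).sub (hw _))]
    simp only [hd]
    rw [← prod_atTop_atTop_eq]
    refine tendsto_order.2 ⟨fun a ha => Eventually.of_forall fun p =>
      ha.trans_le ((hw _).sub (hw _)).h_nonneg, fun a ha => ?_⟩
    -- The midpoints `(w j + w k) / 2` also converge to `f`, so their energy tends to one.
    have := HMT.no_gap (l := (atTop : Filter ℕ) ×ˢ (atTop : Filter ℕ))
      (v := fun p s => 1 / 2 * (w p.1 s + w p.2 s))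
      (fun p => ((hw p.1).add (hw p.2)).smul (1 / 2)) hfm
      (fun s _ => by
        have h1 : Tendsto (fun p : ℕ × ℕ => w p.1 s) (atTop ×ˢ atTop) (nhds (f s)) :=
          (hlim s).comp tendsto_fst
        have h2 : Tendsto (fun p : ℕ × ℕ => w p.2 s) (atTop ×ˢ atTop) (nhds (f s)) :=
          (hlim s).comp tendsto_snd
        have := (h1.add h2).const_mul (1 / 2)
        rwa [show 1 / 2 * (f s + f s) = f s by ring] at this) hJ (η := a / 4) (by linarith)
    filter_upwards [this] with p hp
    rw [HMT.h_smul] at hp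
    have := HMT.parallelogram (hw p.1) (hw p.2)
    linarith [hh p.1, hh p.2]
  · filter_upwards [HMT.ae_ne_zero] with x hx
    simp only [HMT.rad_of_ne hx]
    exact (hlim _).div_const _
  · rw [HMT.integral_exp_eq hum, HMT.lintegral_exp_rad hfm fun x _ => rfl, hJ]
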